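/- There exists a constant C > 0 such that for every x₀ ∈ {u = v} and every R ≥ 1, with κ := R⁴ and (u_κ, v_κ) the corresponding rescaled solution, ∫_{B₁} κ u_κ² v_κ² dx ≤ C κ^{−1/4}. -/

import Mathlib

open MeasureTheory Metric Set
open scoped RealInnerProductSpace ENNReal

/-- Euclidean space `ℝⁿ`. -/
abbrev Euc (n : ℕ) := EuclideanSpace ℝ (Fin n)

/-- The Laplacian `Δu` of a function `u : ℝⁿ → ℝ`. -/
noncomputable def lap {n : ℕ} (u : Euc n → ℝ) (x : Euc n) : ℝ :=
  ∑ i : Fin n,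
    fderiv ℝ (fun y => fderiv ℝ u y (EuclideanSpace.single i 1)) x (EuclideanSpace.single i 1)

/-- The divergence `div Y = Σ_α ∂Y^α/∂x_α` of a vector field `Y`. -/
noncomputable def vdiv {n : ℕ} (Y : Euc n → Euc n) (x : Euc n) : ℝ :=
  ∑ i : Fin n, fderiv ℝ Y x (EuclideanSpace.single i 1) i

/-- `DY(p,q)(x) = Σ_{α,β} (∂Y^α/∂x_β)(x) p_α q_β`. -/
noncomputable def DYbil {n : ℕ} (Y : Euc n → Euc n) (p q x : Euc n) : ℝ :=
  ∑ α : Fin n, ∑ β : Fin n,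
    fderiv ℝ Y x (EuclideanSpace.single β 1) α * p α * q β

/-- The rescaled function `u_κ(x) = R⁻¹ u(x₀ + R x)` (with `κ = R⁴`). -/
noncomputable def resc {n : ℕ} (u : Euc n → ℝ) (x₀ : Euc n) (R : ℝ) (x : Euc n) : ℝ :=
  R⁻¹ * u (x₀ + R • x)

/-! Write `H(r; x)` for the Gaussian average of `u² + v²` at scale `r` about `x` (`HH`), `D` for the
scaled Gaussian energy (`DD`), `N = D / H` for the Gaussian Almgren frequency (`NN`), and `A(r; x)`
for the Gaussian average of `u - v`. All averages make sense because interior estimates show that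
every derivative of `u` and `v` has polynomial growth (`tmp_of_eq`).

The heart of the proof is that `H(1; z)` is bounded uniformly over `z ∈ {u = v}` (`Sol.H_one_le`).
Granting this, `min u v` is bounded on `ℝⁿ`: near `{u = v}` by the bound on `H`, and away from it by
a Keller–Osserman estimate (`Sol.KO_min`). Hence `u² v² ≤ C u v (u + v) = C Δ(u + v)`, and Gaussian
integration by parts bounds the average of `Δ(u + v)` at scale `R` about a point of `{u = v}` by
`C R⁻² √H(R) ≤ C R⁻²·R`, which is the claimed `κ^{-1/4} = R⁻¹`.

The bound on `H` rests on three facts.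

* Monotonicity. `N` is nondecreasing in `r`, and linear growth forces `N ≤ 1`; so
  `H(R) ≤ e (R/r)² H(r)` for `r ≤ R` (`Sol.N_deriv`, `Sol.N_le_one`, `Sol.H_upper`), and `H`
  satisfies a Harnack inequality in the centre (`Sol.H_translate`).
* Improvement at zeros of `A`. Let `κ = r² H(r; x)` be large. The dichotomy `dicho2`, which combines
  the lower bound on `N` at points of `{u = v}` with the Keller–Osserman estimate, and a truncation
  argument (`trunc`) show that the interaction terms are `O(κ^{-a}) H` (`cubic_decay`). The Gaussian
  Poincaré inequality and its second-order version (`gap`), applied to `u - v`, then show that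
  `N ≥ 1 - C κ^{-a}` if `A(r; x) = 0`, and that the averaged gradient of `u - v` is nondegenerate
  (`almost_linear`). Consequently `A(2r; ·)` vanishes at some `x'` near `x`, with
  `H(2r; x') ≥ 4 (1 - O(κ^{-a/2})) H(r; x)` (`step`). Since `κ` grows geometrically along the
  iteration, the errors are summable, and linear growth at infinity yields `H(r; x) ≤ C r²` with `C`
  independent of `r` and `x` (`zbound`).
* Zeros of `A` near `{u = v}`. Let `u z = v z` and let `ρ` be the scale with `ρ² H(ρ; z) = 1`. At
  all larger scales `r = 2ʲ Λ ρ` both `u` and `v` attain values comparable with `√H(r; z)` in the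
  ball of radius `r` about `z`, because otherwise the smaller one would decay too fast going down in
  scale (`descent`, `upward`). About the points where `v` (resp. `u`) is large, `A` at a fixed
  fraction of the scale is negative (resp. positive) (`sign_lemma`), so `A` vanishes somewhere in
  between. For a suitable fixed `j` the estimate `zbound` applies and gives
  `ρ⁻² = H(ρ; z) ≤ C ρ²`; thus `ρ` is bounded below and `H(1; z)` above.
-/

open Filter Topology

/-! ### Gaussian averages and functions of polynomial growth -/

/-- The partial derivative `∂ᵢ f`. -/
noncomputable def pd {n : ℕ} (i : Fin n) (f : Euc n → ℝ) (x : Euc n) : ℝ :=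
  fderiv ℝ f x (EuclideanSpace.single i 1)

/-- Polynomial growth. -/
def PB {n : ℕ} (f : Euc n → ℝ) : Prop :=
  ∃ C : ℝ, ∃ k : ℕ, ∀ x, |f x| ≤ C * (1 + ‖x‖) ^ k

/-- Polynomial growth of all partial derivatives of order at most `k`. -/
def Bk {n : ℕ} : ℕ → (Euc n → ℝ) → Prop
  | 0, f => PB f
  | k + 1, f => PB f ∧ ∀ i, Bk k (pd i f)

/-- Smooth functions all of whose partial derivatives have polynomial growth. -/
def Tmp {n : ℕ} (f : Euc n → ℝ) : Prop :=
  ContDiff ℝ (⊤ : ℕ∞) f ∧ ∀ k, Bk k f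

/-- The (unnormalised) Gaussian weight. -/
noncomputable def gw {n : ℕ} (y : Euc n) : ℝ := Real.exp (-(1 / 2) * ‖y‖ ^ 2)

/-- The normalising constant of the Gaussian weight. -/
noncomputable def gZ (n : ℕ) : ℝ := ∫ y : Euc n, gw y

/-- The standard Gaussian probability measure on `ℝⁿ`. -/
noncomputable def gam (n : ℕ) : Measure (Euc n) :=
  volume.withDensity (fun y => ENNReal.ofReal (gw y / gZ n))

/-- The Gaussian average of `F` at scale `r` about `x`. -/
noncomputable def avg {n : ℕ} (F : Euc n → ℝ) (r : ℝ) (x : Euc n) : ℝ :=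
  ∫ y, F (x + r • y) ∂(gam n)

variable {n : ℕ}

lemma lap_eq (f : Euc n → ℝ) (x : Euc n) : lap f x = ∑ i, pd i (pd i f) x := rfl

lemma PB.mono {f g : Euc n → ℝ} (hg : PB g) (h : ∀ x, |f x| ≤ |g x|) : PB f := by
  obtain ⟨C, k, hC⟩ := hg
  exact ⟨C, k, fun x => (h x).trans (hC x)⟩

/-- The constant can be taken positive and the degree at least `k₀`. -/
lemma PB.bound {f : Euc n → ℝ} (hf : PB f) (k₀ : ℕ) :
    ∃ C : ℝ, 0 < C ∧ ∃ k : ℕ, k₀ ≤ k ∧ ∀ x, |f x| ≤ C * (1 + ‖x‖) ^ k := by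
  obtain ⟨C, k, h⟩ := hf
  refine ⟨|C| + 1, by positivity, k + k₀, by omega, fun x => (h x).trans ?_⟩
  have h1 : (1:ℝ) ≤ 1 + ‖x‖ := by linarith [norm_nonneg x]
  have h2 : (1 + ‖x‖) ^ k ≤ (1 + ‖x‖) ^ (k + k₀) := pow_le_pow_right₀ h1 (by omega)
  have h3 : C ≤ |C| + 1 := by linarith [le_abs_self C]
  exact mul_le_mul h3 h2 (by positivity) (by positivity)

lemma PB.add {f g : Euc n → ℝ} (hf : PB f) (hg : PB g) : PB (fun x => f x + g x) := by
  obtain ⟨C, hC0, k, -, hC⟩ := hf.bound 0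
  obtain ⟨D, hD0, l, hl, hD⟩ := hg.bound k
  refine ⟨C + D, l, fun x => (abs_add_le _ _).trans ?_⟩
  have h1 : (1:ℝ) ≤ 1 + ‖x‖ := by linarith [norm_nonneg x]
  have h2 : (1 + ‖x‖) ^ k ≤ (1 + ‖x‖) ^ l := pow_le_pow_right₀ h1 hl
  have := mul_le_mul_of_nonneg_left h2 hC0.le
  linarith [hC x, hD x]

lemma PB.mul {f g : Euc n → ℝ} (hf : PB f) (hg : PB g) : PB (fun x => f x * g x) := by
  obtain ⟨C, hC0, k, -, hC⟩ := hf.bound 0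
  obtain ⟨D, hD0, l, -, hD⟩ := hg.bound 0
  refine ⟨C * D, k + l, fun x => ?_⟩
  rw [abs_mul, pow_add]
  calc |f x| * |g x| ≤ (C * (1 + ‖x‖) ^ k) * (D * (1 + ‖x‖) ^ l) :=
        mul_le_mul (hC x) (hD x) (abs_nonneg _) (by positivity)
    _ = _ := by ring

lemma PB.const (c : ℝ) : PB (fun _ : Euc n => c) := ⟨|c|, 0, fun x => by simp⟩

lemma PB.neg {f : Euc n → ℝ} (hf : PB f) : PB (fun x => - f x) := by
  obtain ⟨C, k, h⟩ := hf
  exact ⟨C, k, fun x => by simpa using h x⟩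

lemma PB.sub {f g : Euc n → ℝ} (hf : PB f) (hg : PB g) : PB (fun x => f x - g x) := by
  simpa [sub_eq_add_neg] using hf.add hg.neg

lemma PB.pow {f : Euc n → ℝ} (hf : PB f) (k : ℕ) : PB (fun x => f x ^ k) := by
  induction k with
  | zero => simpa using PB.const 1
  | succ k ih => simpa [pow_succ] using ih.mul hf

lemma PB.abs {f : Euc n → ℝ} (hf : PB f) : PB (fun x => |f x|) := by
  obtain ⟨C, k, h⟩ := hf
  exact ⟨C, k, fun x => by simpa using h x⟩

lemma PB.sum {ι : Type*} (s : Finset ι) {f : ι → Euc n → ℝ} (hf : ∀ i, PB (f i)) :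
    PB (fun x => ∑ i ∈ s, f i x) := by
  classical
  induction s using Finset.induction_on with
  | empty => simpa using PB.const 0
  | insert a s ha ih => simpa [Finset.sum_insert ha] using (hf a).add ih

lemma PB.norm : PB (fun x : Euc n => ‖x‖) := ⟨1, 1, fun x => by
  rw [abs_of_nonneg (norm_nonneg x)]; linarith⟩

lemma abs_coord_le (x : Euc n) (i : Fin n) : |x i| ≤ ‖x‖ := by
  simpa using PiLp.norm_apply_le x i

lemma PB.coord (i : Fin n) : PB (fun x : Euc n => x i) :=
  PB.norm.mono fun x => by simpa using abs_coord_le x i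

lemma PB.affine {f : Euc n → ℝ} (hf : PB f) (a : Euc n) (r : ℝ) : PB (fun y => f (a + r • y)) := by
  obtain ⟨C, hC0, k, -, hC⟩ := hf.bound 0
  refine ⟨C * (1 + ‖a‖ + |r|) ^ k, k, fun y => (hC _).trans ?_⟩
  rw [mul_assoc, ← mul_pow]
  have : 1 + ‖a + r • y‖ ≤ (1 + ‖a‖ + |r|) * (1 + ‖y‖) := by
    have h := norm_add_le a (r • y)
    rw [norm_smul, Real.norm_eq_abs] at h
    nlinarith [norm_nonneg a, norm_nonneg y, abs_nonneg r]
  gcongr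

lemma coord_eq_inner (x : Euc n) (i : Fin n) : x i = inner ℝ (EuclideanSpace.single i (1:ℝ)) x := by
  simp [EuclideanSpace.inner_single_left]

lemma euc_sum (w : Euc n) : w = ∑ i, w i • EuclideanSpace.single i (1:ℝ) := by
  ext j
  simp [Finset.sum_apply, Pi.single_apply]

lemma fderiv_eq_sum (f : Euc n → ℝ) (x w : Euc n) : fderiv ℝ f x w = ∑ i, w i * pd i f x := by
  conv_lhs => rw [euc_sum w]
  simp [map_sum, pd]

lemma normsq_eq (x : Euc n) : ‖x‖ ^ 2 = ∑ i, x i ^ 2 := by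
  rw [EuclideanSpace.norm_sq_eq]; simp

lemma gw_pos (y : Euc n) : 0 < gw y := Real.exp_pos _

lemma gw_cont : Continuous (gw : Euc n → ℝ) := by unfold gw; fun_prop

lemma integrable_gauss {b : ℝ} (hb : 0 < b) :
    Integrable (fun y : Euc n => Real.exp (-b * ‖y‖ ^ 2)) := by
  have := (GaussianFourier.integrable_cexp_neg_mul_sq_norm_add (b := (b:ℂ)) (by simpa using hb) 0
    (0 : Euc n)).norm
  refine this.congr (Eventually.of_forall fun y => ?_)
  simp [Complex.norm_exp]
  left; norm_cast

/-- Any power of `1 + t` is absorbed by half of the Gaussian exponent. -/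
lemma pow_le_exp_quarter (k : ℕ) {t : ℝ} (ht : 0 ≤ t) :
    (1 + t) ^ k ≤ (k.factorial * Real.exp 2) * Real.exp ((1/4) * t ^ 2) := by
  have h := Real.pow_div_factorial_le_exp (1 + t) (by positivity) k
  rw [div_le_iff₀ (by positivity)] at h
  have h2 : Real.exp (1 + t) ≤ Real.exp 2 * Real.exp ((1/4) * t^2) := by
    rw [← Real.exp_add]
    apply Real.exp_le_exp.2
    nlinarith [sq_nonneg (t/2 - 1)]
  calc _ ≤ _ := h
    _ ≤ _ := by
      have := mul_le_mul_of_nonneg_right h2 (by positivity : (0:ℝ) ≤ k.factorial)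
      linarith

/-- Polynomial growth makes a function integrable against the Gaussian weight. -/
lemma PB.integrable_gw {f : Euc n → ℝ} (hf : PB f) (hm : AEStronglyMeasurable f volume) :
    Integrable (fun y => f y * gw y) := by
  obtain ⟨C, hC0, k, -, hC⟩ := hf.bound 0
  have hi := (integrable_gauss (n := n) (b := 1/4) (by norm_num)).const_mul
    (C * (k.factorial * Real.exp 2))
  refine hi.mono' (hm.mul gw_cont.aestronglyMeasurable) (Eventually.of_forall fun y => ?_)
  rw [norm_mul, Real.norm_eq_abs, Real.norm_eq_abs, abs_of_pos (gw_pos y)]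
  have h1 := pow_le_exp_quarter k (norm_nonneg y)
  have h3 : gw y = Real.exp (-(1/4) * ‖y‖^2) * Real.exp (-(1/4) * ‖y‖^2) := by
    rw [gw, ← Real.exp_add]; ring_nf
  have h4 : Real.exp ((1/4) * ‖y‖^2) * Real.exp (-(1/4) * ‖y‖^2) = 1 := by
    rw [← Real.exp_add]; ring_nf; simp
  set p := Real.exp (-(1/4) * ‖y‖^2)
  have hp : 0 < p := Real.exp_pos _
  calc |f y| * gw y ≤ (C * ((k.factorial * Real.exp 2) * Real.exp ((1/4) * ‖y‖ ^ 2))) * gw y := by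
        refine mul_le_mul_of_nonneg_right ((hC y).trans ?_) (gw_pos y).le
        exact mul_le_mul_of_nonneg_left h1 hC0.le
    _ = C * (k.factorial * Real.exp 2) * p * (Real.exp ((1/4) * ‖y‖^2) * p) := by rw [h3]; ring
    _ = _ := by rw [h4, mul_one]

lemma gw_int : Integrable (gw : Euc n → ℝ) := integrable_gauss (by norm_num)

lemma gZ_pos : 0 < gZ n := by
  unfold gZ
  rw [integral_pos_iff_support_of_nonneg (fun y => (gw_pos y).le) gw_int]
  have : Function.support (gw : Euc n → ℝ) = univ := by
    ext y; simp [(gw_pos y).ne']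
  rw [this]
  exact isOpen_univ.measure_pos _ univ_nonempty

lemma integral_gam (f : Euc n → ℝ) : ∫ y, f y ∂(gam n) = (gZ n)⁻¹ * ∫ y, f y * gw y := by
  rw [gam, integral_withDensity_eq_integral_toReal_smul (by have := gw_cont (n := n); fun_prop)
    (by simp), ← integral_const_mul]
  congr 1; ext y
  rw [ENNReal.toReal_ofReal (div_nonneg (gw_pos y).le gZ_pos.le), smul_eq_mul]
  ring

lemma gam_ac : gam n ≪ (volume : Measure (Euc n)) := withDensity_absolutelyContinuous _ _

lemma integrable_gam_iff {f : Euc n → ℝ} :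
    Integrable f (gam n) ↔ Integrable (fun y => f y * gw y) := by
  rw [gam, integrable_withDensity_iff_integrable_smul' (by have := gw_cont (n := n); fun_prop)
    (by simp)]
  have : (fun y : Euc n => (ENNReal.ofReal (gw y / gZ n)).toReal • f y) =
      fun y => (gZ n)⁻¹ * (f y * gw y) := by
    ext y
    rw [ENNReal.toReal_ofReal (div_nonneg (gw_pos y).le gZ_pos.le), smul_eq_mul]
    ring
  rw [this, integrable_const_mul_iff]
  exact (isUnit_iff_ne_zero.2 (inv_ne_zero gZ_pos.ne'))

instance gam_prob : IsProbabilityMeasure (gam n) := by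
  constructor
  rw [gam, withDensity_apply _ MeasurableSet.univ, Measure.restrict_univ,
    ← ofReal_integral_eq_lintegral_ofReal (gw_int.div_const _)
      (Eventually.of_forall fun y => div_nonneg (gw_pos y).le gZ_pos.le), integral_div]
  rw [show ∫ y : Euc n, gw y = gZ n from rfl, div_self gZ_pos.ne']; simp

lemma PB.integrable {f : Euc n → ℝ} (hf : PB f) (hm : Continuous f) : Integrable f (gam n) :=
  integrable_gam_iff.2 (hf.integrable_gw hm.aestronglyMeasurable)

lemma PB.integrable' {f : Euc n → ℝ} (hf : PB f) (hm : Measurable f) : Integrable f (gam n) :=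
  integrable_gam_iff.2 (hf.integrable_gw hm.aestronglyMeasurable)

lemma pd_measurable (i : Fin n) (f : Euc n → ℝ) : Measurable (pd i f) :=
  measurable_fderiv_apply_const ℝ f _

lemma hasFDerivAt_gw (x : Euc n) :
    HasFDerivAt gw (gw x • (-(innerSL ℝ x : Euc n →L[ℝ] ℝ))) x := by
  have h : HasFDerivAt (fun y : Euc n => -(1/2) * ‖y‖ ^ 2)
      ((-(1/2):ℝ) • (2 • (innerSL ℝ x : Euc n →L[ℝ] ℝ))) x := by
    simpa using ((hasStrictFDerivAt_norm_sq x).hasFDerivAt.const_mul (-(1/2) : ℝ))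
  have := h.exp
  refine HasFDerivAt.congr_fderiv this ?_
  ext w
  simp [gw]

/-- Gaussian integration by parts. -/
lemma ibp {G : Euc n → ℝ} (hd : Differentiable ℝ G) (h0 : PB G) (i : Fin n) (h1 : PB (pd i G)) :
    ∫ y, y i * G y ∂(gam n) = ∫ y, pd i G y ∂(gam n) := by
  rw [integral_gam, integral_gam]
  congr 1
  have hgd : ∀ x, fderiv ℝ (gw : Euc n → ℝ) x (EuclideanSpace.single i 1) = - (x i * gw x) := by
    intro x
    rw [(hasFDerivAt_gw x).fderiv]
    simp [EuclideanSpace.inner_single_right]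
    ring
  have key := integral_mul_fderiv_eq_neg_fderiv_mul_of_integrable (μ := (volume : Measure (Euc n)))
    (f := G) (g := gw) (v := EuclideanSpace.single i (1:ℝ))
    (h1.integrable_gw (pd_measurable i G).aestronglyMeasurable)
    (by
      have := ((PB.coord i).mul h0).neg.integrable_gw
        (((by fun_prop : Continuous fun x : Euc n => x i).mul
          hd.continuous).neg.aestronglyMeasurable)
      refine this.congr (Eventually.of_forall fun x => ?_)
      simp only [hgd]; ring)
    (h0.integrable_gw hd.continuous.aestronglyMeasurable)
    (fun x _ => hd x) (fun x _ => (hasFDerivAt_gw x).differentiableAt)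
  have e1 : ∀ x, G x * fderiv ℝ (gw : Euc n → ℝ) x (EuclideanSpace.single i 1) =
      -(x i * G x * gw x) := fun x => by rw [hgd]; ring
  simp only [e1, integral_neg] at key
  exact neg_injective key

/-! ### Partial derivatives, tempered functions, and the heat equation for Gaussian averages -/

lemma pd_add {f g : Euc n → ℝ} (hf : Differentiable ℝ f) (hg : Differentiable ℝ g) (i : Fin n) :
    pd i (fun x => f x + g x) = fun x => pd i f x + pd i g x := by
  ext x; simp only [pd]; rw [fderiv_fun_add (hf x) (hg x)]; rfl

lemma pd_sub {f g : Euc n → ℝ} (hf : Differentiable ℝ f) (hg : Differentiable ℝ g) (i : Fin n) :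
    pd i (fun x => f x - g x) = fun x => pd i f x - pd i g x := by
  ext x; simp only [pd]; rw [fderiv_fun_sub (hf x) (hg x)]; rfl

lemma pd_mul {f g : Euc n → ℝ} (hf : Differentiable ℝ f) (hg : Differentiable ℝ g) (i : Fin n) :
    pd i (fun x => f x * g x) = fun x => pd i f x * g x + f x * pd i g x := by
  ext x; simp only [pd]; rw [fderiv_fun_mul (hf x) (hg x)]; simp; ring

lemma pd_const (c : ℝ) (i : Fin n) : pd i (fun _ : Euc n => c) = fun _ => 0 := by
  ext x; simp [pd]

lemma pd_sum {ι : Type*} (s : Finset ι) {f : ι → Euc n → ℝ} (hf : ∀ j, Differentiable ℝ (f j))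
    (i : Fin n) : pd i (fun x => ∑ j ∈ s, f j x) = fun x => ∑ j ∈ s, pd i (f j) x := by
  ext x; simp only [pd]; rw [fderiv_fun_sum fun j _ => hf j x]; simp

lemma pd_comp {φ φ' : ℝ → ℝ} (hφ : ∀ t, HasDerivAt φ (φ' t) t) {f : Euc n → ℝ}
    (hf : Differentiable ℝ f) (i : Fin n) :
    pd i (fun x => φ (f x)) = fun x => φ' (f x) * pd i f x := by
  ext x; simp only [pd]
  have h := ((hφ (f x)).comp_hasFDerivAt x (hf x).hasFDerivAt).fderiv
  rw [show (fun x => φ (f x)) = φ ∘ f from rfl, h]; simp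

lemma pd_coord (i j : Fin n) : pd i (fun x : Euc n => x j) = fun _ => if i = j then 1 else 0 := by
  ext x
  have : HasFDerivAt (fun x : Euc n => x j) (EuclideanSpace.proj j : Euc n →L[ℝ] ℝ) x :=
    (EuclideanSpace.proj j : Euc n →L[ℝ] ℝ).hasFDerivAt
  simp only [pd]; rw [this.fderiv]; simp [eq_comm]

lemma pd_affine {f : Euc n → ℝ} (hf : Differentiable ℝ f) (a : Euc n) (r : ℝ) (i : Fin n) :
    pd i (fun y => f (a + r • y)) = fun y => r * pd i f (a + r • y) := by
  ext x
  have h1 : HasFDerivAt (fun y : Euc n => a + r • y) (r • ContinuousLinearMap.id ℝ (Euc n)) x :=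
    ((hasFDerivAt_id x).const_smul r).const_add a
  simp only [pd]
  have := ((hf (a + r • x)).hasFDerivAt.comp x h1).fderiv
  rw [show (fun y => f (a + r • y)) = f ∘ fun y => a + r • y from rfl, this]; simp

lemma smooth_pd {f : Euc n → ℝ} (hf : ContDiff ℝ (⊤ : ℕ∞) f) (i : Fin n) :
    ContDiff ℝ (⊤ : ℕ∞) (pd i f) :=
  (hf.fderiv_right (m := (⊤ : ℕ∞)) (by simp)).clm_apply contDiff_const

lemma smooth_diff {f : Euc n → ℝ} (hf : ContDiff ℝ (⊤ : ℕ∞) f) : Differentiable ℝ f :=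
  hf.differentiable (by simp)

lemma pd_comm {f : Euc n → ℝ} (hf : ContDiff ℝ (⊤ : ℕ∞) f) (i j : Fin n) :
    pd i (pd j f) = pd j (pd i f) := by
  ext x
  have hs : IsSymmSndFDerivAt ℝ f x := by
    refine (hf.contDiffAt (x := x)).isSymmSndFDerivAt ?_
    simp only [minSmoothness_of_isRCLikeNormedField]
    exact WithTop.coe_le_coe.2 (le_top : (2 : ℕ∞) ≤ ⊤)
  have hd : DifferentiableAt ℝ (fderiv ℝ f) x :=
    ((hf.fderiv_right (m := (⊤ : ℕ∞)) (by simp)).differentiable (by simp)) x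
  have key : ∀ a b : Fin n, pd a (pd b f) x =
      fderiv ℝ (fderiv ℝ f) x (EuclideanSpace.single a 1) (EuclideanSpace.single b 1) := by
    intro a b
    change fderiv ℝ (fun y => fderiv ℝ f y (EuclideanSpace.single b 1)) x _ = _
    rw [fderiv_clm_apply hd (by fun_prop)]; simp
  rw [key, key]; exact hs _ _

lemma Bk.pb {k : ℕ} {f : Euc n → ℝ} (h : Bk k f) : PB f := by
  cases k with
  | zero => exact h
  | succ k => exact h.1

lemma Bk.pred {k : ℕ} {f : Euc n → ℝ} (h : Bk (k + 1) f) : Bk k f := by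
  induction k generalizing f with
  | zero => exact h.1
  | succ k ih => exact ⟨h.1, fun i => ih (h.2 i)⟩

lemma Bk.add {k : ℕ} {f g : Euc n → ℝ} (sf : ContDiff ℝ (⊤ : ℕ∞) f) (sg : ContDiff ℝ (⊤ : ℕ∞) g)
    (hf : Bk k f) (hg : Bk k g) : Bk k (fun x => f x + g x) := by
  induction k generalizing f g with
  | zero => exact PB.add hf hg
  | succ k ih =>
    refine ⟨hf.1.add hg.1, fun i => ?_⟩
    rw [pd_add (smooth_diff sf) (smooth_diff sg)]
    exact ih (smooth_pd sf i) (smooth_pd sg i) (hf.2 i) (hg.2 i)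

lemma Bk.mul {k : ℕ} {f g : Euc n → ℝ} (sf : ContDiff ℝ (⊤ : ℕ∞) f) (sg : ContDiff ℝ (⊤ : ℕ∞) g)
    (hf : Bk k f) (hg : Bk k g) : Bk k (fun x => f x * g x) := by
  induction k generalizing f g with
  | zero => exact PB.mul hf hg
  | succ k ih =>
    refine ⟨hf.1.mul hg.1, fun i => ?_⟩
    rw [pd_mul (smooth_diff sf) (smooth_diff sg)]
    exact Bk.add ((smooth_pd sf i).mul sg) (sf.mul (smooth_pd sg i))
      (ih (smooth_pd sf i) sg (hf.2 i) hg.pred) (ih sf (smooth_pd sg i) hf.pred (hg.2 i))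

namespace Tmp

variable {f g : Euc n → ℝ}

lemma pb (h : Tmp f) : PB f := h.2 0
lemma diff (h : Tmp f) : Differentiable ℝ f := smooth_diff h.1
lemma cont (h : Tmp f) : Continuous f := h.1.continuous
lemma add (hf : Tmp f) (hg : Tmp g) : Tmp (fun x => f x + g x) :=
  ⟨hf.1.add hg.1, fun k => Bk.add hf.1 hg.1 (hf.2 k) (hg.2 k)⟩
lemma mul (hf : Tmp f) (hg : Tmp g) : Tmp (fun x => f x * g x) :=
  ⟨hf.1.mul hg.1, fun k => Bk.mul hf.1 hg.1 (hf.2 k) (hg.2 k)⟩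
lemma const (c : ℝ) : Tmp (fun _ : Euc n => c) := by
  refine ⟨contDiff_const, fun k => ?_⟩
  induction k generalizing c with
  | zero => exact PB.const c
  | succ k ih => exact ⟨PB.const c, fun i => by rw [pd_const]; exact ih 0⟩
lemma pd (hf : Tmp f) (i : Fin n) : Tmp (pd i f) :=
  ⟨smooth_pd hf.1 i, fun k => (hf.2 (k + 1)).2 i⟩
lemma neg (hf : Tmp f) : Tmp (fun x => - f x) := by
  simpa using (const (-1)).mul hf
lemma sub (hf : Tmp f) (hg : Tmp g) : Tmp (fun x => f x - g x) := by
  simpa [sub_eq_add_neg] using hf.add hg.neg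
lemma pow (hf : Tmp f) (k : ℕ) : Tmp (fun x => f x ^ k) := by
  induction k with
  | zero => simpa using const 1
  | succ k ih => simpa [pow_succ] using ih.mul hf
lemma sum {ι : Type*} (s : Finset ι) {f : ι → Euc n → ℝ} (hf : ∀ i, Tmp (f i)) :
    Tmp (fun x => ∑ i ∈ s, f i x) := by
  classical
  induction s using Finset.induction_on with
  | empty => simpa using const 0
  | insert a s ha ih => simpa [Finset.sum_insert ha] using (hf a).add ih
lemma coord (i : Fin n) : Tmp (fun x : Euc n => x i) := by
  refine ⟨by fun_prop, fun k => ?_⟩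
  cases k with
  | zero => exact PB.coord i
  | succ k => exact ⟨PB.coord i, fun j => by rw [pd_coord]; exact (const _).2 k⟩
lemma affine (hf : Tmp f) (a : Euc n) (r : ℝ) : Tmp (fun y => f (a + r • y)) := by
  refine ⟨hf.1.comp (by fun_prop), fun k => ?_⟩
  induction k generalizing f with
  | zero => exact hf.pb.affine a r
  | succ k ih =>
    refine ⟨hf.pb.affine a r, fun i => ?_⟩
    rw [pd_affine hf.diff]
    exact Bk.mul contDiff_const ((hf.pd i).1.comp (by fun_prop)) ((const r).2 k) (ih (hf.pd i))
lemma lap (hf : Tmp f) : Tmp (lap f) := by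
  have : Tmp (fun x => ∑ i, _root_.pd i (_root_.pd i f) x) := sum _ fun i => (hf.pd i).pd i
  exact this
lemma int (hf : Tmp f) : Integrable f (gam n) := hf.pb.integrable hf.cont
lemma normsq : Tmp (fun x : Euc n => ‖x‖ ^ 2) := by
  have : Tmp (fun x : Euc n => ∑ i, x i ^ 2) := sum _ fun i => (coord i).pow 2
  simpa [normsq_eq] using this

end Tmp

lemma norm_fderiv_le (f : Euc n → ℝ) (x : Euc n) : ‖fderiv ℝ f x‖ ≤ ∑ i, |pd i f x| := by
  refine ContinuousLinearMap.opNorm_le_bound _ (by positivity) fun w => ?_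
  rw [fderiv_eq_sum, Finset.sum_mul]
  refine (Finset.abs_sum_le_sum_abs _ _).trans (Finset.sum_le_sum fun i _ => ?_)
  rw [abs_mul, mul_comm]
  exact mul_le_mul_of_nonneg_left (abs_coord_le w i) (abs_nonneg _)

/-- Gaussian averages are Fréchet differentiable jointly in the centre and the scale. -/
lemma avg_fderiv {F : Euc n → ℝ} (hF : ContDiff ℝ 1 F) (h0 : PB F) (h1 : ∀ i, PB (pd i F))
    (p₀ : Euc n × ℝ) :
    ∃ A : Euc n × ℝ →L[ℝ] ℝ, HasFDerivAt (fun p : Euc n × ℝ => avg F p.2 p.1) A p₀ ∧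
      ∀ X' q', A (X', q') = ∑ i, X' i * avg (pd i F) p₀.2 p₀.1 +
        q' * ∑ i, ∫ y, y i * pd i F (p₀.1 + p₀.2 • y) ∂(gam n) := by
  set Ly : Euc n → (Euc n × ℝ →L[ℝ] Euc n) := fun y =>
    ContinuousLinearMap.fst ℝ (Euc n) ℝ + (ContinuousLinearMap.snd ℝ (Euc n) ℝ).smulRight y with hLy
  have hLa : ∀ y p, Ly y p = p.1 + p.2 • y := fun y p => by simp [hLy]
  have hdF : Differentiable ℝ F := hF.differentiable (by simp)
  have hcF : Continuous (fderiv ℝ F) := hF.continuous_fderiv (by simp)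
  have hpdc : ∀ i, Continuous (pd i F) := fun i => hcF.clm_apply continuous_const
  have hLn : ∀ y, ‖Ly y‖ ≤ 1 + ‖y‖ := by
    intro y
    refine ContinuousLinearMap.opNorm_le_bound _ (by positivity) fun p => ?_
    rw [hLa]
    refine (norm_add_le _ _).trans ?_
    rw [norm_smul]
    have h1 := norm_fst_le p
    have h2 := norm_snd_le p
    nlinarith [norm_nonneg y, norm_nonneg p]
  have hLc : Continuous Ly := by
    rw [hLy]
    exact continuous_const.add
      ((ContinuousLinearMap.smulRightL ℝ (Euc n × ℝ) (Euc n)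
        (ContinuousLinearMap.snd ℝ (Euc n) ℝ)).continuous)
  have hS : PB (fun x => ∑ i, |pd i F x|) := PB.sum _ fun i => (h1 i).abs
  obtain ⟨C, hC0, k, -, hC⟩ := hS.bound 0
  set M := 1 + (‖p₀‖ + 1)
  have hM : 0 < M := by positivity
  have hbd : ∀ y, ∀ p ∈ ball p₀ 1, ‖(fderiv ℝ F (Ly y p)).comp (Ly y)‖ ≤
      C * M ^ k * (1 + ‖y‖) ^ (k + 1) := by
    intro y p hp
    have hp' : ‖p‖ ≤ ‖p₀‖ + 1 := by
      have := norm_sub_norm_le p p₀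
      rw [mem_ball, dist_eq_norm] at hp; linarith
    have hz : 1 + ‖Ly y p‖ ≤ M * (1 + ‖y‖) := by
      have := (Ly y).le_opNorm p
      have h3 := hLn y
      have : ‖Ly y p‖ ≤ (1 + ‖y‖) * (‖p₀‖ + 1) :=
        this.trans (mul_le_mul h3 hp' (norm_nonneg _) (by positivity))
      simp only [M]; nlinarith [norm_nonneg y]
    have h4 : ‖fderiv ℝ F (Ly y p)‖ ≤ C * (M * (1 + ‖y‖)) ^ k := by
      refine (norm_fderiv_le _ _).trans ((le_abs_self _).trans ((hC _).trans ?_))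
      gcongr
    refine (ContinuousLinearMap.opNorm_comp_le _ _).trans ?_
    calc _ ≤ (C * (M * (1 + ‖y‖)) ^ k) * (1 + ‖y‖) :=
          mul_le_mul h4 (hLn y) (norm_nonneg _) (by positivity)
      _ = _ := by rw [mul_pow, pow_succ]; ring
  have hbi : Integrable (fun y : Euc n => C * M ^ k * (1 + ‖y‖) ^ (k + 1)) (gam n) := by
    refine PB.integrable ((PB.const _).mul (((PB.const 1).add PB.norm).pow _)) (by fun_prop)
  have hcont : ∀ p : Euc n × ℝ, Continuous fun y => F (p.1 + p.2 • y) := fun p => by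
    have := hF.continuous; fun_prop
  have hF'c : Continuous fun y => (fderiv ℝ F (Ly y p₀)).comp (Ly y) := by
    have : Continuous fun y => Ly y p₀ := by simp only [hLa]; fun_prop
    exact (hcF.comp this).clm_comp hLc
  have key := hasFDerivAt_integral_of_dominated_of_fderiv_le (μ := gam n) (𝕜 := ℝ)
    (F := fun (p : Euc n × ℝ) y => F (p.1 + p.2 • y))
    (F' := fun p y => (fderiv ℝ F (Ly y p)).comp (Ly y)) (x₀ := p₀)
    (s := ball p₀ 1) (bound := fun y => C * M ^ k * (1 + ‖y‖) ^ (k + 1))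
    (ball_mem_nhds _ one_pos) (Eventually.of_forall fun p => (hcont p).aestronglyMeasurable)
    ((h0.affine _ _).integrable (hcont p₀)) hF'c.aestronglyMeasurable
    (Eventually.of_forall hbd) hbi
    (Eventually.of_forall fun y p _ => by
      have := (hdF (Ly y p)).hasFDerivAt.comp p (Ly y).hasFDerivAt
      simpa [Function.comp_def, hLa] using this)
  have hfac' : Integrable (fun y => (fderiv ℝ F (Ly y p₀)).comp (Ly y)) (gam n) :=
    hbi.mono' hF'c.aestronglyMeasurable
      (Eventually.of_forall fun y => hbd y p₀ (mem_ball_self one_pos))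
  refine ⟨_, key, fun X' q' => ?_⟩
  rw [ContinuousLinearMap.integral_apply hfac']
  have e : ∀ y, (fderiv ℝ F (Ly y p₀)).comp (Ly y) (X', q') =
      ∑ i, (X' i * pd i F (p₀.1 + p₀.2 • y) + q' * (y i * pd i F (p₀.1 + p₀.2 • y))) := by
    intro y
    rw [ContinuousLinearMap.comp_apply, hLa, fderiv_eq_sum, hLa]
    refine Finset.sum_congr rfl fun i _ => ?_
    simp; ring
  have hi1 : ∀ i, Integrable (fun y => pd i F (p₀.1 + p₀.2 • y)) (gam n) := fun i =>
    ((h1 i).affine _ _).integrable (by have := hpdc i; fun_prop)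
  have hi2 : ∀ i, Integrable (fun y : Euc n => y i * pd i F (p₀.1 + p₀.2 • y)) (gam n) := fun i =>
    ((PB.coord i).mul ((h1 i).affine _ _)).integrable (by have := hpdc i; fun_prop)
  simp only [e]
  have hi3 : ∀ i, Integrable (fun y : Euc n => X' i * pd i F (p₀.1 + p₀.2 • y) +
      q' * (y i * pd i F (p₀.1 + p₀.2 • y))) (gam n) :=
    fun i => ((hi1 i).const_mul _).add ((hi2 i).const_mul _)
  rw [integral_finsetSum _ fun i _ => hi3 i, Finset.mul_sum, ← Finset.sum_add_distrib]
  refine Finset.sum_congr rfl fun i _ => ?_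
  rw [integral_add ((hi1 i).const_mul _) ((hi2 i).const_mul _), integral_const_mul,
    integral_const_mul]
  rfl

/-- Differentiation of Gaussian averages along a curve of centres and scales. -/
lemma avg_curve {F : Euc n → ℝ} (hF : ContDiff ℝ 1 F) (h0 : PB F) (h1 : ∀ i, PB (pd i F))
    {X : ℝ → Euc n} {q : ℝ → ℝ} {X' : Euc n} {q' t : ℝ} (hX : HasDerivAt X X' t)
    (hq : HasDerivAt q q' t) :
    HasDerivAt (fun t => avg F (q t) (X t))
      (∑ i, X' i * avg (pd i F) (q t) (X t) +
        q' * ∑ i, ∫ y, y i * pd i F (X t + q t • y) ∂(gam n)) t := by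
  obtain ⟨A, hA, hA'⟩ := avg_fderiv hF h0 h1 (X t, q t)
  have h2 := HasFDerivAt.comp_hasDerivAt (f := fun t => (X t, q t)) t hA (hX.prodMk hq)
  exact h2.congr_deriv (hA' X' q')

lemma avg_differentiable {F : Euc n → ℝ} (hF : Tmp F) :
    Differentiable ℝ (fun p : Euc n × ℝ => avg F p.2 p.1) := fun p =>
  (avg_fderiv (hF.1.of_le (by exact_mod_cast le_top)) hF.pb
    (fun i => (hF.pd i).pb) p).choose_spec.1.differentiableAt

lemma avg_ibp {F : Euc n → ℝ} (hF : Tmp F) (i : Fin n) (r : ℝ) (x : Euc n) :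
    ∫ y, y i * F (x + r • y) ∂(gam n) = r * avg (pd i F) r x := by
  have h := hF.affine x r
  rw [ibp h.diff h.pb i (h.pd i).pb, pd_affine hF.diff, integral_const_mul]; rfl

lemma avg_sum {ι : Type*} (s : Finset ι) {f : ι → Euc n → ℝ} (hf : ∀ i, Tmp (f i)) (r : ℝ)
    (x : Euc n) : avg (fun x => ∑ i ∈ s, f i x) r x = ∑ i ∈ s, avg (f i) r x :=
  integral_finsetSum _ fun i _ => ((hf i).affine x r).int

/-- The heat equation for Gaussian averages, along a curve. -/
lemma avg_curve' {F : Euc n → ℝ} (hF : Tmp F)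
    {X : ℝ → Euc n} {q : ℝ → ℝ} {X' : Euc n} {q' t : ℝ} (hX : HasDerivAt X X' t)
    (hq : HasDerivAt q q' t) :
    HasDerivAt (fun t => avg F (q t) (X t))
      (∑ i, X' i * avg (pd i F) (q t) (X t) + q' * q t * avg (lap F) (q t) (X t)) t := by
  refine (avg_curve (hF.1.of_le (by exact_mod_cast le_top)) hF.pb (fun i => (hF.pd i).pb) hX hq).congr_deriv ?_
  congr 1
  rw [mul_assoc]; congr 1
  have : avg (lap F) (q t) (X t) = ∑ i, avg (pd i (pd i F)) (q t) (X t) :=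
    avg_sum _ (fun i => (hF.pd i).pd i) _ _
  rw [this, Finset.mul_sum]
  exact Finset.sum_congr rfl fun i _ => avg_ibp (hF.pd i) i _ _

/-- The heat equation for Gaussian averages, in the scale variable. -/
lemma avg_deriv {F : Euc n → ℝ} (hF : Tmp F) (r : ℝ) (x : Euc n) :
    HasDerivAt (fun r => avg F r x) (r * avg (lap F) r x) r := by
  simpa using avg_curve' hF (hasDerivAt_const r x) (hasDerivAt_id r)

lemma avg_dir {F : Euc n → ℝ} (hF : Tmp F) (r : ℝ) (x e : Euc n) (t : ℝ) :
    HasDerivAt (fun t => avg F r (x + t • e)) (∑ i, e i * avg (pd i F) r (x + t • e)) t := by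
  have : HasDerivAt (fun t : ℝ => x + t • e) e t := by
    simpa using ((hasDerivAt_id t).smul_const e).const_add x
  simpa using avg_curve' hF this (hasDerivAt_const t r)

lemma avg_zero (F : Euc n → ℝ) (x : Euc n) : avg F 0 x = F x := by simp [avg]

lemma avg_mono {F G : Euc n → ℝ} (hF : Tmp F) (hG : Tmp G) (h : ∀ x, F x ≤ G x) (r : ℝ)
    (x : Euc n) : avg F r x ≤ avg G r x :=
  integral_mono (hF.affine x r).int (hG.affine x r).int fun _ => h _

lemma avg_nonneg {F : Euc n → ℝ} (h : ∀ x, 0 ≤ F x) (r : ℝ) (x : Euc n) : 0 ≤ avg F r x :=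
  integral_nonneg fun _ => h _

/-- Both derivatives are moved onto the Gaussian, so that averages of `Δ F` need no bound on the
derivatives of `F`. -/
lemma avg_lap {F : Euc n → ℝ} (hF : Tmp F) (r : ℝ) (x : Euc n) :
    r ^ 2 * avg (lap F) r x = ∫ y, F (x + r • y) * (‖y‖ ^ 2 - n) ∂(gam n) := by
  have h := hF.affine x r
  have e : ∀ y : Euc n, F (x + r • y) * (‖y‖ ^ 2 - n) =
      ∑ i, (y i * (y i * F (x + r • y)) - F (x + r • y)) := by
    intro y; rw [normsq_eq, Finset.sum_sub_distrib]; simp [Finset.mul_sum, mul_sub]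
    congr 1
    · exact Finset.sum_congr rfl fun i _ => by ring
    · ring
  simp only [e]
  rw [integral_finsetSum _ fun i _ => ((((Tmp.coord i).mul ((Tmp.coord i).mul h)).sub h).int),
    show lap F = fun x => ∑ i, pd i (pd i F) x from rfl, avg_sum _ (fun i => (hF.pd i).pd i),
    Finset.mul_sum]
  refine Finset.sum_congr rfl fun i _ => ?_
  have h2 := (Tmp.coord i).mul h
  rw [integral_sub ((Tmp.coord i).mul h2).int h.int, ibp h2.diff h2.pb i (h2.pd i).pb,
    pd_mul (Tmp.coord i).diff h.diff, pd_coord, pd_affine hF.diff]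
  have h3 := (Tmp.coord i).mul ((Tmp.const r).mul ((hF.pd i).affine x r))
  simp only [if_true, one_mul]
  rw [integral_add h.int h3.int, add_sub_cancel_left]
  have := avg_ibp (hF.pd i) i r x
  rw [sq, mul_assoc, ← this, ← integral_const_mul]
  congr 1; ext y; ring

/-! ### Interior estimates: all derivatives of a solution have polynomial growth -/

/-- The compactly supported kernels `(1 - |y|²)₊ᵐ`. -/
noncomputable def bump (m : ℕ) (y : Euc n) : ℝ := max (1 - ‖y‖ ^ 2) 0 ^ m

lemma hasDerivAt_maxpow (m : ℕ) (t : ℝ) :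
    HasDerivAt (fun t : ℝ => max t 0 ^ (m + 2)) ((m + 2) * max t 0 ^ (m + 1)) t := by
  rcases lt_trichotomy t 0 with h | h | h
  · have e : (fun t : ℝ => max t 0 ^ (m + 2)) =ᶠ[𝓝 t] fun _ => 0 := by
      filter_upwards [Iio_mem_nhds h] with s hs
      rw [max_eq_right (le_of_lt hs)]; simp
    rw [max_eq_right h.le]
    simpa using (hasDerivAt_const t (0:ℝ)).congr_of_eventuallyEq e
  · subst h
    rw [hasDerivAt_iff_isLittleO_nhds_zero]
    simp only [zero_add, max_self, ne_eq, Nat.add_eq_zero_iff, OfNat.ofNat_ne_zero, and_false,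
      not_false_eq_true, zero_pow, sub_zero, one_ne_zero, mul_zero, smul_zero]
    have h1 : (fun h : ℝ => max h 0 ^ (m + 2)) =O[𝓝 0] fun h => h ^ (m + 2) := by
      refine Asymptotics.IsBigO.of_bound 1 (Eventually.of_forall fun h => ?_)
      rw [one_mul, norm_pow, norm_pow]
      gcongr
      rw [Real.norm_eq_abs, Real.norm_eq_abs, abs_of_nonneg (le_max_right _ _)]
      exact max_le (le_abs_self h) (abs_nonneg h)
    exact h1.trans_isLittleO (by simpa using Asymptotics.isLittleO_pow_id (𝕜 := ℝ) (n := m + 2) (by omega))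
  · have e : (fun t : ℝ => max t 0 ^ (m + 2)) =ᶠ[𝓝 t] fun t => t ^ (m + 2) := by
      filter_upwards [Ioi_mem_nhds h] with s hs
      rw [max_eq_left (le_of_lt hs)]
    rw [max_eq_left h.le]
    have := (hasDerivAt_pow (m + 2) t).congr_of_eventuallyEq e
    simpa using this

lemma bump_cont (m : ℕ) : Continuous (bump m : Euc n → ℝ) := by unfold bump; fun_prop

lemma bump_nonneg (m : ℕ) (y : Euc n) : 0 ≤ bump m y := pow_nonneg (le_max_right _ _) _

lemma bump_le_one (m : ℕ) (y : Euc n) : bump m y ≤ 1 :=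
  pow_le_one₀ (le_max_right _ _) (max_le (by nlinarith [norm_nonneg y]) zero_le_one)

lemma bump_zero {m : ℕ} {y : Euc n} (hy : y ∉ closedBall (0 : Euc n) 1) : bump (m + 1) y = 0 := by
  have : 1 < ‖y‖ := by simpa using hy
  unfold bump
  rw [max_eq_right (by nlinarith)]; simp

lemma bump_supp (m : ℕ) : HasCompactSupport (bump (m + 1) : Euc n → ℝ) :=
  HasCompactSupport.intro (isCompact_closedBall 0 1) fun _ hy => bump_zero hy

lemma bump_diff (m : ℕ) : Differentiable ℝ (bump (m + 2) : Euc n → ℝ) := by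
  intro x
  have h1 : DifferentiableAt ℝ (fun y : Euc n => 1 - ‖y‖ ^ 2) x := by
    have := Tmp.normsq.diff x; fun_prop
  exact ((hasDerivAt_maxpow m _).differentiableAt).comp x h1

lemma pd_bump (m : ℕ) (i : Fin n) :
    pd i (bump (m + 2) : Euc n → ℝ) = fun y => - (2 * (m + 2) * (y i * bump (m + 1) y)) := by
  have hd : Differentiable ℝ (fun y : Euc n => 1 - ‖y‖ ^ 2) := ((Tmp.const 1).sub Tmp.normsq).diff
  have := pd_comp (hasDerivAt_maxpow m) hd i
  unfold bump
  rw [this]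
  ext y
  have : pd i (fun y : Euc n => 1 - ‖y‖ ^ 2) y = - (2 * y i) := by
    rw [pd_sub (Tmp.const 1).diff Tmp.normsq.diff, pd_const]
    simp only [pd, zero_sub]
    rw [(hasStrictFDerivAt_norm_sq y).hasFDerivAt.fderiv]
    simp [EuclideanSpace.inner_single_right]
  rw [this]; ring

lemma bump_int {F : Euc n → ℝ} (hF : Continuous F) (m : ℕ) :
    Integrable (fun y => F y * bump (m + 1) y) :=
  (hF.mul (bump_cont _)).integrable_of_hasCompactSupport (bump_supp m).mul_left

lemma bump_ibp {F : Euc n → ℝ} (hF : ContDiff ℝ (⊤ : ℕ∞) F) (m : ℕ) (i : Fin n) :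
    ∫ y, pd i F y * bump (m + 2) y = 2 * (m + 2) * ∫ y, F y * y i * bump (m + 1) y := by
  have hd := smooth_diff hF
  have e : ∀ y : Euc n, F y * fderiv ℝ (bump (m + 2) : Euc n → ℝ) y (EuclideanSpace.single i 1) =
      - ((2 * (m + 2)) * (F y * y i * bump (m + 1) y)) := by
    intro y
    have := congrFun (pd_bump (n := n) m i) y
    rw [pd] at this; rw [this]; ring
  have hi : Integrable (fun y : Euc n => F y * y i * bump (m + 1) y) :=
    bump_int (F := fun y => F y * y i) (by have := hF.continuous; fun_prop) m
  have key := integral_mul_fderiv_eq_neg_fderiv_mul_of_integrable (μ := (volume : Measure (Euc n)))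
    (f := F) (g := bump (m + 2)) (v := EuclideanSpace.single i (1:ℝ))
    (bump_int (smooth_pd hF i).continuous _)
    (by simp only [e]; exact (hi.const_mul _).neg)
    (bump_int hF.continuous _) (fun x _ => hd x) (fun x _ => bump_diff m x)
  simp only [e, integral_neg, integral_const_mul] at key
  exact (neg_injective key).symm

lemma smooth_affine {F : Euc n → ℝ} (hF : ContDiff ℝ (⊤ : ℕ∞) F) (x : Euc n) (s : ℝ) :
    ContDiff ℝ (⊤ : ℕ∞) (fun y => F (x + s • y)) := hF.comp (by fun_prop)

lemma smooth_lap {F : Euc n → ℝ} (hF : ContDiff ℝ (⊤ : ℕ∞) F) : ContDiff ℝ (⊤ : ℕ∞) (lap F) := by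
  have : ContDiff ℝ (⊤ : ℕ∞) (fun x => ∑ i, pd i (pd i F) x) :=
    ContDiff.sum fun i _ => smooth_pd (smooth_pd hF i) i
  exact this

/-- Derivative in the scale of a compactly supported average. -/
lemma bump_deriv {F : Euc n → ℝ} (hF : ContDiff ℝ (⊤ : ℕ∞) F) (x : Euc n) (s : ℝ) :
    HasDerivAt (fun s => ∫ y, F (x + s • y) * bump 3 y)
      (s / 8 * ∫ y, lap F (x + s • y) * bump 4 y) s := by
  have hd := smooth_diff hF
  have hFc := hF.continuous
  set G : ℝ → Euc n → ℝ := fun s y => ∑ i, y i * pd i F (x + s • y) * bump 3 y with hG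
  have hpc : ∀ i, Continuous (pd i F) := fun i => (smooth_pd hF i).continuous
  have hGc : Continuous (fun p : ℝ × Euc n => G p.1 p.2) := by
    simp only [hG]
    have := bump_cont (n := n) 3
    refine continuous_finsetSum _ fun i _ => ?_
    have := hpc i
    fun_prop
  obtain ⟨M, hM⟩ := ((isCompact_closedBall s 1).prod (isCompact_closedBall (0:Euc n) 1)).exists_bound_of_continuousOn
    hGc.continuousOn
  have hset : ∀ s : ℝ, ∫ y, F (x + s • y) * bump 3 y = ∫ y in closedBall (0:Euc n) 1, F (x + s • y) * bump 3 y := by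
    intro s
    rw [setIntegral_eq_integral_of_forall_compl_eq_zero]
    intro y hy; rw [bump_zero hy, mul_zero]
  have key := hasDerivAt_integral_of_dominated_loc_of_deriv_le
    (μ := volume.restrict (closedBall (0:Euc n) 1)) (F := fun s y => F (x + s • y) * bump 3 y)
    (F' := G) (x₀ := s) (s := closedBall s 1) (bound := fun _ => M)
    (closedBall_mem_nhds s one_pos)
    (Eventually.of_forall fun s => (by have := bump_cont (n := n) 3; fun_prop :
      Continuous fun y => F (x + s • y) * bump 3 y).aestronglyMeasurable)
    ((bump_int (smooth_affine hF x s).continuous 2).restrict)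
    (by have : Continuous (G s) := hGc.comp (by fun_prop : Continuous fun y => (s, y))
        exact this.aestronglyMeasurable)
    (by
      filter_upwards [ae_restrict_mem measurableSet_closedBall] with y hy
      intro t ht
      exact hM (t, y) ⟨ht, hy⟩)
    (integrableOn_const measure_closedBall_lt_top.ne)
    (Eventually.of_forall fun y t _ => by
      have h1 : HasDerivAt (fun t : ℝ => x + t • y) y t := by
        simpa using ((hasDerivAt_id t).smul_const y).const_add x
      have h2 := ((hd (x + t • y)).hasFDerivAt.comp_hasDerivAt t h1).mul_const (bump 3 y)
      refine h2.congr_deriv ?_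
      rw [fderiv_eq_sum, Finset.sum_mul])
  have k2 := key.2
  simp only [← hset] at k2
  refine k2.congr_deriv ?_
  rw [setIntegral_eq_integral_of_forall_compl_eq_zero (fun y hy => by simp [hG, bump_zero hy])]
  simp only [hG]
  have hi : ∀ i, Integrable (fun y : Euc n => y i * pd i F (x + s • y) * bump 3 y) := fun i =>
    bump_int (F := fun y => y i * pd i F (x + s • y)) (by have := hpc i; fun_prop) 2
  rw [integral_finsetSum _ fun i _ => hi i]
  have e : ∀ y : Euc n, lap F (x + s • y) * bump 4 y = ∑ i, pd i (pd i F) (x + s • y) * bump 4 y :=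
    fun y => by rw [lap_eq, Finset.sum_mul]
  simp only [e]
  rw [integral_finsetSum _ fun i _ => bump_int (smooth_affine (smooth_pd (smooth_pd hF i) i) x s).continuous 3,
    Finset.mul_sum]
  refine Finset.sum_congr rfl fun i _ => ?_
  have h3 := bump_ibp (smooth_affine (smooth_pd hF i) x s) 2 i
  rw [pd_affine (smooth_diff (smooth_pd hF i))] at h3
  simp only [mul_assoc, integral_const_mul] at h3
  have h4 : ∀ y : Euc n, y i * pd i F (x + s • y) * bump 3 y =
    pd i F (x + s • y) * (y i * bump (2 + 1) y) := fun y => by ring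
  simp only [h4]
  norm_num at h3 ⊢
  linarith

lemma bump_mass_pos (m : ℕ) : 0 < ∫ y : Euc n, bump (m + 1) y := by
  have hi : Integrable (bump (m + 1) : Euc n → ℝ) := by
    simpa using bump_int (F := fun _ : Euc n => (1:ℝ)) continuous_const m
  rw [integral_pos_iff_support_of_nonneg (fun y => bump_nonneg _ y) hi]
  refine (isOpen_ball.measure_pos volume ⟨0, mem_ball_self one_pos⟩).trans_le
    (measure_mono (s := ball (0:Euc n) 1) fun y hy => ?_)
  have : ‖y‖ < 1 := by simpa using hy
  simp only [Function.mem_support, bump]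
  rw [max_eq_left (by nlinarith [norm_nonneg y])]
  exact pow_ne_zero _ (by nlinarith [norm_nonneg y])

/-- Sub-mean value property with the kernel `bump 3`. -/
lemma submean {F : Euc n → ℝ} (hF : ContDiff ℝ (⊤ : ℕ∞) F) (hs : ∀ x, 0 ≤ lap F x) (x : Euc n)
    {s : ℝ} (h0 : 0 ≤ s) : F x * ∫ y : Euc n, bump 3 y ≤ ∫ y, F (x + s • y) * bump 3 y := by
  have hm : MonotoneOn (fun s : ℝ => ∫ y, F (x + s • y) * bump 3 y) (Ici 0) := by
    refine monotoneOn_of_deriv_nonneg (convex_Ici 0)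
      (fun s _ => (bump_deriv hF x s).continuousAt.continuousWithinAt)
      (fun s _ => (bump_deriv hF x s).differentiableAt.differentiableWithinAt) fun s hs' => ?_
    rw [(bump_deriv hF x s).deriv]
    rw [interior_Ici] at hs'
    exact mul_nonneg (by have : (0:ℝ) < s := hs'
                         positivity)
      (integral_nonneg fun y => mul_nonneg (hs _) (bump_nonneg _ _))
  have := hm (mem_Ici.2 le_rfl) (mem_Ici.2 h0) h0
  simpa [integral_const_mul] using this

lemma lap_pd {F : Euc n → ℝ} (hF : ContDiff ℝ (⊤ : ℕ∞) F) (i : Fin n) :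
    lap (pd i F) = pd i (lap F) := by
  have : lap F = fun x => ∑ j, pd j (pd j F) x := rfl
  rw [this, pd_sum _ fun j => smooth_diff (smooth_pd (smooth_pd hF j) j)]
  ext x
  rw [lap_eq]
  refine Finset.sum_congr rfl fun j _ => ?_
  rw [pd_comm hF j i, pd_comm (smooth_pd hF j) j i]

lemma bump_abs_le {F : Euc n → ℝ} (hF : Continuous F) (i : Fin n) (m : ℕ) {M : ℝ}
    (hM : ∀ y ∈ closedBall (0:Euc n) 1, |F y| ≤ M) :
    |∫ y, F y * y i * bump (m + 1) y| ≤ M * volume.real (closedBall (0:Euc n) 1) := by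
  rw [← setIntegral_eq_integral_of_forall_compl_eq_zero (s := closedBall (0:Euc n) 1)
    (fun y hy => by rw [bump_zero hy, mul_zero]), ← Real.norm_eq_abs]
  refine norm_setIntegral_le_of_norm_le_const measure_closedBall_lt_top fun y hy => ?_
  have hy1 : ‖y‖ ≤ 1 := by simpa using hy
  rw [norm_mul, norm_mul, Real.norm_eq_abs, Real.norm_eq_abs, Real.norm_eq_abs,
    abs_of_nonneg (bump_nonneg _ _)]
  have h1 := (abs_coord_le y i).trans hy1
  have h2 := bump_le_one (m + 1) y
  have h3 := hM y hy
  have h0 := abs_nonneg (F y)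
  calc |F y| * |y i| * bump (m + 1) y ≤ |F y| * 1 * 1 := by
        gcongr
        exact bump_nonneg _ _
    _ ≤ M := by linarith

/-- Interior gradient estimate. -/
lemma grad_est : ∃ C : ℝ, 0 < C ∧ ∀ (F : Euc n → ℝ), ContDiff ℝ (⊤ : ℕ∞) F → ∀ (x : Euc n) (M : ℝ),
    (∀ z ∈ closedBall x 1, |F z| ≤ M) → (∀ z ∈ closedBall x 1, |lap F z| ≤ M) →
    ∀ i, |pd i F x| ≤ C * M := by
  set V := volume.real (closedBall (0:Euc n) 1)
  set c := ∫ y : Euc n, bump 3 y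
  have hc : 0 < c := bump_mass_pos 2
  have hV : 0 ≤ V := measureReal_nonneg
  refine ⟨(7 * V + 1) / c, by positivity, fun F hF x M h0 h1 i => ?_⟩
  have hM0 : 0 ≤ M := (abs_nonneg _).trans (h0 x (mem_closedBall_self zero_le_one))
  have hmem : ∀ s ∈ Icc (0:ℝ) 1, ∀ y ∈ closedBall (0:Euc n) 1, x + s • y ∈ closedBall x 1 := by
    intro s hs y hy
    have hy1 : ‖y‖ ≤ 1 := by simpa using hy
    simp only [mem_closedBall, dist_eq_norm, add_sub_cancel_left, norm_smul, Real.norm_eq_abs,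
      abs_of_nonneg hs.1]
    nlinarith [hs.2, hs.1, norm_nonneg y]
  have hG := smooth_pd hF i
  have hd : ∀ s ∈ Icc (0:ℝ) 1, ‖s / 8 * ∫ y, lap (pd i F) (x + s • y) * bump 4 y‖ ≤ M * V := by
    intro s hs
    have h3 := bump_ibp (smooth_affine (smooth_lap hF) x s) 2 i
    rw [pd_affine (smooth_diff (smooth_lap hF))] at h3
    simp only [mul_assoc, integral_const_mul] at h3
    have h4 := bump_abs_le (smooth_affine (smooth_lap hF) x s).continuous i 2
      (fun y hy => h1 _ (hmem s hs y hy))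
    rw [lap_pd hF]
    simp only [mul_assoc] at h4
    norm_num at h3 h4
    rw [Real.norm_eq_abs]
    have : s / 8 * ∫ y, pd i (lap F) (x + s • y) * bump 4 y =
      ∫ y, lap F (x + s • y) * (y i * bump 3 y) := by linarith
    rw [this]; exact h4
  have hmv := (convex_Icc (0:ℝ) 1).norm_image_sub_le_of_norm_hasDerivWithin_le
    (fun s _ => (bump_deriv hG x s).hasDerivWithinAt) hd (left_mem_Icc.2 zero_le_one)
    (right_mem_Icc.2 zero_le_one)
  have hJ1 : |∫ y, pd i F (x + (1:ℝ) • y) * bump 3 y| ≤ 6 * (M * V) := by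
    have h3 := bump_ibp (smooth_affine hF x 1) 1 i
    rw [pd_affine (smooth_diff hF)] at h3
    have h4 := bump_abs_le (smooth_affine hF x 1).continuous i 1
      (fun y hy => h0 _ (hmem 1 (right_mem_Icc.2 zero_le_one) y hy))
    simp only [one_mul] at h3
    rw [h3, abs_mul]
    norm_num
    norm_num at h4
    linarith
  have hJ0 : ∫ y, pd i F (x + (0:ℝ) • y) * bump 3 y = pd i F x * c := by
    simp [integral_const_mul, c]
  rw [hJ0, Real.norm_eq_abs] at hmv
  simp only [sub_zero, norm_one, mul_one] at hmv
  have h5 : |pd i F x * c| ≤ 7 * (M * V) := by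
    have := abs_sub_abs_le_abs_sub (pd i F x * c) (∫ y, pd i F (x + (1:ℝ) • y) * bump 3 y)
    rw [abs_sub_comm] at this
    linarith
  rw [abs_mul, abs_of_pos hc] at h5
  rw [div_mul_eq_mul_div, le_div_iff₀ hc]
  nlinarith

/-- Polynomial growth of `F` and `Δ F` implies that of the first derivatives of `F`. -/
lemma PB_pd {F : Euc n → ℝ} (hF : ContDiff ℝ (⊤ : ℕ∞) F) (h0 : PB F) (h1 : PB (lap F))
    (i : Fin n) : PB (pd i F) := by
  obtain ⟨K, hK0, hK⟩ := grad_est (n := n)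
  obtain ⟨C, hC0, k, -, hC⟩ := h0.bound 0
  obtain ⟨D, hD0, l, hl, hD⟩ := h1.bound k
  refine ⟨K * (max C D * 2 ^ l), l, fun x => ?_⟩
  have hz : ∀ z ∈ closedBall x 1, 1 + ‖z‖ ≤ 2 * (1 + ‖x‖) := fun z hz => by
    have : ‖z - x‖ ≤ 1 := by simpa [dist_eq_norm] using hz
    have := norm_sub_norm_le z x
    linarith [norm_nonneg x]
  have h2 : ∀ z ∈ closedBall x 1, ∀ A, 0 ≤ A → A ≤ max C D → A * (1 + ‖z‖) ^ l ≤ max C D * 2 ^ l * (1 + ‖x‖) ^ l := by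
    intro z hz' A hA hA'
    rw [mul_assoc, ← mul_pow]
    have := hz z hz'
    gcongr
  have := hK F hF x (max C D * 2 ^ l * (1 + ‖x‖) ^ l) (fun z hz' => (hC z).trans ?_)
    (fun z hz' => (hD z).trans (h2 z hz' D hD0.le (le_max_right _ _))) i
  · linarith
  · refine le_trans ?_ (h2 z hz' C hC0.le (le_max_left _ _))
    exact mul_le_mul_of_nonneg_left (pow_le_pow_right₀ (by linarith [norm_nonneg z]) hl) hC0.le

lemma Bk_succ {k : ℕ} {F : Euc n → ℝ} (hF : ContDiff ℝ (⊤ : ℕ∞) F) (h0 : Bk k F)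
    (h1 : Bk k (lap F)) : Bk (k + 1) F := by
  induction k generalizing F with
  | zero => exact ⟨h0, fun i => PB_pd hF h0 h1 i⟩
  | succ k ih =>
    refine ⟨h0.1, fun i => ih (smooth_pd hF i) (h0.2 i) ?_⟩
    rw [lap_pd hF]; exact h1.2 i

/-- A bootstrap in the order of the derivatives: by the equations, `Δu` and `Δv` have as many
derivatives of polynomial growth as `u` and `v`, and `Bk_succ` gains one more. -/
lemma tmp_of_eq {u v : Euc n → ℝ} (hu : ContDiff ℝ (⊤ : ℕ∞) u) (hv : ContDiff ℝ (⊤ : ℕ∞) v)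
    (hequ : ∀ x, lap u x = u x * v x ^ 2) (heqv : ∀ x, lap v x = v x * u x ^ 2)
    (pu : PB u) (pv : PB v) : Tmp u ∧ Tmp v := by
  have : ∀ k, Bk k u ∧ Bk k v := by
    intro k
    induction k with
    | zero => exact ⟨pu, pv⟩
    | succ k ih =>
      have e1 : lap u = fun x => u x * (v x * v x) := by ext x; rw [hequ]; ring
      have e2 : lap v = fun x => v x * (u x * u x) := by ext x; rw [heqv]; ring
      refine ⟨Bk_succ hu ih.1 ?_, Bk_succ hv ih.2 ?_⟩
      · rw [e1]; exact Bk.mul hu (hv.mul hv) ih.1 (Bk.mul hv hv ih.2 ih.2)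
      · rw [e2]; exact Bk.mul hv (hu.mul hu) ih.2 (Bk.mul hu hu ih.1 ih.1)
  exact ⟨⟨hu, fun k => (this k).1⟩, ⟨hv, fun k => (this k).2⟩⟩

/-! ### Gaussian Poincaré inequalities -/

lemma avg_le_of_bound {f : Euc n → ℝ} {C : ℝ} {k : ℕ} (hC : 0 ≤ C)
    (h : ∀ z, |f z| ≤ C * (1 + ‖z‖) ^ k) {r : ℝ} (hr : |r| ≤ 1) (x : Euc n) :
    |avg f r x| ≤ (C * ∫ y : Euc n, (1 + ‖y‖) ^ k ∂(gam n)) * (1 + ‖x‖) ^ k := by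
  have hi : Integrable (fun y : Euc n => (1 + ‖y‖) ^ k) (gam n) :=
    (((PB.const 1).add PB.norm).pow k).integrable (by fun_prop)
  have : ∀ y, ‖f (x + r • y)‖ ≤ (C * (1 + ‖x‖) ^ k) * (1 + ‖y‖) ^ k := by
    intro y
    refine (h _).trans ?_
    rw [mul_assoc, ← mul_pow]
    have : 1 + ‖x + r • y‖ ≤ (1 + ‖x‖) * (1 + ‖y‖) := by
      have h2 := norm_add_le x (r • y)
      rw [norm_smul, Real.norm_eq_abs] at h2
      nlinarith [norm_nonneg x, norm_nonneg y, mul_le_mul_of_nonneg_right hr (norm_nonneg y)]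
    gcongr
  have h3 := norm_integral_le_of_norm_le (hi.const_mul _) (Eventually.of_forall this)
  rw [integral_const_mul] at h3
  rw [avg, ← Real.norm_eq_abs]
  linarith

lemma avg_pd {f : Euc n → ℝ} (hf : Tmp f) (q p : ℝ) (i : Fin n) :
    Differentiable ℝ (fun a => avg f q (p • a)) ∧
    pd i (fun a => avg f q (p • a)) = fun a => p * avg (pd i f) q (p • a) := by
  have hd : Differentiable ℝ (fun a => avg f q (p • a)) := by
    have h1 : Differentiable ℝ (fun a : Euc n => (p • a, q)) := by fun_prop
    exact (avg_differentiable hf).comp h1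
  refine ⟨hd, ?_⟩
  ext a
  have h1 : HasDerivAt (fun t : ℝ => a + t • EuclideanSpace.single i (1:ℝ))
      (EuclideanSpace.single i (1:ℝ)) 0 := by
    simpa using ((hasDerivAt_id (0:ℝ)).smul_const (EuclideanSpace.single i (1:ℝ))).const_add a
  have h2 := HasFDerivAt.comp_hasDerivAt (f := fun t : ℝ => a + t • EuclideanSpace.single i (1:ℝ))
    0 (hd (a + (0:ℝ) • EuclideanSpace.single i (1:ℝ))).hasFDerivAt h1
  have h3 := avg_curve' hf (h1.const_smul p) (hasDerivAt_const (0:ℝ) q)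
  have := h2.unique h3
  simp only [zero_smul, add_zero] at this
  rw [pd, this]
  simp only [zero_mul, add_zero]
  rw [Finset.sum_eq_single i]
  · simp
  · intro j _ hj; simp [hj]
  · simp

/-- The interpolation functional `∫ (∫ f(√t a + √(1-t) b) dγ(b))² dγ(a)`. -/
noncomputable def Th (f : Euc n → ℝ) (t : ℝ) : ℝ :=
  ∫ a, avg f (√(1 - t)) (√t • a) ^ 2 ∂(gam n)

lemma Th_nonneg (f : Euc n → ℝ) (t : ℝ) : 0 ≤ Th f t := integral_nonneg fun _ => sq_nonneg _

lemma Th_zero (f : Euc n → ℝ) : Th f 0 = (∫ y, f y ∂(gam n)) ^ 2 := by simp [Th, avg]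

lemma Th_one (f : Euc n → ℝ) : Th f 1 = ∫ y, f y ^ 2 ∂(gam n) := by simp [Th, avg_zero]

lemma sqrt_abs_le_one {t : ℝ} (h : t ≤ 1) : |√t| ≤ 1 := by
  rw [abs_of_nonneg (Real.sqrt_nonneg t)]
  exact Real.sqrt_le_one.2 h

lemma Th_bound {f : Euc n → ℝ} {C : ℝ} {k : ℕ} (hC : 0 ≤ C)
    (h : ∀ z, |f z| ≤ C * (1 + ‖z‖) ^ k) {t : ℝ} (ht : t ∈ Icc (0:ℝ) 1) (a : Euc n) :
    |avg f (√(1 - t)) (√t • a)| ≤ (C * ∫ y : Euc n, (1 + ‖y‖) ^ k ∂(gam n)) * (1 + ‖a‖) ^ k := by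
  refine (avg_le_of_bound hC h (sqrt_abs_le_one (by linarith [ht.1])) _).trans ?_
  have h1 : ‖√t • a‖ ≤ ‖a‖ := by
    rw [norm_smul, Real.norm_eq_abs]
    nlinarith [sqrt_abs_le_one ht.2, norm_nonneg a]
  have h2 : 0 ≤ ∫ y : Euc n, (1 + ‖y‖) ^ k ∂(gam n) := integral_nonneg fun y => by positivity
  exact mul_le_mul_of_nonneg_left
    (pow_le_pow_left₀ (by positivity) (by linarith) k) (mul_nonneg hC h2)

lemma Th_contOn {f : Euc n → ℝ} (hf : Tmp f) : ContinuousOn (Th f) (Icc 0 1) := by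
  obtain ⟨C, hC0, k, -, hC⟩ := hf.pb.bound 0
  set m := C * ∫ y : Euc n, (1 + ‖y‖) ^ k ∂(gam n)
  refine continuousOn_of_dominated (bound := fun a : Euc n => (m * (1 + ‖a‖) ^ k) ^ 2) ?_ ?_ ?_ ?_
  · intro t _
    have hd : Differentiable ℝ (fun a : Euc n => avg f (√(1-t)) (√t • a)) := by
      have h1 : Differentiable ℝ (fun a : Euc n => (√t • a, √(1-t))) := by fun_prop
      exact (avg_differentiable hf).comp h1
    exact (hd.continuous.pow 2).aestronglyMeasurable
  · intro t ht
    refine Eventually.of_forall fun a => ?_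
    rw [norm_pow, Real.norm_eq_abs]
    have := Th_bound hC0.le hC ht a
    gcongr
  · exact (((PB.const m).mul (((PB.const 1).add PB.norm).pow k)).pow 2).integrable (by fun_prop)
  · refine Eventually.of_forall fun a => Continuous.continuousOn ?_
    have h1 : Continuous (fun t : ℝ => (√t • a, √(1-t))) := by fun_prop
    exact ((avg_differentiable hf).continuous.comp h1).pow 2

/-- The derivative of the interpolation functional of `f` is the sum of those of its partial
derivatives. Hence `Th f` is nondecreasing and convex. -/
lemma Th_deriv {f : Euc n → ℝ} (hf : Tmp f) {t : ℝ} (ht : t ∈ Ioo (0:ℝ) 1) :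
    HasDerivAt (Th f) (∑ i, Th (pd i f) t) t := by
  have hS : PB (fun x => |f x| + (∑ i, |pd i f x| + |lap f x|)) :=
    hf.pb.abs.add ((PB.sum _ fun i => (hf.pd i).pb.abs).add hf.lap.pb.abs)
  obtain ⟨C, hC0, k, -, hC⟩ := hS.bound 0
  have hsum0 : ∀ z, 0 ≤ ∑ i, |pd i f z| := fun z => Finset.sum_nonneg fun i _ => abs_nonneg _
  have hb0 : ∀ z, |f z| ≤ C * (1 + ‖z‖) ^ k := fun z => by
    have := (le_abs_self _).trans (hC z); have := hsum0 z; have := abs_nonneg (lap f z); linarith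
  have hb1 : ∀ i z, |pd i f z| ≤ C * (1 + ‖z‖) ^ k := fun i z => by
    have := (le_abs_self _).trans (hC z)
    have : |pd i f z| ≤ ∑ i, |pd i f z| :=
      Finset.single_le_sum (f := fun i => |pd i f z|) (fun i _ => abs_nonneg _)
        (Finset.mem_univ i)
    have := abs_nonneg (lap f z); have := abs_nonneg (f z); linarith
  have hb2 : ∀ z, |lap f z| ≤ C * (1 + ‖z‖) ^ k := fun z => by
    have := (le_abs_self _).trans (hC z); have := hsum0 z; have := abs_nonneg (f z); linarith
  set m := C * ∫ y : Euc n, (1 + ‖y‖) ^ k ∂(gam n) with hm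
  have hm0 : 0 ≤ m := mul_nonneg hC0.le (integral_nonneg fun y => by positivity)
  set A : (Euc n → ℝ) → ℝ → Euc n → ℝ := fun g s a => avg g (√(1 - s)) (√s • a) with hA
  set D : ℝ → Euc n → ℝ := fun s a =>
    2 * A f s a * (∑ i, (1 / (2 * √s)) * a i * A (pd i f) s a - 1 / 2 * A (lap f) s a) with hD
  have hAd : ∀ {g : Euc n → ℝ}, Tmp g → ∀ s, Differentiable ℝ (A g s) := by
    intro g hg s
    have h1 : Differentiable ℝ (fun a : Euc n => (√s • a, √(1-s))) := by fun_prop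
    exact (avg_differentiable hg).comp h1
  set c := 1 / (2 * √(t / 2)) with hc
  have ht2 : 0 < t / 2 := by linarith [ht.1]
  have hc0 : 0 ≤ c := by positivity
  have hnh : Ioo (t / 2) 1 ∈ 𝓝 t := Ioo_mem_nhds (by linarith [ht.1]) ht.2
  have hder : ∀ a : Euc n, ∀ s ∈ Ioo (t/2) 1, HasDerivAt (fun s => A f s a ^ 2) (D s a) s := by
    intro a s hs
    have hs0 : 0 < s := lt_trans ht2 hs.1
    have hs1 : 0 < 1 - s := by linarith [hs.2]
    have d1 : HasDerivAt (fun s => √s • a) ((1 / (2 * √s)) • a) s :=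
      (Real.hasDerivAt_sqrt hs0.ne').smul_const a
    have d2 : HasDerivAt (fun s => √(1 - s)) (-(1 / (2 * √(1 - s)))) s := by
      have := (Real.hasDerivAt_sqrt hs1.ne').comp s ((hasDerivAt_id s).const_sub 1)
      simpa [Function.comp_def] using this
    have d3 := (avg_curve' hf d1 d2).pow 2
    refine d3.congr_deriv ?_
    have hq : -(1 / (2 * √(1 - s))) * √(1 - s) = -(1/2) := by
      have := Real.sqrt_pos.2 hs1; field_simp
    simp only [hD, hA]
    rw [hq]
    simp only [PiLp.smul_apply, smul_eq_mul]
    push_cast; ring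
  have hDc : Continuous (D t) := by
    simp only [hD]
    have h0 := (hAd hf t).continuous
    have h2 := (hAd hf.lap t).continuous
    have h1 := fun i => (hAd (hf.pd i) t).continuous
    refine (continuous_const.mul h0).mul (Continuous.sub ?_ (continuous_const.mul h2))
    refine continuous_finsetSum _ fun i _ => ?_
    have := h1 i; fun_prop
  have key := hasDerivAt_integral_of_dominated_loc_of_deriv_le (μ := gam n)
    (F := fun s a => A f s a ^ 2) (F' := D) (x₀ := t) (s := Ioo (t/2) 1)
    (bound := fun a => 2 * (m * (1 + ‖a‖) ^ k) *
      (n * (c * ‖a‖ * (m * (1 + ‖a‖) ^ k)) + 1 / 2 * (m * (1 + ‖a‖) ^ k)))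
    hnh (Eventually.of_forall fun s => ((hAd hf s).continuous.pow 2).aestronglyMeasurable)
    (by
      have : PB (A f t) := ⟨m, k, fun a => Th_bound hC0.le hb0 ⟨ht.1.le, ht.2.le⟩ a⟩
      exact (this.pow 2).integrable ((hAd hf t).continuous.pow 2))
    hDc.aestronglyMeasurable
    (Eventually.of_forall fun a s hs => by
      have hs' : s ∈ Icc (0:ℝ) 1 := ⟨by linarith [hs.1], hs.2.le⟩
      have e0 := Th_bound hC0.le hb0 hs' a
      have e1 := fun i => Th_bound hC0.le (hb1 i) hs' a
      have e2 := Th_bound hC0.le hb2 hs' a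
      have hcs : 1 / (2 * √s) ≤ c := by
        rw [hc]
        have h5 : √(t/2) ≤ √s := Real.sqrt_le_sqrt hs.1.le
        have h6 : 0 < √(t/2) := Real.sqrt_pos.2 ht2
        exact one_div_le_one_div_of_le (by positivity) (by linarith)
      have hcs0 : 0 ≤ 1 / (2 * √s) := by positivity
      simp only [hD]
      rw [norm_mul, norm_mul, Real.norm_eq_abs, Real.norm_eq_abs, Real.norm_eq_abs, abs_two]
      refine mul_le_mul (mul_le_mul_of_nonneg_left e0 zero_le_two) ?_ (abs_nonneg _) (by positivity)
      refine (abs_sub _ _).trans (add_le_add ?_ ?_)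
      · refine (Finset.abs_sum_le_sum_abs _ _).trans ?_
        refine (Finset.sum_le_card_nsmul _ _ (c * ‖a‖ * (m * (1 + ‖a‖) ^ k)) fun i _ => ?_).trans ?_
        · rw [abs_mul, abs_mul, abs_of_nonneg hcs0]
          exact mul_le_mul (mul_le_mul hcs (abs_coord_le a i) (abs_nonneg _) hc0) (e1 i)
            (abs_nonneg _) (by positivity)
        · simp
      · rw [abs_mul, abs_of_pos (by norm_num : (0:ℝ) < 1/2)]
        exact mul_le_mul_of_nonneg_left e2 (by norm_num))
    (by
      have h1 : PB (fun a : Euc n => m * (1 + ‖a‖) ^ k) :=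
        (PB.const m).mul (((PB.const 1).add PB.norm).pow k)
      exact PB.integrable (((PB.const 2).mul h1).mul (((PB.const (n:ℝ)).mul
        (((PB.const c).mul PB.norm).mul h1)).add ((PB.const (1/2)).mul h1))) (by fun_prop))
    (Eventually.of_forall hder)
  refine key.2.congr_deriv ?_
  have ht' : t ∈ Icc (0:ℝ) 1 := ⟨ht.1.le, ht.2.le⟩
  have pA0 : PB (A f t) := ⟨m, k, fun a => Th_bound hC0.le hb0 ht' a⟩
  have pA1 : ∀ i, PB (A (pd i f) t) := fun i => ⟨m, k, fun a => Th_bound hC0.le (hb1 i) ht' a⟩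
  have pA2 : PB (A (lap f) t) := ⟨m, k, fun a => Th_bound hC0.le hb2 ht' a⟩
  have pA3 : ∀ i, PB (A (pd i (pd i f)) t) := fun i => by
    obtain ⟨C, hC0, k, -, hC⟩ := ((hf.pd i).pd i).pb.bound 0
    exact ⟨_, k, fun a => Th_bound hC0.le hC ht' a⟩
  have d0 := hAd hf t
  have d1 := fun i => hAd (hf.pd i) t
  have hlapA : ∀ a, A (lap f) t a = ∑ i, A (pd i (pd i f)) t a := fun a =>
    avg_sum _ (fun i => (hf.pd i).pd i) _ _
  have hst : 0 < √t := Real.sqrt_pos.2 ht.1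
  have e : ∀ a, D t a = ∑ i, ((1 / √t) * (a i * (A f t a * A (pd i f) t a)) -
      A f t a * A (pd i (pd i f)) t a) := by
    intro a
    simp only [hD]
    have g1 : ∑ i, (1 / √t) * (a i * (A f t a * A (pd i f) t a)) =
        2 * A f t a * ∑ i, (1 / (2 * √t)) * a i * A (pd i f) t a := by
      rw [Finset.mul_sum]
      refine Finset.sum_congr rfl fun i _ => ?_
      field_simp
    have g2 : ∑ i, A f t a * A (pd i (pd i f)) t a = A f t a * A (lap f) t a := by
      rw [hlapA, Finset.mul_sum]
    rw [Finset.sum_sub_distrib, g1, g2]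
    ring
  simp only [e]
  have i1 : ∀ i, Integrable (fun a => (1 / √t) * (a i * (A f t a * A (pd i f) t a))) (gam n) :=
    fun i => ((PB.const _).mul ((PB.coord i).mul (pA0.mul (pA1 i)))).integrable (by
      have := d0.continuous; have := (d1 i).continuous; fun_prop)
  have i2 : ∀ i, Integrable (fun a => A f t a * A (pd i (pd i f)) t a) (gam n) :=
    fun i => (pA0.mul (pA3 i)).integrable (d0.continuous.mul (hAd ((hf.pd i).pd i) t).continuous)
  have i12 : ∀ i, Integrable (fun a => (1 / √t) * (a i * (A f t a * A (pd i f) t a)) -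
      A f t a * A (pd i (pd i f)) t a) (gam n) := fun i => (i1 i).sub (i2 i)
  rw [integral_finsetSum _ fun i _ => i12 i]
  refine Finset.sum_congr rfl fun i _ => ?_
  rw [integral_sub (i1 i) (i2 i), integral_const_mul]
  have pp : pd i (fun a => A f t a * A (pd i f) t a) = fun a =>
      √t * (A (pd i f) t a ^ 2 + A f t a * A (pd i (pd i f)) t a) := by
    rw [pd_mul d0 (d1 i)]
    have q1 := (avg_pd hf (√(1-t)) (√t) i).2
    have q2 := (avg_pd (hf.pd i) (√(1-t)) (√t) i).2
    ext a
    simp only [hA]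
    rw [q1, q2]; ring
  have i3 : Integrable (fun a => A (pd i f) t a ^ 2) (gam n) :=
    ((pA1 i).pow 2).integrable ((d1 i).continuous.pow 2)
  rw [ibp (G := fun a => A f t a * A (pd i f) t a) (d0.mul (d1 i)) (pA0.mul (pA1 i)) i (by
    rw [pp]; exact (PB.const _).mul (((pA1 i).pow 2).add (pA0.mul (pA3 i)))), pp,
    integral_const_mul, integral_add i3 (i2 i)]
  rw [← mul_assoc, one_div_mul_cancel hst.ne', one_mul, add_sub_cancel_right]
  rfl

/-- Improved Gaussian Poincaré inequality. -/
lemma gap {f : Euc n → ℝ} (hf : Tmp f) :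
    2 * (∫ y, f y ^ 2 ∂(gam n) - (∫ y, f y ∂(gam n)) ^ 2) ≤
      ∑ i, ∫ y, pd i f y ^ 2 ∂(gam n) + ∑ i, (∫ y, pd i f y ∂(gam n)) ^ 2 := by
  set θ : ℝ → ℝ := fun t => ∑ i, Th (pd i f) t with hθ
  have hθc : ContinuousOn θ (Icc 0 1) := continuousOn_finsetSum _ fun i _ => Th_contOn (hf.pd i)
  have hθd : ∀ t ∈ Ioo (0:ℝ) 1, HasDerivAt θ (∑ i, ∑ j, Th (pd j (pd i f)) t) t := fun t ht =>
    HasDerivAt.fun_sum fun i _ => Th_deriv (hf.pd i) ht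
  have hθdd : ∀ t ∈ Ioo (0:ℝ) 1, HasDerivAt (fun t => ∑ i, ∑ j, Th (pd j (pd i f)) t)
      (∑ i, ∑ j, ∑ l, Th (pd l (pd j (pd i f))) t) t := fun t ht =>
    HasDerivAt.fun_sum fun i _ => HasDerivAt.fun_sum fun j _ => Th_deriv ((hf.pd i).pd j) ht
  have hmono : MonotoneOn (fun t => ∑ i, ∑ j, Th (pd j (pd i f)) t) (Ioo 0 1) := by
    refine monotoneOn_of_deriv_nonneg (convex_Ioo 0 1)
      (fun t ht => (hθdd t ht).continuousAt.continuousWithinAt) ?_ ?_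
    · rw [interior_Ioo]
      exact fun t ht => (hθdd t ht).differentiableAt.differentiableWithinAt
    · rw [interior_Ioo]
      intro t ht
      rw [(hθdd t ht).deriv]
      exact Finset.sum_nonneg fun i _ => Finset.sum_nonneg fun j _ => Finset.sum_nonneg fun l _ =>
        Th_nonneg _ _
  have hconv : ConvexOn ℝ (Icc 0 1) θ := by
    refine MonotoneOn.convexOn_of_deriv (convex_Icc 0 1) hθc ?_ ?_
    · rw [interior_Icc]
      exact fun t ht => (hθd t ht).differentiableAt.differentiableWithinAt
    · rw [interior_Icc]
      exact hmono.congr fun t ht => (hθd t ht).deriv.symm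
  set g : ℝ → ℝ := fun t => Th f t - t * θ 0 - t ^ 2 / 2 * (θ 1 - θ 0) with hg
  have hgd : ∀ t ∈ Ioo (0:ℝ) 1, HasDerivAt g (θ t - θ 0 - t * (θ 1 - θ 0)) t := by
    intro t ht
    have h1 := Th_deriv hf ht
    have h2 := (hasDerivAt_id t).mul_const (θ 0)
    have h3 := (((hasDerivAt_id t).pow 2).div_const 2).mul_const (θ 1 - θ 0)
    refine ((h1.sub h2).sub h3).congr_deriv ?_
    simp [hθ]
  have hganti : AntitoneOn g (Icc 0 1) := by
    refine antitoneOn_of_deriv_nonpos (convex_Icc 0 1) ?_ ?_ ?_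
    · have := Th_contOn hf
      fun_prop
    · rw [interior_Icc]
      exact fun t ht => (hgd t ht).differentiableAt.differentiableWithinAt
    · rw [interior_Icc]
      intro t ht
      rw [(hgd t ht).deriv]
      have := hconv.2 (left_mem_Icc.2 zero_le_one) (right_mem_Icc.2 zero_le_one)
        (by linarith [ht.2] : 0 ≤ 1 - t) ht.1.le (by ring)
      simp only [smul_eq_mul, mul_zero, zero_add, mul_one] at this
      linarith
  have := hganti (left_mem_Icc.2 zero_le_one) (right_mem_Icc.2 zero_le_one) zero_le_one
  simp only [hg, hθ] at this
  simp only [Th_zero, Th_one] at this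
  linarith

lemma sq_integral_le {f : Euc n → ℝ} (hf : Integrable f (gam n))
    (hf2 : Integrable (fun y => f y ^ 2) (gam n)) :
    (∫ y, f y ∂(gam n)) ^ 2 ≤ ∫ y, f y ^ 2 ∂(gam n) := by
  set m := ∫ y, f y ∂(gam n)
  have h : 0 ≤ ∫ y, (f y - m) ^ 2 ∂(gam n) := integral_nonneg fun y => sq_nonneg _
  have e : ∀ y, (f y - m) ^ 2 = f y ^ 2 - (2 * m) * f y + m ^ 2 := fun y => by ring
  simp only [e] at h
  have hi : Integrable (fun y => f y ^ 2 - (2 * m) * f y) (gam n) := hf2.sub (hf.const_mul _)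
  rw [integral_add hi (integrable_const _),
    integral_sub hf2 (hf.const_mul _), integral_const_mul] at h
  simp at h
  nlinarith

/-- The Gaussian Poincaré inequality. -/
lemma poincare {f : Euc n → ℝ} (hf : Tmp f) :
    ∫ y, f y ^ 2 ∂(gam n) - (∫ y, f y ∂(gam n)) ^ 2 ≤ ∑ i, ∫ y, pd i f y ^ 2 ∂(gam n) := by
  have h := gap hf
  have h2 : ∑ i, (∫ y, pd i f y ∂(gam n)) ^ 2 ≤ ∑ i, ∫ y, pd i f y ^ 2 ∂(gam n) :=
    Finset.sum_le_sum fun i _ => sq_integral_le (hf.pd i).int ((hf.pd i).pow 2).int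
  linarith

/-! ### Solutions and the Almgren monotonicity formula -/

lemma lap_add {f g : Euc n → ℝ} (hf : Tmp f) (hg : Tmp g) :
    lap (fun x => f x + g x) = fun x => lap f x + lap g x := by
  ext x
  simp only [lap_eq, ← Finset.sum_add_distrib]
  refine Finset.sum_congr rfl fun i _ => ?_
  rw [pd_add hf.diff hg.diff, pd_add (hf.pd i).diff (hg.pd i).diff]

lemma lap_sub {f g : Euc n → ℝ} (hf : Tmp f) (hg : Tmp g) :
    lap (fun x => f x - g x) = fun x => lap f x - lap g x := by
  ext x
  simp only [lap_eq, ← Finset.sum_sub_distrib]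
  refine Finset.sum_congr rfl fun i _ => ?_
  rw [pd_sub hf.diff hg.diff, pd_sub (hf.pd i).diff (hg.pd i).diff]

lemma lap_mul {f g : Euc n → ℝ} (hf : Tmp f) (hg : Tmp g) :
    lap (fun x => f x * g x) = fun x => lap f x * g x + f x * lap g x +
      2 * ∑ i, pd i f x * pd i g x := by
  ext x
  simp only [lap_eq, Finset.sum_mul, Finset.mul_sum, ← Finset.sum_add_distrib]
  refine Finset.sum_congr rfl fun i _ => ?_
  have h1 := (hf.pd i).mul hg
  have h2 := hf.mul (hg.pd i)
  rw [pd_mul hf.diff hg.diff, pd_add h1.diff h2.diff, pd_mul (hf.pd i).diff hg.diff,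
    pd_mul hf.diff (hg.pd i).diff]
  ring

lemma avg_add {f g : Euc n → ℝ} (hf : Tmp f) (hg : Tmp g) (r : ℝ) (x : Euc n) :
    avg (fun x => f x + g x) r x = avg f r x + avg g r x :=
  integral_add (hf.affine x r).int (hg.affine x r).int

lemma avg_sub {f g : Euc n → ℝ} (hf : Tmp f) (hg : Tmp g) (r : ℝ) (x : Euc n) :
    avg (fun x => f x - g x) r x = avg f r x - avg g r x :=
  integral_sub (hf.affine x r).int (hg.affine x r).int

lemma avg_const_mul (c : ℝ) (f : Euc n → ℝ) (r : ℝ) (x : Euc n) :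
    avg (fun x => c * f x) r x = c * avg f r x :=
  integral_const_mul c _

/-- The squared length of the gradient. -/
noncomputable def gsq (f : Euc n → ℝ) (x : Euc n) : ℝ := ∑ i, pd i f x ^ 2

lemma gsq_nonneg (f : Euc n → ℝ) (x : Euc n) : 0 ≤ gsq f x :=
  Finset.sum_nonneg fun _ _ => sq_nonneg _

lemma Tmp.gsq {f : Euc n → ℝ} (hf : Tmp f) : Tmp (gsq f) :=
  Tmp.sum _ fun i => (hf.pd i).pow 2

/-- Positive solutions of the system with linear growth, together with the (automatic)
polynomial growth of all derivatives. -/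
structure Sol (u v : Euc n → ℝ) : Prop where
  tu : Tmp u
  tv : Tmp v
  pu : ∀ x, 0 < u x
  pv : ∀ x, 0 < v x
  eu : ∀ x, lap u x = u x * v x ^ 2
  ev : ∀ x, lap v x = v x * u x ^ 2
  growth : ∃ C : ℝ, 0 < C ∧ ∀ x, u x + v x ≤ C * (1 + ‖x‖)

lemma Sol.symm {u v : Euc n → ℝ} (h : Sol u v) : Sol v u :=
  ⟨h.tv, h.tu, h.pv, h.pu, h.ev, h.eu, by
    obtain ⟨C, hC, h⟩ := h.growth
    exact ⟨C, hC, fun x => by linarith [h x]⟩⟩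

/-- `|U|² = u² + v²`. -/
noncomputable def nsq (u v : Euc n → ℝ) (x : Euc n) : ℝ := u x ^ 2 + v x ^ 2

/-- The energy density `|∇u|² + |∇v|² + u²v²`. -/
noncomputable def en (u v : Euc n → ℝ) (x : Euc n) : ℝ := gsq u x + gsq v x + u x ^ 2 * v x ^ 2

/-- The Gaussian height. -/
noncomputable def HH (u v : Euc n → ℝ) (r : ℝ) (x : Euc n) : ℝ := avg (nsq u v) r x

/-- The scaled Gaussian energy. -/
noncomputable def DD (u v : Euc n → ℝ) (r : ℝ) (x : Euc n) : ℝ := r ^ 2 * avg (en u v) r x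

/-- The scaled Gaussian interaction energy. -/
noncomputable def PP (u v : Euc n → ℝ) (r : ℝ) (x : Euc n) : ℝ :=
  r ^ 2 * avg (fun z => u z ^ 2 * v z ^ 2) r x

/-- The Gaussian Almgren frequency. -/
noncomputable def NN (u v : Euc n → ℝ) (r : ℝ) (x : Euc n) : ℝ := DD u v r x / HH u v r x

section
variable {u v : Euc n → ℝ}

lemma Tmp.nsq (hu : Tmp u) (hv : Tmp v) : Tmp (nsq u v) := (hu.pow 2).add (hv.pow 2)

lemma Tmp.en (hu : Tmp u) (hv : Tmp v) : Tmp (en u v) :=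
  (hu.gsq.add hv.gsq).add ((hu.pow 2).mul (hv.pow 2))

lemma lap_sq {f : Euc n → ℝ} (hf : Tmp f) :
    lap (fun x => f x ^ 2) = fun x => 2 * f x * lap f x + 2 * gsq f x := by
  have : (fun x => f x ^ 2) = fun x => f x * f x := by ext x; ring
  rw [this, lap_mul hf hf]
  ext x
  simp only [gsq, sq]
  ring

lemma Sol.lap_nsq (h : Sol u v) :
    lap (nsq u v) = fun x => 2 * en u v x + 2 * (u x ^ 2 * v x ^ 2) := by
  have : nsq u v = fun x => u x ^ 2 + v x ^ 2 := rfl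
  rw [this, lap_add (h.tu.pow 2) (h.tv.pow 2), lap_sq h.tu, lap_sq h.tv]
  ext x
  simp only [h.eu, h.ev, en]
  ring

lemma Sol.tP (h : Sol u v) : Tmp (fun z => u z ^ 2 * v z ^ 2) := (h.tu.pow 2).mul (h.tv.pow 2)

lemma Sol.H_deriv (h : Sol u v) (r : ℝ) (x : Euc n) :
    HasDerivAt (fun r => HH u v r x)
      (2 * r * (avg (en u v) r x + avg (fun z => u z ^ 2 * v z ^ 2) r x)) r := by
  refine (avg_deriv (h.tu.nsq h.tv) r x).congr_deriv ?_
  rw [h.lap_nsq, avg_add ((Tmp.const 2).mul (h.tu.en h.tv)) ((Tmp.const 2).mul h.tP),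
    avg_const_mul, avg_const_mul]
  ring

lemma pd_sq {f : Euc n → ℝ} (hf : Tmp f) (j : Fin n) :
    pd j (fun x => f x ^ 2) = fun x => 2 * f x * pd j f x := by
  have : (fun x => f x ^ 2) = fun x => f x * f x := by ext x; ring
  rw [this, pd_mul hf.diff hf.diff]
  ext x; ring

/-- The divergence of the stress tensor `∂ᵢf ∂ⱼf`. -/
lemma div_tensor {f : Euc n → ℝ} (hf : Tmp f) (j : Fin n) (x : Euc n) :
    2 * ∑ i, pd i (fun x => pd i f x * pd j f x) x = 2 * lap f x * pd j f x + pd j (gsq f) x := by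
  have : gsq f = fun x => ∑ i, pd i f x ^ 2 := rfl
  rw [this, pd_sum _ (fun i => ((hf.pd i).pow 2).diff)]
  simp only [lap_eq, Finset.mul_sum, Finset.sum_mul, ← Finset.sum_add_distrib]
  refine Finset.sum_congr rfl fun i _ => ?_
  rw [pd_mul (hf.pd i).diff (hf.pd j).diff, pd_sq (hf.pd i), pd_comm hf.1 j i]
  ring

/-- The tensor `|∇u|² + |∇v|² + u²v²` times the identity minus twice the stress tensor
`∇u ⊗ ∇u + ∇v ⊗ ∇v` is divergence-free; this is stationarity under domain variations. -/
lemma Sol.pd_en (h : Sol u v) (j : Fin n) (x : Euc n) :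
    pd j (en u v) x =
      2 * ∑ i, pd i (fun x => pd i u x * pd j u x + pd i v x * pd j v x) x := by
  have e1 : en u v = fun x => (gsq u x + gsq v x) + u x ^ 2 * v x ^ 2 := rfl
  rw [e1, pd_add (h.tu.gsq.add h.tv.gsq).diff h.tP.diff, pd_add h.tu.gsq.diff h.tv.gsq.diff,
    pd_mul (h.tu.pow 2).diff (h.tv.pow 2).diff, pd_sq h.tu, pd_sq h.tv]
  have e2 : ∀ i, pd i (fun x => pd i u x * pd j u x + pd i v x * pd j v x) x =
      pd i (fun x => pd i u x * pd j u x) x + pd i (fun x => pd i v x * pd j v x) x := fun i => by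
    rw [pd_add ((h.tu.pd i).mul (h.tu.pd j)).diff ((h.tv.pd i).mul (h.tv.pd j)).diff]
  simp only [e2, Finset.sum_add_distrib, mul_add, div_tensor h.tu, div_tensor h.tv, h.eu, h.ev]
  ring

/-- Both derivatives of a Hessian entry are moved onto the Gaussian. -/
lemma avg_hess {F : Euc n → ℝ} (hF : Tmp F) (i j : Fin n) (r : ℝ) (x : Euc n) :
    r ^ 2 * avg (pd i (pd j F)) r x =
      ∫ y, (y i * (y j * F (x + r • y)) - (if i = j then 1 else 0) * F (x + r • y)) ∂(gam n) := by
  have h := hF.affine x r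
  have h2 := (Tmp.coord j).mul h
  rw [integral_sub ((Tmp.coord i).mul h2).int ((Tmp.const _).mul h).int,
    ibp h2.diff h2.pb i (h2.pd i).pb,
    pd_mul (Tmp.coord j).diff h.diff, pd_coord, pd_affine hF.diff]
  have h3 := (Tmp.coord j).mul ((Tmp.const r).mul ((hF.pd i).affine x r))
  rw [integral_add ((Tmp.const _).mul h).int h3.int, add_sub_cancel_left, pd_comm hF.1]
  have := avg_ibp (hF.pd i) j r x
  rw [sq, mul_assoc, ← this, ← integral_const_mul]
  congr 1; ext y; ring

/-- The radial derivative `y · ∇f (x + r y)`. -/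
noncomputable def rad (f : Euc n → ℝ) (r : ℝ) (x y : Euc n) : ℝ := ∑ i, y i * pd i f (x + r • y)

lemma Tmp.rad {f : Euc n → ℝ} (hf : Tmp f) (r : ℝ) (x : Euc n) : Tmp (rad f r x) :=
  Tmp.sum _ fun i => (Tmp.coord i).mul ((hf.pd i).affine x r)

lemma Sol.avg_lap_en (h : Sol u v) (r : ℝ) (x : Euc n) :
    r ^ 2 * avg (lap (en u v)) r x = 2 * ∫ y, (rad u r x y ^ 2 + rad v r x y ^ 2 -
      (gsq u (x + r • y) + gsq v (x + r • y))) ∂(gam n) := by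
  set T : Fin n → Fin n → Euc n → ℝ := fun i j x => pd i u x * pd j u x + pd i v x * pd j v x
  have hT : ∀ i j, Tmp (T i j) := fun i j =>
    ((h.tu.pd i).mul (h.tu.pd j)).add ((h.tv.pd i).mul (h.tv.pd j))
  have e1 : lap (en u v) = fun x => ∑ j, ∑ i, 2 * pd j (pd i (T i j)) x := by
    ext z
    rw [lap_eq]
    refine Finset.sum_congr rfl fun j _ => ?_
    have : pd j (en u v) = fun x => ∑ i, 2 * pd i (T i j) x := by
      ext w; rw [h.pd_en, Finset.mul_sum]
    rw [this, pd_sum _ (fun i => ((Tmp.const 2).mul ((hT i j).pd i)).diff)]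
    refine Finset.sum_congr rfl fun i _ => ?_
    rw [pd_mul (Tmp.const 2).diff ((hT i j).pd i).diff, pd_const]
    ring
  have tt : ∀ i j, Tmp (fun x => 2 * pd j (pd i (T i j)) x) := fun i j =>
    (Tmp.const 2).mul (((hT i j).pd i).pd j)
  have tI : ∀ i j, Tmp (fun y : Euc n => y j * (y i * T i j (x + r • y)) -
      (if j = i then 1 else 0) * T i j (x + r • y)) := fun i j =>
    ((Tmp.coord j).mul ((Tmp.coord i).mul ((hT i j).affine x r))).sub
      ((Tmp.const _).mul ((hT i j).affine x r))
  have e2 : ∀ y : Euc n, rad u r x y ^ 2 + rad v r x y ^ 2 -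
      (gsq u (x + r • y) + gsq v (x + r • y)) = ∑ j, ∑ i, (y j * (y i * T i j (x + r • y)) -
      (if j = i then 1 else 0) * T i j (x + r • y)) := by
    intro y
    simp only [Finset.sum_sub_distrib, ite_mul, zero_mul, one_mul, Finset.sum_ite_eq,
      Finset.mem_univ, if_true]
    congr 1
    · simp only [rad, sq, Finset.sum_mul_sum, ← Finset.sum_add_distrib]
      refine Finset.sum_congr rfl fun j _ => Finset.sum_congr rfl fun i _ => ?_
      simp only [T]; ring
    · simp only [gsq, ← Finset.sum_add_distrib, T, sq]
  rw [e1, avg_sum _ (fun j => Tmp.sum _ fun i => tt i j)]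
  simp only [e2]
  rw [integral_finsetSum _ fun j _ => (Tmp.sum _ fun i => tI i j).int, Finset.mul_sum,
    Finset.mul_sum]
  refine Finset.sum_congr rfl fun j _ => ?_
  rw [avg_sum _ (fun i => tt i j), integral_finsetSum _ fun i _ => (tI i j).int, Finset.mul_sum,
    Finset.mul_sum]
  refine Finset.sum_congr rfl fun i _ => ?_
  rw [avg_const_mul, ← avg_hess (hT i j)]
  ring

lemma Sol.D_eq (h : Sol u v) (r : ℝ) (x : Euc n) :
    DD u v r x = r ^ 2 * avg (gsq u) r x + r ^ 2 * avg (gsq v) r x + PP u v r x := by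
  have e1 : en u v = fun x => (gsq u x + gsq v x) + u x ^ 2 * v x ^ 2 := rfl
  rw [DD, e1, avg_add (h.tu.gsq.add h.tv.gsq) h.tP, avg_add h.tu.gsq h.tv.gsq, PP]
  ring

lemma Sol.D_deriv (h : Sol u v) {r : ℝ} (hr : 0 < r) (x : Euc n) :
    HasDerivAt (fun r => DD u v r x)
      ((2 * (r ^ 2 * ∫ y, (rad u r x y ^ 2 + rad v r x y ^ 2) ∂(gam n)) + 2 * PP u v r x) / r) r := by
  have h1 := (((hasDerivAt_id r).pow 2)).mul (avg_deriv (h.tu.en h.tv) r x)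
  refine h1.congr_deriv ?_
  have h2 := h.avg_lap_en r x
  have tr := ((h.tu.rad r x).pow 2).add ((h.tv.rad r x).pow 2)
  have tg := (h.tu.gsq.affine x r).add (h.tv.gsq.affine x r)
  rw [integral_sub tr.int tg.int, integral_add (h.tu.gsq.affine x r).int (h.tv.gsq.affine x r).int]
    at h2
  have h3 := h.D_eq r x
  have e1 : ∫ y, gsq u (x + r • y) ∂(gam n) = avg (gsq u) r x := rfl
  have e2 : ∫ y, gsq v (x + r • y) ∂(gam n) = avg (gsq v) r x := rfl
  rw [e1, e2] at h2
  rw [DD] at h3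
  simp only [id, Nat.cast_ofNat, Nat.add_one_sub_one, pow_one, mul_one, Pi.pow_apply]
  rw [eq_div_iff hr.ne']
  linear_combination (r ^ 2) * h2 + 2 * h3

lemma Sol.U_dot_Z (h : Sol u v) (r : ℝ) (x : Euc n) :
    r * ∫ y, (u (x + r • y) * rad u r x y + v (x + r • y) * rad v r x y) ∂(gam n) =
      DD u v r x + PP u v r x := by
  have e1 := (avg_curve ((h.tu.nsq h.tv).1.of_le (by exact_mod_cast le_top)) (h.tu.nsq h.tv).pb
    (fun i => ((h.tu.nsq h.tv).pd i).pb) (hasDerivAt_const r x) (hasDerivAt_id r)).unique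
    (h.H_deriv r x)
  simp only [PiLp.zero_apply, zero_mul, Finset.sum_const_zero, zero_add, one_mul, id] at e1
  have tt : ∀ i, Tmp (fun y : Euc n => y i * pd i (nsq u v) (x + r • y)) := fun i =>
    (Tmp.coord i).mul (((h.tu.nsq h.tv).pd i).affine x r)
  rw [← integral_finsetSum _ fun i _ => (tt i).int] at e1
  have e2 : ∀ y, u (x + r • y) * rad u r x y + v (x + r • y) * rad v r x y =
      (1 / 2) * ∑ i, y i * pd i (nsq u v) (x + r • y) := by
    intro y
    have : nsq u v = fun x => u x ^ 2 + v x ^ 2 := rfl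
    simp only [rad, this, Finset.mul_sum, ← Finset.sum_add_distrib]
    refine Finset.sum_congr rfl fun i _ => ?_
    rw [pd_add (h.tu.pow 2).diff (h.tv.pow 2).diff, pd_sq h.tu, pd_sq h.tv]
    ring
  simp only [e2]
  rw [integral_const_mul, e1, DD, PP]
  ring

lemma Sol.H_pos (h : Sol u v) (r : ℝ) (x : Euc n) : 0 < HH u v r x := by
  have t := (h.tu.nsq h.tv).affine x r
  refine (integral_pos_iff_support_of_nonneg (fun y => ?_) t.int).2 ?_
  · exact add_nonneg (sq_nonneg _) (sq_nonneg _)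
  · have : Function.support (fun y => nsq u v (x + r • y)) = univ := by
      ext y
      simp only [Function.mem_support, mem_univ, iff_true]
      have := h.pu (x + r • y)
      exact (add_pos_of_pos_of_nonneg (pow_pos this 2) (sq_nonneg _)).ne'
    rw [this]
    simp

lemma P_nonneg (r : ℝ) (x : Euc n) : 0 ≤ PP u v r x :=
  mul_nonneg (sq_nonneg _) (avg_nonneg (fun z => by positivity) _ _)

lemma D_nonneg (r : ℝ) (x : Euc n) : 0 ≤ DD u v r x :=
  mul_nonneg (sq_nonneg _) (avg_nonneg (fun z => add_nonneg (add_nonneg (gsq_nonneg _ _)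
    (gsq_nonneg _ _)) (by positivity)) _ _)

lemma Sol.N_nonneg (h : Sol u v) (r : ℝ) (x : Euc n) : 0 ≤ NN u v r x :=
  div_nonneg (D_nonneg _ _) (h.H_pos _ _).le

lemma Sol.D_eq_NH (h : Sol u v) (r : ℝ) (x : Euc n) : DD u v r x = NN u v r x * HH u v r x := by
  rw [NN, div_mul_cancel₀ _ (h.H_pos r x).ne']

lemma Sol.H_deriv' (h : Sol u v) {r : ℝ} (hr : 0 < r) (x : Euc n) :
    HasDerivAt (fun r => HH u v r x) (2 * (DD u v r x + PP u v r x) / r) r := by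
  refine (h.H_deriv r x).congr_deriv ?_
  rw [DD, PP]; field_simp

/-- Almgren monotonicity with its defect: `rN'H/2` dominates both the interaction energy and the
distance of the radial derivative of `U` from `N U`. -/
lemma Sol.N_deriv (h : Sol u v) {r : ℝ} (hr : 0 < r) (x : Euc n) :
    ∃ N' : ℝ, HasDerivAt (fun r => NN u v r x) N' r ∧
      r * N' * HH u v r x / 2 =
        ∫ y, ((r * rad u r x y - NN u v r x * u (x + r • y)) ^ 2 +
          (r * rad v r x y - NN u v r x * v (x + r • y)) ^ 2) ∂(gam n) +
        PP u v r x + NN u v r x * PP u v r x := by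
  have hH := h.H_pos r x
  refine ⟨_, (h.D_deriv hr x).div (h.H_deriv' hr x) hH.ne', ?_⟩
  set N := NN u v r x with hN
  have hDN : DD u v r x = N * HH u v r x := h.D_eq_NH r x
  have e : ∀ y, (r * rad u r x y - N * u (x + r • y)) ^ 2 +
      (r * rad v r x y - N * v (x + r • y)) ^ 2 =
      r ^ 2 * (rad u r x y ^ 2 + rad v r x y ^ 2) -
      (2 * N * r) * (u (x + r • y) * rad u r x y + v (x + r • y) * rad v r x y) +
      N ^ 2 * nsq u v (x + r • y) := by
    intro y; simp only [nsq]; ring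
  simp only [e]
  have t1 := ((h.tu.rad r x).pow 2).add ((h.tv.rad r x).pow 2)
  have t2 := ((h.tu.affine x r).mul (h.tu.rad r x)).add ((h.tv.affine x r).mul (h.tv.rad r x))
  have t3 := (h.tu.nsq h.tv).affine x r
  have t1' := (Tmp.const (r^2)).mul t1
  have t2' := (Tmp.const (2 * N * r)).mul t2
  rw [integral_add (t1'.sub t2').int ((Tmp.const (N^2)).mul t3).int, integral_sub t1'.int t2'.int,
    integral_const_mul, integral_const_mul, integral_const_mul]
  have e3 : ∫ y, nsq u v (x + r • y) ∂(gam n) = HH u v r x := rfl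
  have e4 := h.U_dot_Z r x
  rw [mul_assoc (2 * N), e4, e3, hDN]
  field_simp
  ring

end

/-! ### Doubling, Harnack inequality in the centre, and weighted bounds -/

section
variable {u v : Euc n → ℝ}

lemma Sol.N_deriv_le (h : Sol u v) {r : ℝ} (hr : 0 < r) (x : Euc n) :
    ∃ N' : ℝ, HasDerivAt (fun r => NN u v r x) N' r ∧ 2 * PP u v r x / (r * HH u v r x) ≤ N' ∧
      ∫ y, ((r * rad u r x y - NN u v r x * u (x + r • y)) ^ 2 +
          (r * rad v r x y - NN u v r x * v (x + r • y)) ^ 2) ∂(gam n) ≤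
        r * N' * HH u v r x / 2 := by
  obtain ⟨N', h1, h2⟩ := h.N_deriv hr x
  have hH := h.H_pos r x
  have hP := P_nonneg (u := u) (v := v) r x
  have hN := mul_nonneg (h.N_nonneg r x) hP
  have hI : 0 ≤ ∫ y, ((r * rad u r x y - NN u v r x * u (x + r • y)) ^ 2 +
          (r * rad v r x y - NN u v r x * v (x + r • y)) ^ 2) ∂(gam n) :=
    integral_nonneg fun y => by positivity
  refine ⟨N', h1, ?_, by linarith⟩
  rw [div_le_iff₀ (by positivity)]
  nlinarith

lemma Sol.N_mono (h : Sol u v) (x : Euc n) : MonotoneOn (fun r => NN u v r x) (Ioi 0) := by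
  refine monotoneOn_of_deriv_nonneg (convex_Ioi 0) (fun r hr => ?_) (fun r hr => ?_) fun r hr => ?_
  · obtain ⟨N', h1, -⟩ := h.N_deriv_le hr x
    exact h1.continuousAt.continuousWithinAt
  · rw [interior_Ioi] at hr
    obtain ⟨N', h1, -⟩ := h.N_deriv_le hr x
    exact h1.differentiableAt.differentiableWithinAt
  · rw [interior_Ioi] at hr
    obtain ⟨N', h1, h2, -⟩ := h.N_deriv_le hr x
    rw [h1.deriv]
    have hr : 0 < r := hr
    have := h.H_pos r x
    have := P_nonneg (u := u) (v := v) r x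
    exact le_trans (by positivity) h2

lemma Sol.logH_deriv (h : Sol u v) {r : ℝ} (hr : 0 < r) (x : Euc n) :
    HasDerivAt (fun r => Real.log (HH u v r x))
      (2 * NN u v r x / r + 2 * PP u v r x / (r * HH u v r x)) r := by
  refine ((h.H_deriv' hr x).log (h.H_pos r x).ne').congr_deriv ?_
  rw [h.D_eq_NH]
  have := h.H_pos r x
  field_simp

/-- If the frequency at scale `r` is at least `ν`, the height grows at least like `r ^ (2ν)` from
there on. -/
lemma Sol.H_lower (h : Sol u v) {r R ν : ℝ} (hr : 0 < r) (hR : r ≤ R) (x : Euc n)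
    (hν : ν ≤ NN u v r x) : (R / r) ^ (2 * ν) * HH u v r x ≤ HH u v R x := by
  have hd : ∀ t ∈ Ici r, HasDerivAt (fun t => Real.log (HH u v t x) - 2 * ν * Real.log t)
      (2 * NN u v t x / t + 2 * PP u v t x / (t * HH u v t x) - 2 * ν * t⁻¹) t := fun t ht =>
    (h.logH_deriv (hr.trans_le ht) x).sub ((Real.hasDerivAt_log (hr.trans_le ht).ne').const_mul _)
  have hm : MonotoneOn (fun t => Real.log (HH u v t x) - 2 * ν * Real.log t) (Ici r) := by
    refine monotoneOn_of_deriv_nonneg (convex_Ici r)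
      (fun t ht => (hd t ht).continuousAt.continuousWithinAt) (fun t ht => ?_) fun t ht => ?_
    · exact (hd t (interior_subset ht)).differentiableAt.differentiableWithinAt
    · have ht := interior_subset ht
      rw [(hd t ht).deriv]
      have ht0 : 0 < t := hr.trans_le ht
      have h1 : ν ≤ NN u v t x := hν.trans (h.N_mono x hr ht0 ht)
      have := h.H_pos t x
      have := P_nonneg (u := u) (v := v) t x
      have h2 : 0 ≤ 2 * PP u v t x / (t * HH u v t x) := by positivity
      have h3 : 2 * ν * t⁻¹ ≤ 2 * NN u v t x / t := by
        rw [div_eq_mul_inv]; gcongr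
      linarith
  have h1 := hm (self_mem_Ici) (mem_Ici.2 hR) hR
  simp only at h1
  have hR0 : 0 < R := hr.trans_le hR
  rw [← Real.log_le_log_iff (by have := h.H_pos r x; positivity) (h.H_pos R x),
    Real.log_mul (by positivity) (h.H_pos r x).ne', Real.log_rpow (by positivity),
    Real.log_div hR0.ne' hr.ne']
  linarith

lemma Sol.H_growth (h : Sol u v) : ∃ C : ℝ, 0 < C ∧ ∀ (x : Euc n) (r : ℝ), 0 ≤ r →
    HH u v r x ≤ C * (1 + ‖x‖ + r) ^ 2 := by
  obtain ⟨C, hC, hg⟩ := h.growth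
  have t1 : Integrable (fun y : Euc n => (1 + ‖y‖) ^ 2) (gam n) :=
    (((PB.const 1).add PB.norm).pow 2).integrable (by fun_prop)
  have hI : 0 ≤ ∫ y : Euc n, (1 + ‖y‖) ^ 2 ∂(gam n) := integral_nonneg fun y => by positivity
  refine ⟨C ^ 2 * (1 + ∫ y : Euc n, (1 + ‖y‖) ^ 2 ∂(gam n)), by positivity, fun x r hr => ?_⟩
  have h1 : HH u v r x ≤ ∫ y : Euc n, (C ^ 2 * (1 + ‖x‖ + r) ^ 2) * (1 + ‖y‖) ^ 2 ∂(gam n) := by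
    refine integral_mono ((h.tu.nsq h.tv).affine x r).int (t1.const_mul _) fun y => ?_
    have h2 : nsq u v (x + r • y) ≤ (u (x + r • y) + v (x + r • y)) ^ 2 := by
      have := h.pu (x + r • y); have := h.pv (x + r • y)
      simp only [nsq]; nlinarith
    refine h2.trans ?_
    rw [← mul_pow, ← mul_pow]
    refine pow_le_pow_left₀ (add_pos (h.pu _) (h.pv _)).le ((hg _).trans ?_) 2
    rw [mul_assoc]
    have h3 := norm_add_le x (r • y)
    rw [norm_smul, Real.norm_eq_abs, abs_of_nonneg hr] at h3
    refine mul_le_mul_of_nonneg_left ?_ hC.le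
    nlinarith [norm_nonneg x, norm_nonneg y, mul_nonneg (norm_nonneg x) (norm_nonneg y)]
  rw [integral_const_mul] at h1
  have : 0 ≤ C ^ 2 * (1 + ‖x‖ + r) ^ 2 := by positivity
  nlinarith

/-- If `N > 1` at some scale, then by monotonicity `H` would grow faster than quadratically,
contradicting the linear growth of the solution. -/
lemma Sol.N_le_one (h : Sol u v) {r : ℝ} (hr : 0 < r) (x : Euc n) : NN u v r x ≤ 1 := by
  by_contra hcon
  push Not at hcon
  obtain ⟨C, hC, hg⟩ := h.H_growth
  set δ := NN u v r x - 1 with hδ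
  have hδ0 : 0 < δ := by linarith
  have hH := h.H_pos r x
  have ht := tendsto_rpow_atTop (show 0 < 2 * δ by linarith)
  obtain ⟨t, ht1, ht2⟩ := ((ht.eventually_gt_atTop (C * (1 + ‖x‖ + r) ^ 2 / HH u v r x)).and
    (eventually_ge_atTop 1)).exists
  have ht0 : 0 < t := by linarith
  have h1 := h.H_lower hr (show r ≤ t * r by nlinarith) x (le_refl (NN u v r x))
  rw [mul_div_cancel_right₀ _ hr.ne', show 2 * NN u v r x = 2 + 2 * δ by rw [hδ]; ring,
    Real.rpow_add ht0] at h1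
  have h2 := hg x (t * r) (by positivity)
  have h3 : C * (1 + ‖x‖ + t * r) ^ 2 ≤ t ^ 2 * (C * (1 + ‖x‖ + r) ^ 2) := by
    have : 1 + ‖x‖ + t * r ≤ t * (1 + ‖x‖ + r) := by nlinarith [norm_nonneg x]
    calc C * (1 + ‖x‖ + t * r) ^ 2 ≤ C * (t * (1 + ‖x‖ + r)) ^ 2 := by gcongr
      _ = _ := by ring
  rw [div_lt_iff₀ hH] at ht1
  rw [show t ^ (2:ℝ) = t ^ 2 by exact_mod_cast Real.rpow_natCast t 2] at h1
  have h5 : t ^ 2 * (C * (1 + ‖x‖ + r) ^ 2) < t ^ 2 * (t ^ (2 * δ) * HH u v r x) := by gcongr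
  nlinarith

lemma Sol.D_le_H (h : Sol u v) {r : ℝ} (hr : 0 < r) (x : Euc n) : DD u v r x ≤ HH u v r x := by
  rw [h.D_eq_NH]
  have := h.N_le_one hr x; have := h.H_pos r x
  nlinarith

/-- Doubling: `H(R) ≤ e (R/r)² H(r)`. -/
lemma Sol.H_upper (h : Sol u v) {r R : ℝ} (hr : 0 < r) (hR : r ≤ R) (x : Euc n) :
    HH u v R x ≤ Real.exp 1 * (R / r) ^ 2 * HH u v r x := by
  have hd : ∀ t ∈ Ici r, ∃ N', HasDerivAt (fun t => Real.log (HH u v t x) - 2 * Real.log t -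
      NN u v t x) (2 * NN u v t x / t + 2 * PP u v t x / (t * HH u v t x) - 2 * t⁻¹ - N') t ∧
      2 * PP u v t x / (t * HH u v t x) ≤ N' := fun t ht => by
    have ht0 := hr.trans_le ht
    obtain ⟨N', h1, h2, -⟩ := h.N_deriv_le ht0 x
    exact ⟨N', ((h.logH_deriv ht0 x).sub ((Real.hasDerivAt_log ht0.ne').const_mul _)).sub h1, h2⟩
  have hm : AntitoneOn (fun t => Real.log (HH u v t x) - 2 * Real.log t - NN u v t x) (Ici r) := by
    refine antitoneOn_of_deriv_nonpos (convex_Ici r)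
      (fun t ht => ?_) (fun t ht => ?_) fun t ht => ?_
    · obtain ⟨N', h1, -⟩ := hd t ht
      exact h1.continuousAt.continuousWithinAt
    · obtain ⟨N', h1, -⟩ := hd t (interior_subset ht)
      exact h1.differentiableAt.differentiableWithinAt
    · have ht := interior_subset ht
      obtain ⟨N', h1, h2⟩ := hd t ht
      have ht0 : 0 < t := hr.trans_le ht
      rw [h1.deriv]
      have h3 : 2 * NN u v t x / t ≤ 2 * t⁻¹ := by
        have := h.N_le_one ht0 x
        rw [div_eq_mul_inv]; gcongr; linarith
      linarith
  have h1 := hm (self_mem_Ici) (mem_Ici.2 hR) hR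
  simp only at h1
  have hR0 : 0 < R := hr.trans_le hR
  have hHr := h.H_pos r x
  rw [← Real.log_le_log_iff (h.H_pos R x) (by positivity),
    Real.log_mul (by positivity) hHr.ne', Real.log_mul (by positivity) (by positivity),
    Real.log_exp, Real.log_pow, Real.log_div hR0.ne' hr.ne']
  have := h.N_nonneg r x
  have := h.N_le_one hR0 x
  push_cast
  linarith

lemma Sol.H_mono (h : Sol u v) (x : Euc n) : MonotoneOn (fun r => HH u v r x) (Ici 0) := by
  refine monotoneOn_of_deriv_nonneg (convex_Ici 0)
    (fun r _ => (h.H_deriv r x).continuousAt.continuousWithinAt)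
    (fun r _ => (h.H_deriv r x).differentiableAt.differentiableWithinAt) fun r hr => ?_
  rw [(h.H_deriv r x).deriv]
  have hr : 0 ≤ r := interior_subset hr
  have h1 : 0 ≤ avg (en u v) r x := avg_nonneg (fun z => add_nonneg (add_nonneg (gsq_nonneg _ _)
    (gsq_nonneg _ _)) (by positivity)) _ _
  have h2 : 0 ≤ avg (fun z => u z ^ 2 * v z ^ 2) r x := avg_nonneg (fun z => by positivity) _ _
  positivity

lemma H_zero (x : Euc n) : HH u v 0 x = u x ^ 2 + v x ^ 2 := avg_zero _ _

lemma Sol.nsq_le (h : Sol u v) {r : ℝ} (hr : 0 ≤ r) (x : Euc n) :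
    u x ^ 2 + v x ^ 2 ≤ HH u v r x := by
  rw [← H_zero]
  exact h.H_mono x self_mem_Ici hr hr

lemma dir_le (f : Euc n → ℝ) (e z : Euc n) {r : ℝ} (hr : 0 < r) :
    2 * f z * ∑ i, e i * pd i f z ≤ ‖e‖ / r * (f z ^ 2 + r ^ 2 * gsq f z) := by
  have h1 : (∑ i, e i * pd i f z) ^ 2 ≤ ‖e‖ ^ 2 * gsq f z := by
    rw [normsq_eq]; exact Finset.sum_mul_sq_le_sq_mul_sq _ _ _
  have hg := gsq_nonneg f z
  have h2 : |∑ i, e i * pd i f z| ≤ ‖e‖ * √(gsq f z) := by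
    rw [← Real.sqrt_sq_eq_abs, ← Real.sqrt_sq (norm_nonneg e), ← Real.sqrt_mul (by positivity)]
    exact Real.sqrt_le_sqrt h1
  have h3 := Real.sq_sqrt hg
  set q := √(gsq f z)
  rw [← h3]
  calc 2 * f z * ∑ i, e i * pd i f z ≤ |2 * f z * ∑ i, e i * pd i f z| := le_abs_self _
    _ = 2 * |f z| * |∑ i, e i * pd i f z| := by rw [abs_mul, abs_mul, abs_two]
    _ ≤ 2 * |f z| * (‖e‖ * q) := by gcongr
    _ = ‖e‖ / r * (2 * |f z| * (r * q)) := by field_simp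
    _ ≤ ‖e‖ / r * (f z ^ 2 + r ^ 2 * q ^ 2) := by
      refine mul_le_mul_of_nonneg_left ?_ (by positivity)
      nlinarith [sq_nonneg (|f z| - r * q), sq_abs (f z)]

lemma Sol.H_dir (h : Sol u v) {r : ℝ} (hr : 0 < r) (x e : Euc n) :
    ∑ i, e i * avg (pd i (nsq u v)) r x ≤ 2 * ‖e‖ / r * HH u v r x := by
  have tn := h.tu.nsq h.tv
  have e1 : ∑ i, e i * avg (pd i (nsq u v)) r x =
      avg (fun z => ∑ i, e i * pd i (nsq u v) z) r x := by
    rw [avg_sum _ (fun i => (Tmp.const (e i)).mul (tn.pd i))]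
    simp only [avg_const_mul]
  rw [e1]
  have t2 : Tmp (fun z => ‖e‖ / r * (nsq u v z + r ^ 2 * en u v z)) :=
    (Tmp.const _).mul (tn.add ((Tmp.const _).mul (h.tu.en h.tv)))
  refine (avg_mono (Tmp.sum _ fun i => (Tmp.const (e i)).mul (tn.pd i)) t2 (fun z => ?_) r x).trans ?_
  · have e2 : ∑ i, e i * pd i (nsq u v) z = 2 * u z * ∑ i, e i * pd i u z +
        2 * v z * ∑ i, e i * pd i v z := by
      have : nsq u v = fun x => u x ^ 2 + v x ^ 2 := rfl
      simp only [this, Finset.mul_sum, ← Finset.sum_add_distrib]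
      refine Finset.sum_congr rfl fun i _ => ?_
      rw [pd_add (h.tu.pow 2).diff (h.tv.pow 2).diff, pd_sq h.tu, pd_sq h.tv]
      ring
    rw [e2]
    have h1 := dir_le u e z hr
    have h2 := dir_le v e z hr
    refine (add_le_add h1 h2).trans ?_
    rw [← mul_add]
    refine mul_le_mul_of_nonneg_left ?_ (by positivity)
    have : 0 ≤ r ^ 2 * (u z ^ 2 * v z ^ 2) := by positivity
    simp only [nsq, en]
    nlinarith
  · rw [avg_const_mul, avg_add tn ((Tmp.const _).mul (h.tu.en h.tv)), avg_const_mul]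
    have h3 := h.D_le_H hr x
    rw [DD] at h3
    have e3 : avg (nsq u v) r x = HH u v r x := rfl
    rw [e3]
    calc ‖e‖ / r * (HH u v r x + r ^ 2 * avg (en u v) r x)
        ≤ ‖e‖ / r * (HH u v r x + HH u v r x) := by gcongr
      _ = _ := by ring

/-- Harnack inequality for the height in the centre variable. -/
lemma Sol.H_translate (h : Sol u v) {r : ℝ} (hr : 0 < r) (x d : Euc n) :
    HH u v r (x + d) ≤ Real.exp (2 * ‖d‖ / r) * HH u v r x := by
  set c := 2 * ‖d‖ / r with hc
  have hd : ∀ t : ℝ, HasDerivAt (fun t => HH u v r (x + t • d) * Real.exp (-c * t))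
      ((∑ i, d i * avg (pd i (nsq u v)) r (x + t • d)) * Real.exp (-c * t) +
        HH u v r (x + t • d) * (Real.exp (-c * t) * (-c))) t := fun t => by
    have h1 := avg_dir (h.tu.nsq h.tv) r x d t
    have h2 : HasDerivAt (fun t => Real.exp (-c * t)) (Real.exp (-c * t) * (-c)) t := by
      simpa using ((hasDerivAt_id t).const_mul (-c)).exp
    exact h1.mul h2
  have ha : Antitone (fun t : ℝ => HH u v r (x + t • d) * Real.exp (-c * t)) := by
    refine antitone_of_deriv_nonpos (fun t => (hd t).differentiableAt) fun t => ?_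
    rw [(hd t).deriv]
    have h1 := h.H_dir hr (x + t • d) d
    have h2 := Real.exp_pos (-c * t)
    nlinarith
  have h1 := ha zero_le_one
  simp only [one_smul, zero_smul, add_zero, mul_one, mul_zero, Real.exp_zero] at h1
  have h2 := Real.exp_pos c
  have h3 : Real.exp (-c) * Real.exp c = 1 := by rw [← Real.exp_add]; simp
  calc HH u v r (x + d) = HH u v r (x + d) * Real.exp (-c) * Real.exp c := by
        rw [mul_assoc, h3, mul_one]
    _ ≤ HH u v r x * Real.exp c := by gcongr
    _ = _ := mul_comm _ _

lemma Sol.H_translate' (h : Sol u v) {r : ℝ} (hr : 0 < r) (x z : Euc n) :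
    HH u v r z ≤ Real.exp (2 * dist z x / r) * HH u v r x := by
  have := h.H_translate hr x (z - x)
  rwa [add_sub_cancel, ← dist_eq_norm] at this

lemma exp1_le : Real.exp 1 ≤ 3 := by have := Real.exp_one_lt_d9; linarith

lemma exp2_le : Real.exp 2 ≤ 9 := by
  have : Real.exp 2 = Real.exp 1 ^ 2 := by rw [← Real.exp_nat_mul]; norm_num
  rw [this]
  have := exp1_le; have := Real.exp_pos 1; nlinarith

/-- Pointwise bound of `|U|²` by the height. -/
lemma Sol.nsq_le_H (h : Sol u v) {r : ℝ} (hr : 0 < r) (x y : Euc n) :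
    u (x + r • y) ^ 2 + v (x + r • y) ^ 2 ≤ 27 * (1 + ‖y‖) ^ 2 * HH u v r x := by
  have h0 : 0 ≤ ‖y‖ := norm_nonneg y
  set R := r * (1 + ‖y‖) with hR
  have hR0 : 0 < R := by positivity
  have hrR : r ≤ R := by nlinarith
  have h1 := h.nsq_le hR0.le (x + r • y)
  have h2 := h.H_translate hR0 x (r • y)
  have h3 := h.H_upper hr hrR x
  have hH := h.H_pos r x
  have hHR := h.H_pos R x
  have e1 : R / r = 1 + ‖y‖ := by rw [hR]; field_simp
  rw [e1] at h3
  have h4 : Real.exp (2 * ‖r • y‖ / R) ≤ Real.exp 2 := by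
    refine Real.exp_le_exp.2 ?_
    rw [div_le_iff₀ hR0, norm_smul, Real.norm_eq_abs, abs_of_pos hr]
    nlinarith
  calc _ ≤ HH u v R (x + r • y) := h1
    _ ≤ Real.exp (2 * ‖r • y‖ / R) * HH u v R x := h2
    _ ≤ 9 * HH u v R x := by have := exp2_le; gcongr; linarith
    _ ≤ 9 * (Real.exp 1 * (1 + ‖y‖) ^ 2 * HH u v r x) := by gcongr
    _ ≤ 9 * (3 * (1 + ‖y‖) ^ 2 * HH u v r x) := by have := exp1_le; gcongr
    _ = _ := by ring

lemma Sol.u_le (h : Sol u v) {r : ℝ} (hr : 0 < r) (x y : Euc n) :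
    u (x + r • y) ≤ 6 * (1 + ‖y‖) * √(HH u v r x) := by
  have h1 := h.nsq_le_H hr x y
  have h2 := Real.sq_sqrt (h.H_pos r x).le
  have := norm_nonneg y
  refine le_of_sq_le_sq ?_ (by positivity)
  rw [mul_pow, h2]
  nlinarith [sq_nonneg (v (x + r • y)), mul_nonneg (sq_nonneg (1 + ‖y‖)) (h.H_pos r x).le]

lemma Sol.v_le (h : Sol u v) {r : ℝ} (hr : 0 < r) (x y : Euc n) :
    v (x + r • y) ≤ 6 * (1 + ‖y‖) * √(HH u v r x) := by
  have h1 := h.nsq_le_H hr x y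
  have h2 := Real.sq_sqrt (h.H_pos r x).le
  have := norm_nonneg y
  refine le_of_sq_le_sq ?_ (by positivity)
  rw [mul_pow, h2]
  nlinarith [sq_nonneg (u (x + r • y)), mul_nonneg (sq_nonneg (1 + ‖y‖)) (h.H_pos r x).le]

end

/-- Polynomial weights are absorbed by doubling the Gaussian scale. -/
lemma weight (k : ℕ) : ∃ C : ℝ, 0 < C ∧ ∀ (F : Euc n → ℝ), Tmp F → (∀ z, 0 ≤ F z) →
    ∀ (r : ℝ) (x : Euc n), ∫ y, F (x + r • y) * (1 + ‖y‖) ^ k ∂(gam n) ≤ C * avg F (2 * r) x := by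
  set c : ℝ := k.factorial * Real.exp 2 with hc
  refine ⟨c * 2 ^ n, by positivity, fun F hF h0 r x => ?_⟩
  have e1 : avg F (2 * r) x = (gZ n)⁻¹ * ∫ y, F (x + r • ((2:ℝ) • y)) * gw ((1/2 : ℝ) • ((2:ℝ) • y)) := by
    rw [avg, integral_gam]
    congr 2; ext y
    rw [smul_smul, smul_smul, mul_comm r 2]; norm_num
  rw [e1, Measure.integral_comp_smul volume (fun y : Euc n => F (x + r • y) * gw ((1/2 : ℝ) • y)),
    integral_gam]
  have hfr : Module.finrank ℝ (Euc n) = n := by simp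
  rw [hfr, abs_of_pos (by positivity), smul_eq_mul]
  have hi : Integrable (fun y : Euc n => F (x + r • y) * gw ((1/2 : ℝ) • y)) := by
    have h1 := ((hF.affine x (2 * r)).pb.integrable_gw
      (hF.affine x (2*r)).cont.aestronglyMeasurable)
    have h2 := h1.comp_smul (R := (1/2 : ℝ)) (by norm_num)
    refine h2.congr (Eventually.of_forall fun y => ?_)
    simp only [smul_smul]
    congr 4; ring
  have h3 : ∫ y, F (x + r • y) * (1 + ‖y‖) ^ k * gw y ≤
      ∫ y, c * (F (x + r • y) * gw ((1/2 : ℝ) • y)) := by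
    refine integral_mono ?_ (hi.const_mul _) fun y => ?_
    · exact ((hF.affine x r).pb.mul (((PB.const 1).add PB.norm).pow k)).integrable_gw
        (((hF.affine x r).cont.mul (by fun_prop)).aestronglyMeasurable)
    · have h4 := pow_le_exp_quarter k (norm_nonneg y)
      have h5 : (1 + ‖y‖) ^ k * gw y ≤ c * gw ((1/2 : ℝ) • y) := by
        refine (mul_le_mul_of_nonneg_right h4 (gw_pos y).le).trans ?_
        rw [hc, mul_assoc]
        refine mul_le_mul_of_nonneg_left ?_ (by positivity)
        simp only [gw]
        rw [← Real.exp_add, norm_smul]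
        refine Real.exp_le_exp.2 ?_
        norm_num
        nlinarith [sq_nonneg ‖y‖]
      calc F (x + r • y) * (1 + ‖y‖) ^ k * gw y = F (x + r • y) * ((1 + ‖y‖) ^ k * gw y) := by ring
        _ ≤ F (x + r • y) * (c * gw ((1/2 : ℝ) • y)) := by
          exact mul_le_mul_of_nonneg_left h5 (h0 _)
        _ = _ := by ring
  rw [integral_const_mul] at h3
  have hz : 0 < (gZ n)⁻¹ := inv_pos.2 gZ_pos
  calc (gZ n)⁻¹ * ∫ y, F (x + r • y) * (1 + ‖y‖) ^ k * gw y
      ≤ (gZ n)⁻¹ * (c * ∫ y, F (x + r • y) * gw ((1/2 : ℝ) • y)) := by gcongr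
    _ = _ := by field_simp

/-- Weighted energy bound. -/
lemma weight_grad (n k : ℕ) : ∃ C : ℝ, 0 < C ∧ ∀ (u v : Euc n → ℝ), Sol u v → ∀ (r : ℝ) (x : Euc n),
    0 < r → r ^ 2 * ∫ y, en u v (x + r • y) * (1 + ‖y‖) ^ k ∂(gam n) ≤ C * HH u v r x := by
  obtain ⟨C, hC, hw⟩ := weight (n := n) k
  refine ⟨3 * C, by positivity, fun u v h r x hr => ?_⟩
  have h1 := hw (en u v) (h.tu.en h.tv) (fun z => add_nonneg (add_nonneg (gsq_nonneg _ _)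
    (gsq_nonneg _ _)) (by positivity)) r x
  have h2 := h.D_le_H (show 0 < 2 * r by linarith) x
  have h3 := h.H_upper hr (show r ≤ 2 * r by linarith) x
  rw [mul_div_cancel_right₀ _ hr.ne'] at h3
  rw [DD] at h2
  have hH := h.H_pos r x
  have h4 : HH u v (2 * r) x ≤ 12 * HH u v r x := by nlinarith [exp1_le]
  have h5 : r ^ 2 * avg (en u v) (2 * r) x ≤ 3 * HH u v r x := by nlinarith
  calc _ ≤ r ^ 2 * (C * avg (en u v) (2 * r) x) := by gcongr
    _ = C * (r ^ 2 * avg (en u v) (2 * r) x) := by ring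
    _ ≤ C * (3 * HH u v r x) := by gcongr
    _ = _ := by ring

/-! ### Lower bounds at points of `{u = v}` and the Keller–Osserman estimate -/

lemma int_weight (k : ℕ) : Integrable (fun y : Euc n => (1 + ‖y‖) ^ k) (gam n) :=
  (((PB.const 1).add PB.norm).pow k).integrable (by fun_prop)

lemma one_le_weight (k : ℕ) : 1 ≤ ∫ y : Euc n, (1 + ‖y‖) ^ k ∂(gam n) := by
  have h : ∫ _ : Euc n, (1:ℝ) ∂(gam n) ≤ ∫ y : Euc n, (1 + ‖y‖) ^ k ∂(gam n) :=
    integral_mono (integrable_const _) (int_weight k) fun y =>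
      one_le_pow₀ (by linarith [norm_nonneg y])
  simpa using h

lemma Sol.s_le {u v : Euc n → ℝ} (h : Sol u v) {r : ℝ} (hr : 0 < r) (x y : Euc n) :
    u (x + r • y) + v (x + r • y) ≤ 12 * (1 + ‖y‖) * √(HH u v r x) := by
  have := h.u_le hr x y; have := h.v_le hr x y; linarith

lemma Sol.s_cube {u v : Euc n → ℝ} (h : Sol u v) {r : ℝ} (hr : 0 < r) (x : Euc n) :
    avg (fun z => (u z + v z) ^ 3) r x ≤
      (12 ^ 3 * ∫ y : Euc n, (1 + ‖y‖) ^ 3 ∂(gam n)) * √(HH u v r x) ^ 3 := by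
  have h1 : avg (fun z => (u z + v z) ^ 3) r x ≤
      ∫ y : Euc n, (12 ^ 3 * √(HH u v r x) ^ 3) * (1 + ‖y‖) ^ 3 ∂(gam n) := by
    refine integral_mono (((h.tu.add h.tv).pow 3).affine x r).int ((int_weight 3).const_mul _)
      fun y => ?_
    have h2 := pow_le_pow_left₀ (add_pos (h.pu _) (h.pv _)).le (h.s_le hr x y) 3
    refine h2.trans (le_of_eq ?_)
    ring
  rw [integral_const_mul] at h1
  linarith

/-- The mean of `u + v` controls the height. -/
lemma mean_lower (n : ℕ) : ∃ c : ℝ, 0 < c ∧ ∀ (u v : Euc n → ℝ), Sol u v → ∀ (r : ℝ) (x : Euc n),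
    0 < r → c * √(HH u v r x) ≤ avg (fun z => u z + v z) r x := by
  set M := 12 ^ 3 * ∫ y : Euc n, (1 + ‖y‖) ^ 3 ∂(gam n) with hM
  have hM0 : 0 < M := by have := one_le_weight (n := n) 3; positivity
  refine ⟨1 / M, by positivity, fun u v h r x hr => ?_⟩
  have hH := h.H_pos r x
  set q := √(HH u v r x) with hq
  have hq0 : 0 < q := Real.sqrt_pos.2 hH
  have hq2 : HH u v r x = q ^ 2 := (Real.sq_sqrt hH.le).symm
  have hs := h.tu.add h.tv
  have h3 := h.s_cube hr x
  rw [← hM, ← hq] at h3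
  -- interpolation of `L²` between `L¹` and `L³`: `s² ≤ (Mq/2) s + s³ / (2Mq)`
  have h4 : HH u v r x ≤ avg (fun z => (M * q / 2) * (u z + v z) +
      (1 / (2 * M * q)) * (u z + v z) ^ 3) r x := by
    refine avg_mono (h.tu.nsq h.tv) (((Tmp.const _).mul hs).add ((Tmp.const _).mul (hs.pow 3)))
      (fun z => ?_) r x
    have hsz := add_pos (h.pu z) (h.pv z)
    have h5 : nsq u v z ≤ (u z + v z) ^ 2 := by
      have := h.pu z; have := h.pv z
      simp only [nsq]; nlinarith
    refine h5.trans ?_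
    set s := u z + v z
    have : 0 ≤ s / (2 * M * q) * (M * q - s) ^ 2 := by positivity
    have e : M * q / 2 * s + 1 / (2 * M * q) * s ^ 3 = s ^ 2 + s / (2 * M * q) * (M * q - s) ^ 2 := by
      field_simp; ring
    linarith
  rw [avg_add ((Tmp.const _).mul hs) ((Tmp.const _).mul (hs.pow 3)), avg_const_mul,
    avg_const_mul] at h4
  have h6 : 1 / (2 * M * q) * avg (fun z => (u z + v z) ^ 3) r x ≤ 1 / (2 * M * q) * (M * q ^ 3) := by
    gcongr
  have e : 1 / (2 * M * q) * (M * q ^ 3) = q ^ 2 / 2 := by field_simp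
  rw [e] at h6
  rw [hq2] at h4
  have h7 : q * q ≤ q * (M * avg (fun z => u z + v z) r x) := by nlinarith
  have h8 := le_of_mul_le_mul_left h7 hq0
  rw [div_mul_eq_mul_div, div_le_iff₀ hM0]
  linarith

lemma Sol.lap_s {u v : Euc n → ℝ} (h : Sol u v) :
    lap (fun z => u z + v z) = fun z => u z * v z * (u z + v z) := by
  rw [lap_add h.tu h.tv]; ext z; rw [h.eu, h.ev]; ring

/-- At scales where `r² H ≤ 1` the value of `u + v` at the centre controls the height. -/
lemma unit_lower (n : ℕ) : ∃ c : ℝ, 0 < c ∧ ∀ (u v : Euc n → ℝ), Sol u v → ∀ (r : ℝ) (z : Euc n),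
    0 < r → r ^ 2 * HH u v r z ≤ 1 → c * √(HH u v r z) ≤ u z + v z := by
  obtain ⟨c, hc, hmean⟩ := mean_lower n
  set M := 12 ^ 3 * ∫ y : Euc n, (1 + ‖y‖) ^ 3 ∂(gam n) with hM
  have hM0 : 0 < M := by have := one_le_weight (n := n) 3; positivity
  set η := min 1 (c / (4 * M)) with hη
  have hη0 : 0 < η := lt_min one_pos (by positivity)
  have hη1 : η ≤ 1 := min_le_left _ _
  have hηM : M * η ≤ c / 4 := by
    have : η ≤ c / (4 * M) := min_le_right _ _
    calc M * η ≤ M * (c / (4 * M)) := by gcongr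
      _ = c / 4 := by field_simp
  refine ⟨c * η / 4, by positivity, fun u v h r z hr h1 => ?_⟩
  have hH := h.H_pos r z
  set q := √(HH u v r z) with hq
  have hq0 : 0 < q := Real.sqrt_pos.2 hH
  have hq2 : HH u v r z = q ^ 2 := (Real.sq_sqrt hH.le).symm
  have hs := h.tu.add h.tv
  have hlap : ∀ t ∈ Ioc 0 r, avg (lap fun z => u z + v z) t z ≤ M * q / r ^ 2 := by
    intro t ht
    have h2 : avg (lap fun z => u z + v z) t z ≤ avg (fun z => (u z + v z) ^ 3) t z := by
      refine avg_mono hs.lap (hs.pow 3) (fun w => ?_) t z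
      rw [h.lap_s]
      have := h.pu w; have := h.pv w
      have : u w * v w ≤ (u w + v w) ^ 2 := by nlinarith
      calc u w * v w * (u w + v w) ≤ (u w + v w) ^ 2 * (u w + v w) := by gcongr
        _ = _ := by ring
    have h3 := h.s_cube ht.1 z
    rw [← hM] at h3
    have h4 : √(HH u v t z) ≤ q := Real.sqrt_le_sqrt (h.H_mono z ht.1.le hr.le ht.2)
    calc _ ≤ M * √(HH u v t z) ^ 3 := h2.trans h3
      _ ≤ M * q ^ 3 := by gcongr
      _ = M * q * q ^ 2 := by ring
      _ ≤ M * q * (1 / r ^ 2) := by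
        refine mul_le_mul_of_nonneg_left ?_ (by positivity)
        rw [le_div_iff₀ (by positivity)]; rw [hq2] at h1; linarith
      _ = _ := by ring
  have hanti : AntitoneOn (fun t => avg (fun z => u z + v z) t z - M * q / r ^ 2 * (t ^ 2 / 2))
      (Icc 0 r) := by
    have hd : ∀ t, HasDerivAt (fun t => avg (fun z => u z + v z) t z - M * q / r ^ 2 * (t ^ 2 / 2))
      (t * avg (lap fun z => u z + v z) t z - M * q / r ^ 2 * t) t := fun t => by
      refine ((avg_deriv hs t z).sub ((((hasDerivAt_id t).pow 2).div_const 2).const_mul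
        (M * q / r ^ 2))).congr_deriv ?_
      simp
    refine antitoneOn_of_deriv_nonpos (convex_Icc 0 r)
      (fun t _ => (hd t).continuousAt.continuousWithinAt)
      (fun t _ => (hd t).differentiableAt.differentiableWithinAt) fun t ht => ?_
    rw [interior_Icc] at ht
    rw [(hd t).deriv]
    have := hlap t ⟨ht.1, ht.2.le⟩
    nlinarith [ht.1]
  have hηr : η * r ≤ r := by nlinarith
  have hηr0 : 0 < η * r := by positivity
  have h5 := hanti (left_mem_Icc.2 hr.le) ⟨hηr0.le, hηr⟩ hηr0.le
  simp only [avg_zero] at h5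
  have h6 := hmean u v h (η * r) z hηr0
  have h7 := h.H_upper hηr0 hηr z
  have e7 : r / (η * r) = 1 / η := by field_simp
  have h8 : η * q / 2 ≤ √(HH u v (η * r) z) := by
    refine Real.le_sqrt_of_sq_le ?_
    rw [e7, hq2] at h7
    have hp := h.H_pos (η * r) z
    have : q ^ 2 ≤ 3 * (1 / η) ^ 2 * HH u v (η * r) z := by
      refine h7.trans ?_
      have := exp1_le; gcongr
    have h9 : η ^ 2 * q ^ 2 ≤ η ^ 2 * (3 * (1 / η) ^ 2 * HH u v (η * r) z) := by gcongr
    have e9 : η ^ 2 * (3 * (1 / η) ^ 2 * HH u v (η * r) z) = 3 * HH u v (η * r) z := by field_simp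
    rw [e9] at h9
    nlinarith
  have e5 : M * q / r ^ 2 * ((η * r) ^ 2 / 2) = M * η * (η * q) / 2 := by field_simp
  rw [e5] at h5
  have hp : 0 < η * q := by positivity
  nlinarith [mul_le_mul_of_nonneg_left h8 hc.le, mul_le_mul_of_nonneg_right hηM hp.le]

/-- Gaussian averages of subharmonic functions dominate the value at the centre. -/
lemma avg_ge {F : Euc n → ℝ} (hF : Tmp F) (hl : ∀ z, 0 ≤ lap F z) {r : ℝ} (hr : 0 ≤ r) (x : Euc n) :
    F x ≤ avg F r x := by
  have hm : MonotoneOn (fun r => avg F r x) (Ici 0) := by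
    refine monotoneOn_of_deriv_nonneg (convex_Ici 0)
      (fun t _ => (avg_deriv hF t x).continuousAt.continuousWithinAt)
      (fun t _ => (avg_deriv hF t x).differentiableAt.differentiableWithinAt) fun t ht => ?_
    rw [(avg_deriv hF t x).deriv]
    exact mul_nonneg (interior_subset ht) (avg_nonneg hl t x)
  have := hm self_mem_Ici hr hr
  simpa [avg_zero] using this

lemma Sol.lu {u v : Euc n → ℝ} (h : Sol u v) (z : Euc n) : 0 ≤ lap u z := by
  rw [h.eu]; have := h.pu z; positivity

lemma Sol.lv {u v : Euc n → ℝ} (h : Sol u v) (z : Euc n) : 0 ≤ lap v z := h.symm.lu z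

/-- Poincaré at scale `r` about `x`. -/
lemma poincare_avg {f : Euc n → ℝ} (hf : Tmp f) (r : ℝ) (x : Euc n) :
    avg (fun z => f z ^ 2) r x - avg f r x ^ 2 ≤ r ^ 2 * avg (gsq f) r x := by
  have h := poincare (hf.affine x r)
  simp only [pd_affine hf.diff] at h
  rw [← integral_finsetSum _ fun i _ => (((Tmp.const r).mul ((hf.pd i).affine x r)).pow 2).int] at h
  have e : ∀ y, ∑ i, (r * pd i f (x + r • y)) ^ 2 = r ^ 2 * gsq f (x + r • y) := fun y => by
    simp only [gsq, Finset.mul_sum, mul_pow]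
  simp only [e, integral_const_mul] at h
  exact h

lemma avg_sq_le {f : Euc n → ℝ} (hf : Tmp f) (r : ℝ) (x : Euc n) :
    avg f r x ^ 2 ≤ avg (fun z => f z ^ 2) r x :=
  sq_integral_le (hf.affine x r).int ((hf.pow 2).affine x r).int

/-- The covariance of `u` and `v` is controlled by the energy. -/
lemma Sol.cov {u v : Euc n → ℝ} (h : Sol u v) (r : ℝ) (x : Euc n) :
    2 * (avg u r x * avg v r x) - DD u v r x ≤ 2 * avg (fun z => u z * v z) r x := by
  have hs := h.tu.add h.tv
  have hv : 0 ≤ avg (fun z => (u z + v z) ^ 2) r x - avg (fun z => u z + v z) r x ^ 2 := by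
    linarith [avg_sq_le hs r x]
  have e1 : (fun z => (u z + v z) ^ 2) = fun z => (u z ^ 2 + v z ^ 2) + 2 * (u z * v z) := by
    ext z; ring
  rw [e1, avg_add ((h.tu.pow 2).add (h.tv.pow 2)) ((Tmp.const 2).mul (h.tu.mul h.tv)),
    avg_add (h.tu.pow 2) (h.tv.pow 2), avg_const_mul, avg_add h.tu h.tv] at hv
  have h1 := poincare_avg h.tu r x
  have h2 := poincare_avg h.tv r x
  have h3 := h.D_eq r x
  have h4 := P_nonneg (u := u) (v := v) r x
  nlinarith

/-- Jensen's inequality for `u v`. -/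
lemma Sol.uv_sq {u v : Euc n → ℝ} (h : Sol u v) (r : ℝ) (x : Euc n) :
    r ^ 2 * avg (fun z => u z * v z) r x ^ 2 ≤ PP u v r x := by
  have := avg_sq_le (h.tu.mul h.tv) r x
  simp only [mul_pow] at this
  rw [PP]; gcongr

/-- The natural scale at `z`, at which `t² H(t; z) = 1`. -/
lemma Sol.exists_unit {u v : Euc n → ℝ} (h : Sol u v) {ρ : ℝ} (hρ : 0 < ρ) (z : Euc n)
    (h1 : 1 ≤ ρ ^ 2 * HH u v ρ z) : ∃ t, 0 < t ∧ t ≤ ρ ∧ t ^ 2 * HH u v t z = 1 := by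
  have hc : Continuous (fun t => t ^ 2 * HH u v t z) :=
    (continuous_id.pow 2).mul (continuous_iff_continuousAt.2 fun t => (h.H_deriv t z).continuousAt)
  obtain ⟨t, ht, ht1⟩ := intermediate_value_Icc hρ.le hc.continuousOn
    (show (1:ℝ) ∈ Icc _ _ from ⟨by simp, h1⟩)
  refine ⟨t, lt_of_le_of_ne ht.1 ?_, ht.2, ht1⟩
  rintro rfl
  simp at ht1

/-- At a point of `{u = v}` the frequency is bounded below above the unit scale. -/
lemma freq_lower (n : ℕ) : ∃ ν : ℝ, 0 < ν ∧ ν ≤ 1 ∧ ∀ (u v : Euc n → ℝ), Sol u v →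
    ∀ (ρ : ℝ) (z : Euc n), 0 < ρ → u z = v z → 1 ≤ ρ ^ 2 * HH u v ρ z → ν ≤ NN u v ρ z := by
  obtain ⟨c, hc, hunit⟩ := unit_lower n
  set a := c ^ 2 / 8 with ha
  have ha0 : 0 < a := by positivity
  refine ⟨min 1 (min (2 * a) (a ^ 2)), by positivity, min_le_left _ _, fun u v h ρ z hρ huv h1 => ?_⟩
  obtain ⟨t, ht0, htρ, ht1⟩ := h.exists_unit hρ z h1
  refine le_trans ?_ (h.N_mono z ht0 hρ htρ)
  simp only
  have h2 := hunit u v h t z ht0 ht1.le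
  have hH := h.H_pos t z
  by_contra hcon
  push Not at hcon
  have hcon1 : NN u v t z < 2 * a := hcon.trans_le ((min_le_right _ _).trans (min_le_left _ _))
  have hcon2 : NN u v t z < a ^ 2 := hcon.trans_le ((min_le_right _ _).trans (min_le_right _ _))
  have hm : 2 * a * HH u v t z ≤ u z * v z := by
    rw [← huv] at h2 ⊢
    have h3 : (c * √(HH u v t z)) ^ 2 ≤ (u z + u z) ^ 2 := by gcongr
    rw [mul_pow, Real.sq_sqrt hH.le] at h3
    rw [ha]; linarith
  have hmm : u z * v z ≤ avg u t z * avg v t z :=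
    mul_le_mul (avg_ge h.tu h.lu ht0.le z) (avg_ge h.tv h.lv ht0.le z) (h.pv z).le
      ((h.pu z).le.trans (avg_ge h.tu h.lu ht0.le z))
  have h4 := h.cov t z
  have h5 := h.D_eq_NH t z
  have h6 : a * HH u v t z ≤ avg (fun z => u z * v z) t z := by nlinarith
  have h7 := h.uv_sq t z
  have h8 : t ^ 2 * (a * HH u v t z) ^ 2 ≤ PP u v t z := le_trans (by gcongr) h7
  have e8 : t ^ 2 * (a * HH u v t z) ^ 2 = a ^ 2 * HH u v t z * (t ^ 2 * HH u v t z) := by ring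
  rw [e8, ht1, mul_one] at h8
  have h9 := h.D_eq t z
  have h10 : 0 ≤ t ^ 2 * avg (gsq u) t z := mul_nonneg (sq_nonneg _) (avg_nonneg (gsq_nonneg u) _ _)
  have h11 : 0 ≤ t ^ 2 * avg (gsq v) t z := mul_nonneg (sq_nonneg _) (avg_nonneg (gsq_nonneg v) _ _)
  nlinarith

/-- The second-order test at an interior maximum. -/
lemma max_test {φ : Euc n → ℝ} (hφ : ContDiff ℝ (⊤ : ℕ∞) φ) {x : Euc n} (hm : IsLocalMax φ x)
    (i : Fin n) : pd i φ x = 0 ∧ pd i (pd i φ) x ≤ 0 := by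
  have h0 : pd i φ x = 0 := by rw [pd, hm.fderiv_eq_zero]; simp
  refine ⟨h0, ?_⟩
  set e := EuclideanSpace.single i (1:ℝ)
  have hl : ∀ t : ℝ, HasDerivAt (fun t : ℝ => x + t • e) e t := fun t => by
    simpa using ((hasDerivAt_id t).smul_const e).const_add x
  have hd : ∀ (f : Euc n → ℝ), Differentiable ℝ f → ∀ t : ℝ,
      HasDerivAt (fun t : ℝ => f (x + t • e)) (pd i f (x + t • e)) t := fun f hf t =>
    HasFDerivAt.comp_hasDerivAt (f := fun t : ℝ => x + t • e) t (hf _).hasFDerivAt (hl t)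
  have h1 := hd φ (smooth_diff hφ)
  have h2 := hd (pd i φ) (smooth_diff (smooth_pd hφ i))
  set g : ℝ → ℝ := fun t => φ (x + t • e) with hg
  have dg : deriv g = fun t => pd i φ (x + t • e) := by ext t; exact (h1 t).deriv
  have ddg : deriv (deriv g) 0 = pd i (pd i φ) x := by rw [dg, (h2 0).deriv]; simp
  have hmg : IsLocalMax g 0 := by
    have hc : ContinuousAt (fun t : ℝ => x + t • e) 0 := (hl 0).continuousAt
    have : Tendsto (fun t : ℝ => x + t • e) (𝓝 0) (𝓝 x) := by
      have := hc.tendsto; simpa using this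
    have := this.eventually hm
    filter_upwards [this] with t ht
    simpa [hg] using ht
  by_contra hcon
  push Not at hcon
  rw [← ddg] at hcon
  have hmin := isLocalMin_of_deriv_deriv_pos hcon (by rw [dg]; simpa using h0) (h1 0).continuousAt
  have hconst : g =ᶠ[𝓝 0] fun _ => g 0 := by
    filter_upwards [hmg, hmin] with t h1 h2
    exact le_antisymm h1 h2
  have h3 : deriv g =ᶠ[𝓝 0] fun _ => 0 := by
    have := hconst.deriv
    simpa using this
  have := h3.deriv_eq
  simp only [deriv_const] at this
  linarith

/-- Keller–Osserman bound for the smaller component. -/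
lemma Sol.KO {u v : Euc n → ℝ} (h : Sol u v) {d : ℝ} (hd : 0 < d) (y : Euc n)
    (hle : ∀ x ∈ ball y d, v x ≤ u x) : v y ≤ (2 * n + 8) / d := by
  have tq : Tmp (fun x : Euc n => d ^ 2 - ∑ i, (x i - y i) ^ 2) :=
    (Tmp.const _).sub (Tmp.sum _ fun i => ((Tmp.coord i).sub (Tmp.const _)).pow 2)
  set q : Euc n → ℝ := fun x => d ^ 2 - ∑ i, (x i - y i) ^ 2 with hq
  have hqd : ∀ x, q x = d ^ 2 - dist x y ^ 2 := fun x => by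
    rw [dist_eq_norm, normsq_eq]; simp [hq]
  have pq : ∀ i, pd i q = fun x => -(2 * (x i - y i)) := by
    intro i
    have t1 : ∀ j, Tmp (fun x : Euc n => x j - y j) := fun j => (Tmp.coord j).sub (Tmp.const _)
    rw [hq, pd_sub (Tmp.const _).diff (Tmp.sum _ fun j => (t1 j).pow 2).diff,
      pd_sum _ (fun j => ((t1 j).pow 2).diff), pd_const]
    ext x
    simp only [pd_sq (t1 _), pd_sub (Tmp.coord _).diff (Tmp.const (y _)).diff, pd_coord, pd_const]
    simp
  have ppq : ∀ i x, pd i (pd i q) x = -2 := by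
    intro i x
    have t1 : Tmp (fun x : Euc n => x i - y i) := (Tmp.coord i).sub (Tmp.const _)
    have : pd i q = fun x => (-2) * (x i - y i) := by rw [pq]; ext x; ring
    rw [this, pd_mul (Tmp.const _).diff t1.diff, pd_sub (Tmp.coord _).diff (Tmp.const (y _)).diff,
      pd_coord, pd_const, pd_const]
    simp
  have tφ : Tmp (fun x => v x * q x) := h.tv.mul tq
  obtain ⟨x, hx, hmax⟩ := (isCompact_closedBall y d).exists_isMaxOn
    ⟨y, mem_closedBall_self hd.le⟩ tφ.cont.continuousOn
  have hy : v y * d ^ 2 ≤ v x * q x := by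
    have := hmax (mem_closedBall_self hd.le)
    simp only [Set.mem_ofPred_eq, hqd y, dist_self] at this
    simpa using this
  have hqx : 0 < q x := by
    have : 0 < v x * q x := lt_of_lt_of_le (by have := h.pv y; positivity) hy
    exact pos_of_mul_pos_right this (h.pv x).le
  have hxb : x ∈ ball y d := by
    rw [mem_ball]
    rw [hqd] at hqx
    have : dist x y ^ 2 < d ^ 2 := by linarith
    exact lt_of_pow_lt_pow_left₀ 2 hd.le this
  have hloc : IsLocalMax (fun x => v x * q x) x :=
    hmax.isLocalMax (mem_of_superset (isOpen_ball.mem_nhds hxb) ball_subset_closedBall)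
  have hm := max_test tφ.1 hloc
  have hlapφ : lap (fun x => v x * q x) x ≤ 0 := Finset.sum_nonpos fun i _ => (hm i).2
  rw [lap_mul h.tv tq] at hlapφ
  have lq : lap q x = -(2 * n) := by
    rw [lap_eq]; simp only [ppq]; simp; ring
  have hgr : ∀ i, pd i v x * q x = 2 * v x * (x i - y i) := by
    intro i
    have := (hm i).1
    rw [pd_mul h.tv.diff tq.diff, pq] at this
    linarith
  have hcross : (∑ i, pd i v x * pd i q x) * q x = -(4 * v x * dist x y ^ 2) := by
    rw [dist_eq_norm, normsq_eq, Finset.mul_sum, Finset.sum_mul, ← Finset.sum_neg_distrib]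
    refine Finset.sum_congr rfl fun i _ => ?_
    rw [pq]
    simp only [PiLp.sub_apply]
    linear_combination (-(2 * (x i - y i))) * hgr i
  have hv := h.pv x
  have hlv : v x ^ 3 ≤ lap v x := by
    rw [h.ev]
    have := hle x hxb
    have : v x ^ 2 ≤ u x ^ 2 := by gcongr
    calc v x ^ 3 = v x * v x ^ 2 := by ring
      _ ≤ _ := by gcongr
  simp only [lq] at hlapφ
  have h1 : v x ^ 3 * q x ^ 2 ≤ 8 * v x * dist x y ^ 2 + 2 * n * v x * q x := by
    have h2 : v x ^ 3 * q x * q x ≤ lap v x * q x * q x := by gcongr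
    have h3 : (lap v x * q x + v x * -(2 * n) + 2 * ∑ i, pd i v x * pd i q x) * q x ≤ 0 :=
      mul_nonpos_of_nonpos_of_nonneg hlapφ hqx.le
    nlinarith
  have h4 : (v x * q x) ^ 2 ≤ (2 * n + 8) * d ^ 2 := by
    have h5 : v x * (v x * q x) ^ 2 ≤ v x * (8 * dist x y ^ 2 + 2 * n * q x) := by nlinarith
    have h6 := le_of_mul_le_mul_left h5 hv
    rw [hqd] at h6 ⊢
    have : (0:ℝ) ≤ n := by positivity
    have h7 : 0 < d ^ 2 - dist x y ^ 2 := by rw [← hqd]; exact hqx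
    nlinarith [sq_nonneg (dist x y)]
  have h8 : v x * q x ≤ (2 * n + 8) * d := by
    refine le_of_sq_le_sq (h4.trans ?_) (by positivity)
    rw [mul_pow]
    have : (0:ℝ) ≤ n := by positivity
    gcongr
    nlinarith
  rw [le_div_iff₀ hd]
  have h9 : v y * d * d ≤ (2 * n + 8) * d := by nlinarith
  exact le_of_mul_le_mul_right h9 hd

/-- Away from `{u = v}` the smaller component is small. -/
lemma Sol.KO_min {u v : Euc n → ℝ} (h : Sol u v) {d : ℝ} (hd : 0 < d) (y : Euc n)
    (hne : ∀ x ∈ ball y d, u x ≠ v x) : min (u y) (v y) ≤ (2 * n + 8) / d := by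
  have hpc : IsPreconnected (ball y d) := (convex_ball y d).isPreconnected
  rcases lt_or_gt_of_ne (hne y (mem_ball_self hd)) with hlt | hlt
  · refine (min_le_left _ _).trans (h.symm.KO hd y fun x hx => ?_)
    by_contra hcon
    push Not at hcon
    obtain ⟨w, hw, hw'⟩ := hpc.intermediate_value₂ (mem_ball_self hd) hx h.tu.cont.continuousOn
      h.tv.cont.continuousOn hlt.le hcon.le
    exact hne w hw hw'
  · refine (min_le_right _ _).trans (h.KO hd y fun x hx => ?_)
    by_contra hcon
    push Not at hcon
    obtain ⟨w, hw, hw'⟩ := hpc.intermediate_value₂ hx (mem_ball_self hd) h.tu.cont.continuousOn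
      h.tv.cont.continuousOn hcon.le hlt.le
    exact hne w hw hw'

/-- Dichotomy: at scale `ρ` around `Y = x + r y`, either both components are small compared with
`√H(r; x)` or the smaller one is of order at most `1 / ρ`. -/
lemma dicho (n : ℕ) : ∃ ν : ℝ, 0 < ν ∧ ν ≤ 1 ∧ ∀ (u v : Euc n → ℝ), Sol u v →
    ∀ (r ρ : ℝ) (x y : Euc n), 0 < ρ → ρ ≤ r →
    (max (u (x + r • y)) (v (x + r • y)) ≤ 16 * (1 + ‖y‖) * (ρ / r) ^ ν * √(HH u v r x)) ∨
    min (u (x + r • y)) (v (x + r • y)) ≤ (2 * n + 8) / ρ := by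
  obtain ⟨ν, hν, hν1, hfreq⟩ := freq_lower n
  refine ⟨ν, hν, hν1, fun u v h r ρ x y hρ hρr => ?_⟩
  have hr : 0 < r := hρ.trans_le hρr
  set Y := x + r • y with hY
  by_cases hne : ∀ z ∈ ball Y ρ, u z ≠ v z
  · exact Or.inr (h.KO_min hρ Y hne)
  push Not at hne
  obtain ⟨z, hz, huv⟩ := hne
  have h0 : 0 ≤ ‖y‖ := norm_nonneg y
  have hzY : dist Y z ≤ ρ := by rw [dist_comm]; exact (mem_ball.1 hz).le
  have h1 : HH u v ρ Y ≤ 9 * HH u v ρ z := by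
    refine (h.H_translate' hρ z Y).trans ?_
    have := h.H_pos ρ z
    refine mul_le_mul_of_nonneg_right (le_trans (Real.exp_le_exp.2 ?_) exp2_le) this.le
    rw [div_le_iff₀ hρ]; linarith
  have h2 := h.nsq_le hρ.le Y
  by_cases hun : 1 ≤ ρ ^ 2 * HH u v ρ z
  · left
    have hN := hfreq u v h ρ z hρ huv hun
    set R := r * (1 + ‖y‖) with hR
    have hrR : r ≤ R := by nlinarith
    have hR0 : 0 < R := hr.trans_le hrR
    have h3 := h.H_lower hρ (hρr.trans hrR) z hN
    have h4 : HH u v R z ≤ 9 * HH u v R x := by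
      refine (h.H_translate' hR0 x z).trans ?_
      have := h.H_pos R x
      refine mul_le_mul_of_nonneg_right (le_trans (Real.exp_le_exp.2 ?_) exp2_le) this.le
      rw [div_le_iff₀ hR0]
      have h5 := dist_triangle z Y x
      have h6 : dist Y x = r * ‖y‖ := by
        rw [hY, dist_eq_norm, add_sub_cancel_left, norm_smul, Real.norm_eq_abs, abs_of_pos hr]
      rw [dist_comm] at hzY
      nlinarith
    have h5 := h.H_upper hr hrR x
    have e1 : R / r = 1 + ‖y‖ := by rw [hR]; field_simp
    rw [e1] at h5
    have hH := h.H_pos r x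
    have h6 : HH u v R z ≤ 27 * (1 + ‖y‖) ^ 2 * HH u v r x := by
      have : Real.exp 1 * (1 + ‖y‖) ^ 2 * HH u v r x ≤ 3 * (1 + ‖y‖) ^ 2 * HH u v r x := by
        have := exp1_le; gcongr
      linarith
    have h7 : 1 ≤ (ρ / r) ^ (2 * ν) * (R / ρ) ^ (2 * ν) := by
      rw [← Real.mul_rpow (by positivity) (by positivity)]
      refine Real.one_le_rpow ?_ (by positivity)
      have : ρ / r * (R / ρ) = R / r := by field_simp
      rw [this, e1]; linarith
    have hHz := h.H_pos ρ z
    have h8 : HH u v ρ z ≤ (ρ / r) ^ (2 * ν) * HH u v R z := by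
      calc HH u v ρ z ≤ ((ρ / r) ^ (2 * ν) * (R / ρ) ^ (2 * ν)) * HH u v ρ z :=
            le_mul_of_one_le_left hHz.le h7
        _ = (ρ / r) ^ (2 * ν) * ((R / ρ) ^ (2 * ν) * HH u v ρ z) := by ring
        _ ≤ _ := by gcongr
    have h9 : u Y ^ 2 + v Y ^ 2 ≤ 243 * ((ρ / r) ^ (2 * ν) * ((1 + ‖y‖) ^ 2 * HH u v r x)) := by
      have : (ρ / r) ^ (2 * ν) * HH u v R z ≤
        (ρ / r) ^ (2 * ν) * (27 * (1 + ‖y‖) ^ 2 * HH u v r x) := by gcongr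
      linarith
    have e2 : (16 * (1 + ‖y‖) * (ρ / r) ^ ν * √(HH u v r x)) ^ 2 =
        256 * ((ρ / r) ^ (2 * ν) * ((1 + ‖y‖) ^ 2 * HH u v r x)) := by
      have : (ρ / r) ^ (2 * ν) = ((ρ / r) ^ ν) ^ 2 := by
        rw [mul_comm 2 ν, Real.rpow_mul (by positivity)]; norm_cast
      rw [this, mul_pow, Real.sq_sqrt hH.le]; ring
    have hp : 0 ≤ (ρ / r) ^ (2 * ν) * ((1 + ‖y‖) ^ 2 * HH u v r x) := by positivity
    refine max_le ?_ ?_ <;> refine le_of_sq_le_sq ?_ (by positivity) <;> rw [e2] <;>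
      nlinarith [sq_nonneg (u Y), sq_nonneg (v Y)]
  · right
    push Not at hun
    have h3 : u Y ^ 2 + v Y ^ 2 ≤ 9 * HH u v ρ z := h2.trans h1
    have hu := h.pu Y
    have h4 : (u Y * ρ) ^ 2 ≤ 3 ^ 2 := by
      rw [mul_pow]
      have : u Y ^ 2 * ρ ^ 2 ≤ 9 * HH u v ρ z * ρ ^ 2 := by
        gcongr; nlinarith [sq_nonneg (v Y)]
      nlinarith
    have h5 := abs_le_of_sq_le_sq h4 (by norm_num)
    refine (min_le_left _ _).trans ?_
    rw [le_div_iff₀ hρ]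
    have : (0:ℝ) ≤ n := by positivity
    linarith [(le_abs_self _).trans h5]

/-! ### The truncation estimate -/

/-- Green's identity for the Gaussian measure: the Laplacian is moved from `V` onto the test function
`Om` and the weight. -/
lemma green {V Om : Euc n → ℝ} (hV : Tmp V) (d0 : Differentiable ℝ Om) (b0 : PB Om)
    (d1 : ∀ i, Differentiable ℝ (pd i Om)) (b1 : ∀ i, PB (pd i Om))
    (b2 : ∀ i, PB (pd i (pd i Om))) :
    Integrable (fun y => ∑ i, V y * (pd i (pd i Om) y - 2 * (y i * pd i Om y) +
      (y i ^ 2 - 1) * Om y)) (gam n) ∧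
    ∫ y, lap V y * Om y ∂(gam n) =
      ∫ y, ∑ i, V y * (pd i (pd i Om) y - 2 * (y i * pd i Om y) + (y i ^ 2 - 1) * Om y)
        ∂(gam n) := by
  have m0 : Measurable Om := d0.continuous.measurable
  have mV : Measurable V := hV.cont.measurable
  have mc : ∀ i, Measurable (fun y : Euc n => y i) := fun i => (Tmp.coord i).cont.measurable
  have I1 : ∀ i, Integrable (fun y => V y * pd i (pd i Om) y) (gam n) := fun i =>
    (hV.pb.mul (b2 i)).integrable' (mV.mul (pd_measurable _ _))
  have I2 : ∀ i, Integrable (fun y => y i * (V y * pd i Om y)) (gam n) := fun i =>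
    ((PB.coord i).mul (hV.pb.mul (b1 i))).integrable' ((mc i).mul (mV.mul (pd_measurable _ _)))
  have I3 : ∀ i, Integrable (fun y => y i * (y i * (V y * Om y))) (gam n) := fun i =>
    ((PB.coord i).mul ((PB.coord i).mul (hV.pb.mul b0))).integrable'
      ((mc i).mul ((mc i).mul (mV.mul m0)))
  have I4 : Integrable (fun y => V y * Om y) (gam n) := (hV.pb.mul b0).integrable' (mV.mul m0)
  have I5 : ∀ i, Integrable (fun y => pd i V y * pd i Om y) (gam n) := fun i =>
    ((hV.pd i).pb.mul (b1 i)).integrable' ((pd_measurable _ _).mul (pd_measurable _ _))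
  have I6 : ∀ i, Integrable (fun y => pd i (pd i V) y * Om y) (gam n) := fun i =>
    (((hV.pd i).pd i).pb.mul b0).integrable' ((pd_measurable _ _).mul m0)
  have I7 : ∀ i, Integrable (fun y => y i * (pd i V y * Om y)) (gam n) := fun i =>
    ((PB.coord i).mul ((hV.pd i).pb.mul b0)).integrable'
      ((mc i).mul ((pd_measurable _ _).mul m0))
  have key : ∀ i, ∫ y, pd i (pd i V) y * Om y ∂(gam n) =
      ∫ y, V y * (pd i (pd i Om) y - 2 * (y i * pd i Om y) + (y i ^ 2 - 1) * Om y) ∂(gam n) := by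
    intro i
    have e1 := ibp (G := fun a => pd i V a * Om a) ((hV.pd i).diff.mul d0)
      ((hV.pd i).pb.mul b0) i (by
        rw [pd_mul (hV.pd i).diff d0]
        exact (((hV.pd i).pd i).pb.mul b0).add ((hV.pd i).pb.mul (b1 i)))
    have e2 := ibp (G := fun a => V a * pd i Om a) (hV.diff.mul (d1 i))
      (hV.pb.mul (b1 i)) i (by
        rw [pd_mul hV.diff (d1 i)]
        exact ((hV.pd i).pb.mul (b1 i)).add (hV.pb.mul (b2 i)))
    have p3 : pd i (fun a => a i * (V a * Om a)) =
        fun a => V a * Om a + a i * (pd i V a * Om a + V a * pd i Om a) := by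
      rw [pd_mul (g := fun a => V a * Om a) (Tmp.coord i).diff (hV.diff.mul d0), pd_mul hV.diff d0,
        pd_coord]
      simp
    have e3 := ibp (G := fun a => a i * (V a * Om a)) ((Tmp.coord i).diff.mul (hV.diff.mul d0))
      ((PB.coord i).mul (hV.pb.mul b0)) i (by
        rw [p3]
        exact (hV.pb.mul b0).add ((PB.coord i).mul (((hV.pd i).pb.mul b0).add (hV.pb.mul (b1 i)))))
    rw [pd_mul (hV.pd i).diff d0] at e1
    rw [pd_mul hV.diff (d1 i)] at e2
    rw [p3] at e3
    have s1 := integral_add (I6 i) (I5 i)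
    have s2 := integral_add (I5 i) (I1 i)
    have s3 : ∫ y, (V y * Om y + y i * (pd i V y * Om y + V y * pd i Om y)) ∂(gam n) =
        ∫ y, V y * Om y ∂(gam n) + (∫ y, y i * (pd i V y * Om y) ∂(gam n) +
          ∫ y, y i * (V y * pd i Om y) ∂(gam n)) := by
      have I8 : Integrable (fun y => y i * (pd i V y * Om y) + y i * (V y * pd i Om y)) (gam n) :=
        (I7 i).add (I2 i)
      rw [← integral_add (I7 i) (I2 i), ← integral_add I4 I8]
      congr 1; ext y; ring
    have s4 : ∫ y, V y * (pd i (pd i Om) y - 2 * (y i * pd i Om y) + (y i ^ 2 - 1) * Om y)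
        ∂(gam n) = ∫ y, V y * pd i (pd i Om) y ∂(gam n) -
          2 * ∫ y, y i * (V y * pd i Om y) ∂(gam n) +
          (∫ y, y i * (y i * (V y * Om y)) ∂(gam n) - ∫ y, V y * Om y ∂(gam n)) := by
      have I8 : Integrable (fun y => V y * pd i (pd i Om) y - 2 * (y i * (V y * pd i Om y)))
        (gam n) := (I1 i).sub ((I2 i).const_mul 2)
      have I9 : Integrable (fun y => y i * (y i * (V y * Om y)) - V y * Om y) (gam n) :=
        (I3 i).sub I4
      rw [← integral_const_mul, ← integral_sub (I1 i) ((I2 i).const_mul 2),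
        ← integral_sub (I3 i) I4, ← integral_add I8 I9]
      congr 1; ext y; ring
    rw [s4]
    linarith
  have I : ∀ i, Integrable (fun y => V y * (pd i (pd i Om) y - 2 * (y i * pd i Om y) +
      (y i ^ 2 - 1) * Om y)) (gam n) := by
    intro i
    have := ((I1 i).sub ((I2 i).const_mul 2)).add ((I3 i).sub I4)
    refine this.congr (Eventually.of_forall fun y => ?_)
    simp only [Pi.sub_apply, Pi.add_apply]; ring
  refine ⟨integrable_finsetSum _ fun i _ => I i, ?_⟩
  rw [integral_finsetSum _ fun i _ => I i, ← Finset.sum_congr rfl fun i _ => key i,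
    ← integral_finsetSum _ fun i _ => I6 i]
  simp only [lap_eq, Finset.sum_mul]

lemma lap_affine {f : Euc n → ℝ} (hf : Tmp f) (a : Euc n) (r : ℝ) :
    lap (fun y => f (a + r • y)) = fun y => r ^ 2 * lap f (a + r • y) := by
  ext y
  simp only [lap_eq, Finset.mul_sum]
  refine Finset.sum_congr rfl fun i _ => ?_
  rw [pd_affine hf.diff]
  have : pd i (fun y => r * pd i f (a + r • y)) y = r * pd i (fun y => pd i f (a + r • y)) y := by
    rw [pd_mul (Tmp.const r).diff (((hf.pd i).affine a r).diff), pd_const]; simp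
  rw [this, pd_affine (hf.pd i).diff]; ring

lemma gsq_affine {f : Euc n → ℝ} (hf : Tmp f) (a : Euc n) (r : ℝ) (y : Euc n) :
    gsq (fun y => f (a + r • y)) y = r ^ 2 * gsq f (a + r • y) := by
  simp only [gsq, Finset.mul_sum]
  refine Finset.sum_congr rfl fun i _ => ?_
  rw [pd_affine hf.diff]; ring

/-- If `v` is small wherever `u > t`, then `Δv` tested against `(u - t)₊³` is small: by `green` the
Laplacian falls on the test function, which is supported where `v` is small. -/
lemma trunc (n m : ℕ) : ∃ C : ℝ, 0 < C ∧ ∀ (u v : Euc n → ℝ), Sol u v → ∀ (r t B : ℝ) (x : Euc n),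
    0 < r → 0 < t → 0 ≤ B →
    (∀ y, t < u (x + r • y) → v (x + r • y) ≤ B * (1 + ‖y‖) ^ m) →
    r ^ 2 * ∫ y, lap v (x + r • y) * max (u (x + r • y) - t) 0 ^ 3 ∂(gam n) ≤
      C * B * √(HH u v r x) * HH u v r x := by
  obtain ⟨C, hC, hw⟩ := weight_grad n (m + 1)
  refine ⟨54 * C + 864 * ∫ y : Euc n, (1 + ‖y‖) ^ (m + 5) ∂(gam n), ?_, ?_⟩
  · have := one_le_weight (n := n) (m + 5); positivity
  intro u v h r t B x hr ht hB hbd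
  have hH := h.H_pos r x
  set q := √(HH u v r x) with hq
  have hq0 : 0 < q := Real.sqrt_pos.2 hH
  have hq2 : HH u v r x = q ^ 2 := (Real.sq_sqrt hH.le).symm
  set f : Euc n → ℝ := fun y => u (x + r • y) with hf
  set V : Euc n → ℝ := fun y => v (x + r • y) with hVd
  have tf : Tmp f := h.tu.affine x r
  have tV : Tmp V := h.tv.affine x r
  have tft : Tmp (fun y => f y - t) := tf.sub (Tmp.const t)
  set p : Euc n → ℝ := fun y => max (f y - t) 0 with hp
  have pdft : ∀ i, pd i (fun y => f y - t) = pd i f := by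
    intro i; rw [pd_sub tf.diff (Tmp.const t).diff, pd_const]; simp
  have P1 : ∀ i, pd i (fun y => p y ^ 3) = fun y => 3 * p y ^ 2 * pd i f y := by
    intro i
    have := pd_comp (hasDerivAt_maxpow 1) tft.diff i
    rw [pdft] at this
    rw [show (fun y => p y ^ 3) = fun y => max (f y - t) 0 ^ (1 + 2) from rfl, this]
    ext y; simp only [hp]; push_cast; ring
  have P2 : ∀ i, pd i (fun y => p y ^ 2) = fun y => 2 * p y * pd i f y := by
    intro i
    have := pd_comp (hasDerivAt_maxpow 0) tft.diff i
    rw [pdft] at this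
    rw [show (fun y => p y ^ 2) = fun y => max (f y - t) 0 ^ (0 + 2) from rfl, this]
    ext y; simp only [hp]; push_cast; ring
  have D3 : Differentiable ℝ (fun y => p y ^ 3) := fun y =>
    ((hasDerivAt_maxpow 1 (f y - t)).differentiableAt.comp y (tft.diff y) :)
  have D2 : Differentiable ℝ (fun y => p y ^ 2) := fun y =>
    ((hasDerivAt_maxpow 0 (f y - t)).differentiableAt.comp y (tft.diff y) :)
  have pbp : PB p := tft.pb.mono fun y => by
    simp only [hp]
    rcases le_total (f y - t) 0 with h0 | h0
    · rw [max_eq_right h0]; simp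
    · rw [max_eq_left h0]
  have P11 : ∀ i, pd i (pd i (fun y => p y ^ 3)) =
      fun y => 6 * p y * pd i f y ^ 2 + 3 * p y ^ 2 * pd i (pd i f) y := by
    intro i
    rw [P1, pd_mul ((D2.const_mul 3)) (tf.pd i).diff, pd_mul (Tmp.const 3).diff D2, P2, pd_const]
    ext y; ring
  obtain ⟨hI, hG⟩ := green (Om := fun y => p y ^ 3) tV D3 (pbp.pow 3)
    (fun i => by rw [P1]; exact (D2.const_mul 3).mul (tf.pd i).diff)
    (fun i => by rw [P1]; exact ((PB.const 3).mul (pbp.pow 2)).mul (tf.pd i).pb)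
    (fun i => by
      rw [P11]
      exact (((PB.const 6).mul pbp).mul ((tf.pd i).pb.pow 2)).add
        (((PB.const 3).mul (pbp.pow 2)).mul ((tf.pd i).pd i).pb))
  have lhs : r ^ 2 * ∫ y, lap v (x + r • y) * max (u (x + r • y) - t) 0 ^ 3 ∂(gam n) =
      ∫ y, lap V y * p y ^ 3 ∂(gam n) := by
    rw [lap_affine h.tv, ← integral_const_mul]
    congr 1; ext y; simp only [hp, hf]; ring
  rw [lhs, hG]
  have Ien : Integrable (fun y => en u v (x + r • y) * (1 + ‖y‖) ^ (m + 1)) (gam n) :=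
    ((((h.tu.en h.tv).affine x r).pb).mul (((PB.const 1).add PB.norm).pow (m + 1))).integrable
      ((((h.tu.en h.tv).affine x r).cont).mul (by fun_prop))
  have step : ∀ y, ∑ i, V y * (pd i (pd i (fun y => p y ^ 3)) y -
        2 * (y i * pd i (fun y => p y ^ 3) y) + (y i ^ 2 - 1) * p y ^ 3) ≤
      54 * B * q * (r ^ 2 * (en u v (x + r • y) * (1 + ‖y‖) ^ (m + 1))) +
        864 * B * q * q ^ 2 * (1 + ‖y‖) ^ (m + 5) := by
    intro y
    have hV0 : 0 < V y := h.pv _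
    have hf0 : 0 < f y := h.pu _
    have hp0 : 0 ≤ p y := le_max_right _ _
    have hpf : p y ≤ f y := max_le (by linarith) hf0.le
    set w := 1 + ‖y‖ with hw'
    have hw1 : 1 ≤ w := by have := norm_nonneg y; linarith
    have hfq : f y ≤ 6 * w * q := h.u_le hr x y
    have hVp : V y * p y ≤ B * w ^ m * (6 * w * q) := by
      rcases le_or_gt (f y) t with h0 | h0
      · have : p y = 0 := max_eq_right (by linarith)
        rw [this, mul_zero]; positivity
      · have := hbd y h0
        exact mul_le_mul this (hpf.trans hfq) hp0 (by positivity)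
    have gs : ∑ i, pd i f y ^ 2 = r ^ 2 * gsq u (x + r • y) := gsq_affine h.tu x r y
    have ls : ∑ i, pd i (pd i f) y = r ^ 2 * (f y * V y ^ 2) := by
      rw [← lap_eq, lap_affine h.tu]
      simp only [h.eu, hf, hVd]
    have ns : ∑ i, y i ^ 2 = ‖y‖ ^ 2 := (normsq_eq y).symm
    have e1 : ∑ i, V y * (pd i (pd i (fun y => p y ^ 3)) y -
        2 * (y i * pd i (fun y => p y ^ 3) y) + (y i ^ 2 - 1) * p y ^ 3) ≤
        ∑ i, (V y * p y) * (9 * pd i f y ^ 2 + 3 * p y * pd i (pd i f) y + 4 * p y ^ 2 * y i ^ 2) := by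
      refine Finset.sum_le_sum fun i _ => ?_
      rw [P11, P1]
      have : V y * p y * (9 * pd i f y ^ 2 + 3 * p y * pd i (pd i f) y + 4 * p y ^ 2 * y i ^ 2) -
        V y * (6 * p y * pd i f y ^ 2 + 3 * p y ^ 2 * pd i (pd i f) y -
        2 * (y i * (3 * p y ^ 2 * pd i f y)) + (y i ^ 2 - 1) * p y ^ 3) =
        V y * p y * (3 * (pd i f y + p y * y i) ^ 2 + p y ^ 2) := by ring
      have : 0 ≤ V y * p y * (3 * (pd i f y + p y * y i) ^ 2 + p y ^ 2) := by positivity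
      linarith
    have e2 : ∑ i, (V y * p y) * (9 * pd i f y ^ 2 + 3 * p y * pd i (pd i f) y +
        4 * p y ^ 2 * y i ^ 2) = (V y * p y) * (9 * (r ^ 2 * gsq u (x + r • y)) +
        3 * p y * (r ^ 2 * (f y * V y ^ 2)) + 4 * p y ^ 2 * ‖y‖ ^ 2) := by
      rw [← gs, ← ls, ← ns, ← Finset.mul_sum, Finset.sum_add_distrib, Finset.sum_add_distrib,
        Finset.mul_sum, Finset.mul_sum, Finset.mul_sum]
    have e3 : 9 * (r ^ 2 * gsq u (x + r • y)) +
        3 * p y * (r ^ 2 * (f y * V y ^ 2)) + 4 * p y ^ 2 * ‖y‖ ^ 2 ≤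
        9 * (r ^ 2 * en u v (x + r • y)) + 144 * w ^ 4 * q ^ 2 := by
      have a1 : en u v (x + r • y) = gsq u (x + r • y) + gsq v (x + r • y) + f y ^ 2 * V y ^ 2 := rfl
      have a2 := gsq_nonneg v (x + r • y)
      have a3 : 3 * p y * (r ^ 2 * (f y * V y ^ 2)) ≤ 9 * (r ^ 2 * (f y ^ 2 * V y ^ 2)) := by
        calc _ ≤ 3 * f y * (r ^ 2 * (f y * V y ^ 2)) := by gcongr
          _ = 3 * (r ^ 2 * (f y ^ 2 * V y ^ 2)) := by ring
          _ ≤ _ := by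
            have : 0 ≤ r ^ 2 * (f y ^ 2 * V y ^ 2) := by positivity
            linarith
      have a4 : 4 * p y ^ 2 * ‖y‖ ^ 2 ≤ 144 * w ^ 4 * q ^ 2 := by
        have : ‖y‖ ≤ w := by linarith
        calc _ ≤ 4 * (6 * w * q) ^ 2 * w ^ 2 := by
              have := hpf.trans hfq
              gcongr
          _ = _ := by ring
      have : 0 ≤ r ^ 2 * gsq v (x + r • y) := by positivity
      rw [a1]; linarith
    have e4 : 0 ≤ 9 * (r ^ 2 * en u v (x + r • y)) + 144 * w ^ 4 * q ^ 2 := by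
      have a2 := gsq_nonneg v (x + r • y)
      have a3 := gsq_nonneg u (x + r • y)
      unfold en; positivity
    calc _ ≤ _ := e1.trans e2.le
      _ ≤ (V y * p y) * (9 * (r ^ 2 * en u v (x + r • y)) + 144 * w ^ 4 * q ^ 2) := by gcongr
      _ ≤ (B * w ^ m * (6 * w * q)) * (9 * (r ^ 2 * en u v (x + r • y)) + 144 * w ^ 4 * q ^ 2) := by
        gcongr
      _ = _ := by ring
  have hwg := hw u v h r x hr
  calc _ ≤ ∫ y, (54 * B * q * (r ^ 2 * (en u v (x + r • y) * (1 + ‖y‖) ^ (m + 1))) +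
        864 * B * q * q ^ 2 * (1 + ‖y‖) ^ (m + 5)) ∂(gam n) := by
        refine integral_mono hI ?_ step
        exact ((Ien.const_mul _).const_mul _).add ((int_weight _).const_mul _)
    _ = 54 * B * q * (r ^ 2 * ∫ y, en u v (x + r • y) * (1 + ‖y‖) ^ (m + 1) ∂(gam n)) +
        864 * B * q * q ^ 2 * ∫ y : Euc n, (1 + ‖y‖) ^ (m + 5) ∂(gam n) := by
        rw [integral_add ((Ien.const_mul _).const_mul _) ((int_weight _).const_mul _),
          integral_const_mul, integral_const_mul, integral_const_mul]
    _ ≤ 54 * B * q * (C * HH u v r x) +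
        864 * B * q * q ^ 2 * ∫ y : Euc n, (1 + ‖y‖) ^ (m + 5) ∂(gam n) := by gcongr
    _ = _ := by rw [hq2]; ring

/-! ### Decay of the interaction terms -/

lemma HH_symm (u v : Euc n → ℝ) (r : ℝ) (x : Euc n) : HH v u r x = HH u v r x := by
  unfold HH nsq
  congr 1; ext z; ring

/-- A variant of `dicho` in which the weight `1 + ‖y‖` sits in the second alternative only. -/
lemma dicho2 (n : ℕ) : ∃ (ν : ℝ) (q : ℕ), 0 < ν ∧ ν ≤ 1 ∧ ∀ (u v : Euc n → ℝ), Sol u v →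
    ∀ (r ρ : ℝ) (x y : Euc n), 0 < ρ → ρ ≤ r →
    (max (u (x + r • y)) (v (x + r • y)) ≤ 16 * (ρ / r) ^ ν * √(HH u v r x)) ∨
    min (u (x + r • y)) (v (x + r • y)) ≤ (2 * n + 8) * (1 + ‖y‖) ^ q / ρ := by
  obtain ⟨ν, h0, h1, hd⟩ := dicho n
  refine ⟨ν, ⌈1 / ν⌉₊, h0, h1, fun u v h r ρ x y hρ hr => ?_⟩
  set q := ⌈1 / ν⌉₊
  set w := 1 + ‖y‖ with hw
  have hw1 : 1 ≤ w := by have := norm_nonneg y; linarith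
  have hw0 : 0 < w := by linarith
  have hwq : 1 ≤ w ^ q := one_le_pow₀ hw1
  have hr0 : 0 < r := hρ.trans_le hr
  rcases hd u v h r (ρ / w ^ q) x y (by positivity) ((div_le_self hρ.le hwq).trans hr) with h2 | h2
  · left
    refine h2.trans ?_
    have h3 : (ρ / w ^ q / r) ^ ν = (ρ / r) ^ ν / w ^ (q * ν) := by
      rw [div_right_comm, Real.div_rpow (by positivity) (by positivity), ← Real.rpow_natCast,
        ← Real.rpow_mul hw0.le]
    have h4 : w ≤ w ^ (q * ν) := by
      calc w = w ^ (1:ℝ) := (Real.rpow_one w).symm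
        _ ≤ _ := by
          refine Real.rpow_le_rpow_of_exponent_le hw1 ?_
          have := Nat.le_ceil (1 / ν)
          rwa [div_le_iff₀ h0] at this
    have h5 : w * ((ρ / r) ^ ν / w ^ (q * ν)) ≤ (ρ / r) ^ ν := by
      rw [mul_div_assoc', div_le_iff₀ (by positivity), mul_comm]
      gcongr
    rw [h3]
    calc 16 * w * ((ρ / r) ^ ν / w ^ (q * ν)) * √(HH u v r x)
        = 16 * (w * ((ρ / r) ^ ν / w ^ (q * ν))) * √(HH u v r x) := by ring
      _ ≤ _ := by gcongr
  · right
    refine h2.trans (le_of_eq ?_)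
    field_simp

/-- Splitting at the level `t`: where the larger component is at most of order `t`, one factor
`a + b` is bounded by a multiple of `t`; elsewhere the truncation `(a - t)₊` is comparable with `a`. -/
lemma cube_point {a b t : ℝ} (ha : 0 < a) (hb : 0 < b) (ht : 0 < t) (hab : b ≤ a) :
    a * b * (a + b) ^ 2 ≤ 4 * t * (a * b * (a + b)) +
      8 / t ^ 2 * (b * a ^ 2 * max (a - t) 0 ^ 3) := by
  have h8 : 0 ≤ 8 / t ^ 2 * (b * a ^ 2 * max (a - t) 0 ^ 3) := by positivity
  rcases le_or_gt a (2 * t) with h | h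
  · have : a * b * (a + b) * (a + b) ≤ a * b * (a + b) * (4 * t) := by gcongr; linarith
    nlinarith
  · rw [max_eq_left (by linarith)]
    have h1 : t ^ 2 ≤ (a - t) ^ 2 := by gcongr; linarith
    have h2 : 4 * a ≤ 8 / t ^ 2 * (a - t) ^ 3 := by
      rw [div_mul_eq_mul_div, le_div_iff₀ (by positivity)]
      have h9 : 4 * a ≤ 8 * (a - t) := by linarith
      calc 4 * a * t ^ 2 ≤ 8 * (a - t) * (a - t) ^ 2 := by
            gcongr
            linarith
        _ = _ := by ring
    have h3 : (a + b) ^ 2 ≤ 4 * a ^ 2 := by nlinarith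
    have h4 : 0 ≤ 4 * t * (a * b * (a + b)) := by positivity
    calc a * b * (a + b) ^ 2 ≤ a * b * (4 * a ^ 2) := by gcongr
      _ = (4 * a) * (b * a ^ 2) := by ring
      _ ≤ (8 / t ^ 2 * (a - t) ^ 3) * (b * a ^ 2) := by gcongr
      _ ≤ _ := by linarith

lemma alg_aux {T Q ρ : ℝ} (hT : T ≠ 0) (hQ : Q ≠ 0) (hρ : ρ ≠ 0) (m C : ℝ) :
    8 / (32 * T * Q) ^ 2 * (C * (m / (ρ * T)) * Q * Q ^ 2) =
      (8 / 1024) * m * C * (Q / (ρ * T ^ 3)) := by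
  field_simp
  ring

lemma cube_avg {u v : Euc n → ℝ} (h : Sol u v) {t : ℝ} (ht0 : 0 < t) (r : ℝ) (x : Euc n) :
    avg (fun z => u z * v z * (u z + v z) ^ 2) r x ≤
      4 * t * avg (lap fun z => u z + v z) r x +
      (8 / t ^ 2 * ∫ y, (lap v (x + r • y) * max (u (x + r • y) - t) 0 ^ 3) ∂(gam n) +
       8 / t ^ 2 * ∫ y, (lap u (x + r • y) * max (v (x + r • y) - t) 0 ^ 3) ∂(gam n)) := by
  have hs := h.tu.add h.tv
  have cu : Continuous fun y => u (x + r • y) := (h.tu.affine x r).cont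
  have cv : Continuous fun y => v (x + r • y) := (h.tv.affine x r).cont
  have pbm : ∀ f : Euc n → ℝ, Tmp f → PB fun y => max (f (x + r • y) - t) 0 := fun f hf =>
    ((hf.affine x r).sub (Tmp.const t)).pb.mono fun y => by
      rcases le_total (f (x + r • y) - t) 0 with h0 | h0
      · rw [max_eq_right h0]; simp
      · rw [max_eq_left h0]
  have J1 : Integrable (fun y => lap v (x + r • y) * max (u (x + r • y) - t) 0 ^ 3) (gam n) :=
    ((h.tv.lap.affine x r).pb.mul ((pbm u h.tu).pow 3)).integrable
      ((h.tv.lap.affine x r).cont.mul (((cu.sub continuous_const).max continuous_const).pow 3))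
  have J2 : Integrable (fun y => lap u (x + r • y) * max (v (x + r • y) - t) 0 ^ 3) (gam n) :=
    ((h.tu.lap.affine x r).pb.mul ((pbm v h.tv).pow 3)).integrable
      ((h.tu.lap.affine x r).cont.mul (((cv.sub continuous_const).max continuous_const).pow 3))
  have J0 : Integrable (fun y => lap (fun z => u z + v z) (x + r • y)) (gam n) :=
    (hs.lap.affine x r).int
  have point : ∀ y, u (x + r • y) * v (x + r • y) * (u (x + r • y) + v (x + r • y)) ^ 2 ≤
      4 * t * lap (fun z => u z + v z) (x + r • y) +
      (8 / t ^ 2 * (lap v (x + r • y) * max (u (x + r • y) - t) 0 ^ 3) +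
       8 / t ^ 2 * (lap u (x + r • y) * max (v (x + r • y) - t) 0 ^ 3)) := by
    intro y
    rw [h.lap_s, h.eu, h.ev]
    have a := h.pu (x + r • y)
    have b := h.pv (x + r • y)
    rcases le_total (v (x + r • y)) (u (x + r • y)) with h2 | h2
    · have := cube_point a b ht0 h2
      have h8 : 0 ≤ 8 / t ^ 2 * (u (x + r • y) * v (x + r • y) ^ 2 *
        max (v (x + r • y) - t) 0 ^ 3) := by positivity
      linarith
    · have := cube_point b a ht0 h2
      have h8 : 0 ≤ 8 / t ^ 2 * (v (x + r • y) * u (x + r • y) ^ 2 *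
        max (u (x + r • y) - t) 0 ^ 3) := by positivity
      rw [add_comm (v (x + r • y)), mul_comm (v (x + r • y)) (u (x + r • y))] at this
      linarith
  have J12 : Integrable (fun y => 8 / t ^ 2 * (lap v (x + r • y) *
      max (u (x + r • y) - t) 0 ^ 3) + 8 / t ^ 2 * (lap u (x + r • y) *
      max (v (x + r • y) - t) 0 ^ 3)) (gam n) := (J1.const_mul _).add (J2.const_mul _)
  have := integral_mono (((h.tu.mul h.tv).mul (hs.pow 2)).affine x r).int
    ((J0.const_mul (4 * t)).add J12) point
  refine this.trans (le_of_eq ?_)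
  simp only [Pi.add_apply]
  rw [integral_add (J0.const_mul (4 * t)) J12, integral_add (J1.const_mul _) (J2.const_mul _),
    integral_const_mul, integral_const_mul, integral_const_mul]
  rfl

set_option maxHeartbeats 1000000 in
/-- The interaction terms are small compared with the height when `κ = r² H` is large. The truncation
level is `t = 32 κ^{-ν/10} √H` and the dichotomy is used at scale `ρ = κ^{-1/10} r`. -/
lemma cubic_decay (n : ℕ) : ∃ C a : ℝ, 0 < C ∧ 0 < a ∧ a ≤ 1 / 2 ∧ ∀ (u v : Euc n → ℝ), Sol u v →
    ∀ (r : ℝ) (x : Euc n), 0 < r → 1 ≤ r ^ 2 * HH u v r x →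
    r ^ 2 * avg (fun z => u z * v z * (u z + v z) ^ 2) r x ≤
      C * HH u v r x * (r ^ 2 * HH u v r x) ^ (-a) := by
  obtain ⟨ν, q, hν0, hν1, hd⟩ := dicho2 n
  obtain ⟨C₁, hC₁, htr⟩ := trunc n (q + 1)
  have hM := one_le_weight (n := n) 3
  set M := ∫ y : Euc n, (1 + ‖y‖) ^ 3 ∂(gam n) with hMd
  refine ⟨48 * M * 32 + 512 * (2 * n + 8) * C₁, ν / 10, by positivity, by positivity, by linarith,
    fun u v h r x hr hκ => ?_⟩
  have hH := h.H_pos r x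
  set Q := √(HH u v r x) with hQ
  have hQ0 : 0 < Q := Real.sqrt_pos.2 hH
  have hQ2 : HH u v r x = Q ^ 2 := (Real.sq_sqrt hH.le).symm
  set κ := r ^ 2 * HH u v r x with hκd
  have hκ0 : 0 < κ := by linarith
  set k := κ ^ (1 / 10 : ℝ) with hk
  have hk1 : 1 ≤ k := Real.one_le_rpow hκ (by norm_num)
  have hk0 : 0 < k := by linarith
  have hk10 : k ^ 10 = κ := by
    rw [hk, ← Real.rpow_natCast, ← Real.rpow_mul hκ0.le]; norm_num
  have hk5 : r * Q = k ^ 5 := by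
    have : (r * Q) ^ 2 = (k ^ 5) ^ 2 := by rw [← pow_mul, hk10, mul_pow, hκd, hQ2]
    exact (pow_left_inj₀ (by positivity) (by positivity) two_ne_zero).1 this
  set T := (k⁻¹) ^ ν with hT
  have hki : k⁻¹ ≤ 1 := inv_le_one_of_one_le₀ hk1
  have hT0 : 0 < T := by positivity
  have hT1 : T ≤ 1 := Real.rpow_le_one (by positivity) hki hν0.le
  have hTk : k⁻¹ ≤ T := by
    calc k⁻¹ = k⁻¹ ^ (1:ℝ) := (Real.rpow_one _).symm
      _ ≤ _ := Real.rpow_le_rpow_of_exponent_ge (by positivity) hki hν1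
  have hTκ : T = κ ^ (-(ν / 10)) := by
    rw [hT, hk, ← Real.rpow_neg_one, ← Real.rpow_mul hκ0.le, ← Real.rpow_mul hκ0.le]
    congr 1; ring
  set ρ := k⁻¹ * r with hρ
  have hρ0 : 0 < ρ := by positivity
  have hρr : ρ ≤ r := by
    calc ρ ≤ 1 * r := by rw [hρ]; gcongr
      _ = r := one_mul r
  have hρd : ρ / r = k⁻¹ := by rw [hρ]; field_simp
  set t := 32 * T * Q with ht
  have ht0 : 0 < t := by positivity
  set B := (2 * n + 8) / (ρ * T) with hB
  have hB0 : 0 < B := by positivity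
  have hbd : ∀ (u v : Euc n → ℝ), Sol u v → HH u v r x = Q ^ 2 → ∀ y, t < u (x + r • y) →
      v (x + r • y) ≤ B * (1 + ‖y‖) ^ (q + 1) := by
    intro u v h hq y hy
    have hsq : √(HH u v r x) = Q := by rw [hq, Real.sqrt_sq hQ0.le]
    have hw1 : 1 ≤ 1 + ‖y‖ := by have := norm_nonneg y; linarith
    set w := 1 + ‖y‖
    have hpow : w ^ q ≤ w ^ (q + 1) := pow_le_pow_right₀ hw1 (Nat.le_succ q)
    rcases hd u v h r ρ x y hρ0 hρr with h1 | h1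
    · exfalso
      rw [hρd, hsq, ← hT] at h1
      have := (le_max_left _ _).trans h1
      have : 0 < T * Q := by positivity
      linarith
    · rcases le_total (v (x + r • y)) (u (x + r • y)) with h2 | h2
      · rw [min_eq_right h2] at h1
        calc _ ≤ _ := h1
          _ ≤ (2 * n + 8) * w ^ (q + 1) / (ρ * T) := by
            gcongr
            nlinarith
          _ = _ := by rw [hB]; ring
      · rw [min_eq_left h2] at h1
        have h3 := h.v_le hr x y
        rw [hsq] at h3
        have h4 : 32 * T * Q ≤ (2 * n + 8) * w ^ q / ρ := hy.le.trans h1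
        calc v (x + r • y) ≤ 6 * w * Q := h3
          _ ≤ 32 * T * Q * w / T := by
            rw [le_div_iff₀ hT0]
            have : 0 < w * Q * T := by positivity
            nlinarith
          _ ≤ ((2 * n + 8) * w ^ q / ρ) * w / T := by gcongr
          _ = _ := by rw [hB, pow_succ]; ring
  have T1 := htr u v h r t B x hr ht0 hB0.le (hbd u v h hQ2)
  have T2 := htr v u h.symm r t B x hr ht0 hB0.le (hbd v u h.symm (by rw [HH_symm, hQ2]))
  rw [HH_symm, ← hQ, hQ2] at T2
  rw [← hQ, hQ2] at T1
  have hs := h.tu.add h.tv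
  have S1 : r ^ 2 * avg (lap fun z => u z + v z) r x ≤ 12 * M * Q := by
    rw [avg_lap hs]
    calc _ ≤ ∫ y : Euc n, 12 * Q * (1 + ‖y‖) ^ 3 ∂(gam n) := by
          refine integral_mono ((hs.affine x r).mul (Tmp.normsq.sub (Tmp.const n))).int
            ((int_weight 3).const_mul _) fun y => ?_
          have h1 := h.s_le hr x y
          have h2 : 0 < u (x + r • y) + v (x + r • y) := add_pos (h.pu _) (h.pv _)
          have h3 := norm_nonneg y
          rw [← hQ] at h1
          show (u (x + r • y) + v (x + r • y)) * (‖y‖ ^ 2 - n) ≤ 12 * Q * (1 + ‖y‖) ^ 3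
          calc _ ≤ (u (x + r • y) + v (x + r • y)) * (1 + ‖y‖) ^ 2 := by
                gcongr
                have : (0:ℝ) ≤ n := by positivity
                nlinarith
            _ ≤ 12 * (1 + ‖y‖) * Q * (1 + ‖y‖) ^ 2 := by gcongr
            _ = _ := by ring
      _ = _ := by rw [integral_const_mul]; ring
  have I0 := cube_avg h ht0 r x
  have fin : 1 ≤ k ^ 4 * T ^ 4 := by
    rw [← mul_pow]
    refine one_le_pow₀ ?_
    calc (1:ℝ) = k * k⁻¹ := by field_simp
      _ ≤ _ := by gcongr
  have hBt : 8 / t ^ 2 * (C₁ * B * Q * Q ^ 2) ≤ 256 * (2 * n + 8) * C₁ * (Q ^ 2 * T) := by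
    have e : 8 / t ^ 2 * (C₁ * B * Q * Q ^ 2) = (8 / 1024) * (2 * n + 8) * C₁ * (Q / (ρ * T ^ 3)) := by
      exact alg_aux hT0.ne' hQ0.ne' hρ0.ne' _ _
    have e2 : Q / (ρ * T ^ 3) ≤ Q ^ 2 * T := by
      rw [div_le_iff₀ (by positivity)]
      have e3 : Q ^ 2 * T * (ρ * T ^ 3) = Q * (k⁻¹ * (r * Q)) * T ^ 4 := by rw [hρ]; ring
      rw [e3, hk5, show k⁻¹ * k ^ 5 = k ^ 4 by field_simp]
      nlinarith
    rw [e]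
    calc _ ≤ (8 / 1024) * (2 * n + 8) * C₁ * (Q ^ 2 * T) := by gcongr
      _ ≤ _ := by
        have : 0 ≤ (2 * n + 8) * C₁ * (Q ^ 2 * T) := by positivity
        linarith
  calc _ ≤ _ := mul_le_mul_of_nonneg_left I0 (sq_nonneg r)
    _ = 4 * t * (r ^ 2 * avg (lap fun z => u z + v z) r x) +
      (8 / t ^ 2 * (r ^ 2 * ∫ y, (lap v (x + r • y) * max (u (x + r • y) - t) 0 ^ 3) ∂(gam n)) +
       8 / t ^ 2 * (r ^ 2 * ∫ y, (lap u (x + r • y) * max (v (x + r • y) - t) 0 ^ 3) ∂(gam n))) := by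
        ring
    _ ≤ 4 * t * (12 * M * Q) + (8 / t ^ 2 * (C₁ * B * Q * Q ^ 2) +
        8 / t ^ 2 * (C₁ * B * Q * Q ^ 2)) := by gcongr
    _ ≤ 4 * t * (12 * M * Q) + (256 * (2 * n + 8) * C₁ * (Q ^ 2 * T) +
        256 * (2 * n + 8) * C₁ * (Q ^ 2 * T)) := by gcongr
    _ = _ := by rw [ht, ← hTκ, hQ2]; ring

/-! ### Almost-linearity of `u - v` -/

/-- `|∇(u - v)|²` expressed through `|∇u|² + |∇v|²` and `Δ(u v)`, the latter being harmless after
integration by parts. -/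
lemma Sol.gsq_w {u v : Euc n → ℝ} (h : Sol u v) (z : Euc n) :
    gsq (fun z => u z - v z) z = gsq u z + gsq v z - lap (fun z => u z * v z) z +
      u z * v z * (u z ^ 2 + v z ^ 2) := by
  rw [lap_mul h.tu h.tv]
  simp only [h.eu, h.ev, gsq]
  have : ∀ i, pd i (fun z => u z - v z) z = pd i u z - pd i v z := fun i => by
    rw [pd_sub h.tu.diff h.tv.diff]
  simp only [this]
  have e : ∑ i, (pd i u z - pd i v z) ^ 2 = ∑ i, pd i u z ^ 2 + ∑ i, pd i v z ^ 2 -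
      2 * ∑ i, pd i u z * pd i v z := by
    rw [Finset.mul_sum, ← Finset.sum_add_distrib, ← Finset.sum_sub_distrib]
    exact Finset.sum_congr rfl fun i _ => by ring
  rw [e]; ring

lemma Sol.avg_gsq_w {u v : Euc n → ℝ} (h : Sol u v) (r : ℝ) (x : Euc n) :
    r ^ 2 * avg (gsq fun z => u z - v z) r x ≤ DD u v r x + n * avg (fun z => u z * v z) r x +
      r ^ 2 * avg (fun z => u z * v z * (u z + v z) ^ 2) r x := by
  have huv := h.tu.mul h.tv
  have hs := h.tu.add h.tv
  have t1 := h.tu.gsq.add h.tv.gsq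
  have t2 := t1.sub huv.lap
  have t3 := huv.mul ((h.tu.pow 2).add (h.tv.pow 2))
  have e1 : avg (gsq fun z => u z - v z) r x = avg (gsq u) r x + avg (gsq v) r x -
      avg (lap fun z => u z * v z) r x + avg (fun z => u z * v z * (u z ^ 2 + v z ^ 2)) r x := by
    rw [← avg_add h.tu.gsq h.tv.gsq, ← avg_sub t1 huv.lap, ← avg_add t2 t3]
    congr 1; ext z; exact h.gsq_w z
  have e2 : avg (fun z => u z * v z * (u z ^ 2 + v z ^ 2)) r x ≤
      avg (fun z => u z * v z * (u z + v z) ^ 2) r x := by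
    refine avg_mono t3 (huv.mul (hs.pow 2)) (fun z => ?_) r x
    have := h.pu z; have := h.pv z
    have : 0 < u z * v z := by positivity
    show u z * v z * (u z ^ 2 + v z ^ 2) ≤ u z * v z * (u z + v z) ^ 2
    gcongr
    nlinarith
  have e3 := avg_lap huv r x
  have e4 : -(n * avg (fun z => u z * v z) r x) ≤ ∫ y, u (x + r • y) * v (x + r • y) *
      (‖y‖ ^ 2 - n) ∂(gam n) := by
    unfold avg
    rw [← integral_const_mul, ← integral_neg]
    refine integral_mono ((huv.affine x r).int.const_mul (n:ℝ)).neg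
      ((huv.affine x r).mul (Tmp.normsq.sub (Tmp.const n))).int fun y => ?_
    have : 0 < u (x + r • y) * v (x + r • y) := mul_pos (h.pu _) (h.pv _)
    show -(n * (u (x + r • y) * v (x + r • y))) ≤ u (x + r • y) * v (x + r • y) * (‖y‖ ^ 2 - n)
    nlinarith [mul_nonneg this.le (sq_nonneg ‖y‖)]
  have e5 := P_nonneg (u := u) (v := v) r x
  have e6 : r ^ 2 * avg (fun z => u z * v z * (u z ^ 2 + v z ^ 2)) r x ≤
      r ^ 2 * avg (fun z => u z * v z * (u z + v z) ^ 2) r x := by gcongr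
  rw [h.D_eq, e1]
  linarith

/-- `gap` at scale `r` about `x`. -/
lemma gap_avg {f : Euc n → ℝ} (hf : Tmp f) (r : ℝ) (x : Euc n) :
    2 * (avg (fun z => f z ^ 2) r x - avg f r x ^ 2) ≤
      r ^ 2 * avg (gsq f) r x + r ^ 2 * ∑ i, avg (pd i f) r x ^ 2 := by
  have := gap (hf.affine x r)
  refine this.trans (le_of_eq ?_)
  congr 1
  · rw [show avg (gsq f) r x = ∑ i, avg (fun z => pd i f z ^ 2) r x from
      avg_sum Finset.univ (fun i => (hf.pd i).pow 2) r x, Finset.mul_sum]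
    refine Finset.sum_congr rfl fun i _ => ?_
    rw [pd_affine hf.diff]
    unfold avg
    rw [← integral_const_mul]
    congr 1; ext y; ring
  · rw [Finset.mul_sum]
    refine Finset.sum_congr rfl fun i _ => ?_
    rw [pd_affine hf.diff, integral_const_mul]
    unfold avg; ring

lemma Sol.avg_w_sq {u v : Euc n → ℝ} (h : Sol u v) (r : ℝ) (x : Euc n) :
    avg (fun z => (u z - v z) ^ 2) r x = HH u v r x - 2 * avg (fun z => u z * v z) r x := by
  unfold HH
  rw [← avg_const_mul, ← avg_sub (h.tu.nsq h.tv) ((Tmp.const 2).mul (h.tu.mul h.tv))]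
  congr 1; ext z; unfold nsq; ring

/-- The almost-linearity estimates at a scale where `κ = r²H` is large. -/
lemma almost_linear (n : ℕ) : ∃ C a : ℝ, 0 < C ∧ 0 < a ∧ a ≤ 1 / 2 ∧ ∀ (u v : Euc n → ℝ), Sol u v →
    ∀ (r : ℝ) (x : Euc n), 0 < r → 1 ≤ r ^ 2 * HH u v r x →
    HH u v r x * (1 - C * (r ^ 2 * HH u v r x) ^ (-a)) ≤
      DD u v r x + avg (fun z => u z - v z) r x ^ 2 ∧
    HH u v r x * (1 - C * (r ^ 2 * HH u v r x) ^ (-a)) ≤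
      2 * avg (fun z => u z - v z) r x ^ 2 +
        r ^ 2 * ∑ i, avg (pd i fun z => u z - v z) r x ^ 2 := by
  obtain ⟨C, a, hC, ha, ha2, hE⟩ := cubic_decay n
  refine ⟨C + n + 4, a, by positivity, ha, ha2, fun u v h r x hr hκ => ?_⟩
  have hE := hE u v h r x hr hκ
  have hw := h.tu.sub h.tv
  have hH := h.H_pos r x
  have g1 := poincare_avg hw r x
  have g2 := gap_avg hw r x
  rw [h.avg_w_sq] at g1 g2
  have g3 := h.avg_gsq_w r x
  have g4 := h.D_le_H hr x
  set κ := r ^ 2 * HH u v r x with hκd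
  have hκ0 : 0 < κ := by linarith
  set A := avg (fun z => u z * v z) r x with hA
  have hA0 : 0 ≤ A := avg_nonneg (fun z => (mul_pos (h.pu z) (h.pv z)).le) r x
  have hAb : A ≤ HH u v r x * κ ^ (-a) := by
    have a1 := h.uv_sq r x
    have a2 : PP u v r x ≤ HH u v r x := by
      have := h.D_eq r x
      have b1 : 0 ≤ r ^ 2 * avg (gsq u) r x := mul_nonneg (sq_nonneg r) (avg_nonneg (gsq_nonneg u) r x)
      have b2 : 0 ≤ r ^ 2 * avg (gsq v) r x := mul_nonneg (sq_nonneg r) (avg_nonneg (gsq_nonneg v) r x)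
      linarith
    have a3 : A ^ 2 ≤ (HH u v r x * κ ^ (-a)) ^ 2 := by
      have b1 : κ ^ (-(1:ℝ)) ≤ (κ ^ (-a)) ^ 2 := by
        rw [← Real.rpow_natCast, ← Real.rpow_mul hκ0.le]
        exact Real.rpow_le_rpow_of_exponent_le hκ (by push_cast; linarith)
      rw [Real.rpow_neg_one] at b1
      rw [mul_pow]
      calc A ^ 2 ≤ HH u v r x / r ^ 2 := by rw [le_div_iff₀ (by positivity)]; linarith
        _ = HH u v r x ^ 2 * κ⁻¹ := by rw [hκd]; field_simp
        _ ≤ _ := by gcongr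
    exact (pow_le_pow_iff_left₀ hA0 (by positivity) two_ne_zero).1 a3
  have hE' : r ^ 2 * avg (fun z => u z * v z * (u z + v z) ^ 2) r x ≤ C * (HH u v r x * κ ^ (-a)) := by
    linarith
  have e : HH u v r x * (1 - (C + n + 4) * κ ^ (-a)) = HH u v r x - C * (HH u v r x * κ ^ (-a)) -
      n * (HH u v r x * κ ^ (-a)) - 4 * (HH u v r x * κ ^ (-a)) := by ring
  have hn : (n:ℝ) * A ≤ n * (HH u v r x * κ ^ (-a)) := by gcongr
  rw [e]
  constructor <;> linarith

/-! ### Drift and second derivatives of the averages of `u - v` -/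

lemma DD_symm (u v : Euc n → ℝ) (r : ℝ) (x : Euc n) : DD v u r x = DD u v r x := by
  unfold DD en
  congr 2; ext z; ring

lemma NN_symm (u v : Euc n → ℝ) (r : ℝ) (x : Euc n) : NN v u r x = NN u v r x := by
  unfold NN; rw [DD_symm, HH_symm]

lemma avg_w_symm {u v : Euc n → ℝ} (h : Sol u v) (r : ℝ) (x : Euc n) :
    avg (fun z => v z - u z) r x = - avg (fun z => u z - v z) r x := by
  rw [avg_sub h.tu h.tv, avg_sub h.tv h.tu]; ring

lemma Sol.avg_w_sq_le {u v : Euc n → ℝ} (h : Sol u v) (r : ℝ) (x : Euc n) :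
    avg (fun z => u z - v z) r x ^ 2 ≤ HH u v r x := by
  have h1 := avg_sq_le (h.tu.sub h.tv) r x
  rw [h.avg_w_sq] at h1
  have : 0 ≤ avg (fun z => u z * v z) r x :=
    avg_nonneg (fun z => (mul_pos (h.pu z) (h.pv z)).le) r x
  linarith

/-- The derivative of `s ↦ avg w s x` agrees with that of a function homogeneous of degree `N`,
up to an error controlled by the increase of the frequency. -/
lemma Sol.A_deriv {u v : Euc n → ℝ} (h : Sol u v) {s : ℝ} (hs : 0 < s) (x : Euc n) :
    ∃ A' N' : ℝ, HasDerivAt (fun s => avg (fun z => u z - v z) s x) A' s ∧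
      HasDerivAt (fun s => NN u v s x) N' s ∧ 0 ≤ N' ∧
      (s * A' - NN u v s x * avg (fun z => u z - v z) s x) ^ 2 ≤ s * N' * HH u v s x := by
  obtain ⟨N', hN, hP, hI⟩ := h.N_deriv_le hs x
  have hw := h.tu.sub h.tv
  have tr := (h.tu.rad s x).sub (h.tv.rad s x)
  refine ⟨∫ y, (rad u s x y - rad v s x y) ∂(gam n), N', ?_, hN, ?_, ?_⟩
  · have := avg_curve (hw.1.of_le (by norm_cast)) hw.pb (fun i => (hw.pd i).pb)
      (X := fun _ => x) (q := fun t => t) (hasDerivAt_const s x) (hasDerivAt_id s)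
    convert this using 1
    simp only [PiLp.zero_apply, zero_mul, Finset.sum_const_zero, zero_add, one_mul]
    rw [← integral_finsetSum _ fun i _ => ((Tmp.coord i).mul ((hw.pd i).affine x s)).int]
    congr 1; ext y
    unfold rad
    rw [← Finset.sum_sub_distrib]
    refine Finset.sum_congr rfl fun i _ => ?_
    rw [pd_sub h.tu.diff h.tv.diff]; ring
  · refine le_trans ?_ hP
    have := P_nonneg (u := u) (v := v) s x
    have := h.H_pos s x
    positivity
  · set N := NN u v s x
    have ta : Tmp (fun y => s * rad u s x y - N * u (x + s • y)) :=
      ((Tmp.const s).mul (h.tu.rad s x)).sub ((Tmp.const N).mul (h.tu.affine x s))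
    have tb : Tmp (fun y => s * rad v s x y - N * v (x + s • y)) :=
      ((Tmp.const s).mul (h.tv.rad s x)).sub ((Tmp.const N).mul (h.tv.affine x s))
    have e : s * ∫ y, (rad u s x y - rad v s x y) ∂(gam n) - N * avg (fun z => u z - v z) s x =
        ∫ y, ((s * rad u s x y - N * u (x + s • y)) - (s * rad v s x y - N * v (x + s • y)))
          ∂(gam n) := by
      unfold avg
      rw [← integral_const_mul, ← integral_const_mul, ← integral_sub (tr.int.const_mul s)
        ((hw.affine x s).int.const_mul N)]
      congr 1; ext y; ring
    rw [e]
    calc _ ≤ _ := sq_integral_le (ta.sub tb).int ((ta.sub tb).pow 2).int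
      _ ≤ ∫ y, 2 * ((s * rad u s x y - N * u (x + s • y)) ^ 2 +
          (s * rad v s x y - N * v (x + s • y)) ^ 2) ∂(gam n) := by
        refine integral_mono ((ta.sub tb).pow 2).int
          (((ta.pow 2).add (tb.pow 2)).int.const_mul 2) fun y => ?_
        show ((s * rad u s x y - N * u (x + s • y)) - (s * rad v s x y - N * v (x + s • y))) ^ 2 ≤
          2 * ((s * rad u s x y - N * u (x + s • y)) ^ 2 +
          (s * rad v s x y - N * v (x + s • y)) ^ 2)
        nlinarith [sq_nonneg ((s * rad u s x y - N * u (x + s • y)) +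
          (s * rad v s x y - N * v (x + s • y)))]
      _ ≤ _ := by rw [integral_const_mul]; linarith

/-- If `A(r; x) = 0` and the frequency is almost `1` at scale `r`, then `A(2r; x)` is almost zero: the
frequency stays in `[1 - η², 1]`, so its total increase is at most `η²`. The bound from below follows
by exchanging `u` and `v`. -/
lemma Sol.drift {u v : Euc n → ℝ} (h : Sol u v) {r η : ℝ} (hr : 0 < r) (hη : 0 < η) (hη1 : η ≤ 1)
    (x : Euc n) (h0 : avg (fun z => u z - v z) r x = 0) (hN : 1 - η ^ 2 ≤ NN u v r x) :
    avg (fun z => u z - v z) (2 * r) x ≤ 6 * η * √(HH u v (2 * r) x) := by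
  have hH := h.H_pos (2 * r) x
  set M := √(HH u v (2 * r) x) with hM
  have hM0 : 0 < M := Real.sqrt_pos.2 hH
  have hM2 : HH u v (2 * r) x = M ^ 2 := (Real.sq_sqrt hH.le).symm
  set A : ℝ → ℝ := fun s => avg (fun z => u z - v z) s x with hA
  set G : ℝ → ℝ := fun s => A s / s - M / r ^ 2 * (2 * η * (s - r) + r / η * NN u v s x) with hG
  have hd : ∀ s ∈ Icc r (2 * r), ∃ G', HasDerivAt G G' s ∧ G' ≤ 0 := by
    intro s hs
    have hs0 : 0 < s := hr.trans_le hs.1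
    obtain ⟨A', N', hA', hN', hN0, hE⟩ := h.A_deriv hs0 x
    refine ⟨_, (hA'.div (hasDerivAt_id s) hs0.ne').sub ((((((hasDerivAt_id s).sub_const r).const_mul
      (2 * η)).add (hN'.const_mul (r / η))).const_mul (M / r ^ 2))), ?_⟩
    have hHs : HH u v s x ≤ M ^ 2 := by
      rw [← hM2]; exact h.H_mono x hs0.le (by simp; linarith) hs.2
    have hNs : 1 - η ^ 2 ≤ NN u v s x := hN.trans (h.N_mono x hr hs0 hs.1)
    have hN1 := h.N_le_one hs0 x
    have hAs : |A s| ≤ M := by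
      refine abs_le_of_sq_le_sq ((h.avg_w_sq_le s x).trans hHs) hM0.le
    set N := NN u v s x
    have h1 : |s * A' - N * A s| ≤ M * (η / 2 + r * N' / η) := by
      refine abs_le_of_sq_le_sq ?_ (by positivity)
      calc _ ≤ _ := hE
        _ ≤ (2 * r) * N' * M ^ 2 :=
          mul_le_mul (mul_le_mul_of_nonneg_right hs.2 hN0) hHs (h.H_pos s x).le (by positivity)
        _ = M ^ 2 * (4 * (η / 2) * (r * N' / η)) := by field_simp; ring
        _ ≤ M ^ 2 * (η / 2 + r * N' / η) ^ 2 := by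
          gcongr
          nlinarith [sq_nonneg (η / 2 - r * N' / η)]
        _ = _ := by ring
    have h2 : |(1 - N) * A s| ≤ M * η := by
      rw [abs_mul, abs_of_nonneg (by linarith)]
      calc (1 - N) * |A s| ≤ η * M := by
            gcongr
            nlinarith
        _ = _ := by ring
    have h3 : s * A' - A s ≤ M * (2 * η + r * N' / η) := by
      have a1 := (le_abs_self _).trans h1
      have a2 := neg_le_of_abs_le h2
      have : 0 < M * η := by positivity
      linarith
    have h4 : (s * A' - A s) / s ^ 2 ≤ M * (2 * η + r * N' / η) / r ^ 2 := by
      have : 0 ≤ M * (2 * η + r * N' / η) := by positivity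
      calc _ ≤ M * (2 * η + r * N' / η) / s ^ 2 := by gcongr
        _ ≤ _ := by gcongr; exact hs.1
    have e : (A' * id s - A s * 1) / id s ^ 2 = (s * A' - A s) / s ^ 2 := by simp only [id]; ring
    have e2 : M / r ^ 2 * (2 * η * 1 + r / η * N') = M * (2 * η + r * N' / η) / r ^ 2 := by
      field_simp
    show (A' * id s - A s * 1) / id s ^ 2 - M / r ^ 2 * (2 * η * 1 + r / η * N') ≤ 0
    rw [e, e2]; linarith
  have hanti : AntitoneOn G (Icc r (2 * r)) := by
    refine antitoneOn_of_deriv_nonpos (convex_Icc _ _) (fun s hs => ?_) (fun s hs => ?_)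
      (fun s hs => ?_)
    · obtain ⟨G', hg, -⟩ := hd s hs
      exact hg.continuousAt.continuousWithinAt
    · rw [interior_Icc] at hs
      obtain ⟨G', hg, -⟩ := hd s (Ioo_subset_Icc_self hs)
      exact hg.differentiableAt.differentiableWithinAt
    · rw [interior_Icc] at hs
      obtain ⟨G', hg, h0⟩ := hd s (Ioo_subset_Icc_self hs)
      rw [hg.deriv]; exact h0
  have hfin := hanti (left_mem_Icc.2 (by linarith)) (right_mem_Icc.2 (by linarith)) (by linarith)
  simp only [hG] at hfin
  have hA0 : A r = 0 := h0
  rw [hA0, zero_div] at hfin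
  have hN1 := h.N_le_one (r := 2 * r) (by linarith) x
  have h5 : A (2 * r) / (2 * r) ≤ M / r ^ 2 * (3 * η * r) := by
    have : M / r ^ 2 * (r / η * (NN u v (2 * r) x - NN u v r x)) ≤ M / r ^ 2 * (r / η * η ^ 2) := by
      gcongr; linarith
    have e : r / η * η ^ 2 = r * η := by field_simp
    rw [e] at this
    linarith
  rw [div_le_iff₀ (by positivity)] at h5
  calc A (2 * r) ≤ _ := h5
    _ = _ := by field_simp; ring

lemma abs_bilin_le {n : ℕ} {B : ℝ} (e : Euc n) (he : ‖e‖ = 1) (Z : Fin n → Fin n → ℝ)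
    (hb : ∀ i j, |Z i j| ≤ B) : |∑ i, e i * ∑ j, e j * Z i j| ≤ B * n ^ 2 := by
  have he1 : ∀ i, |e i| ≤ 1 := fun i => he ▸ abs_coord_le e i
  have h1 : ∀ i j, |e j * Z i j| ≤ B := fun i j => by
    rw [abs_mul]
    exact (mul_le_mul (he1 j) (hb i j) (abs_nonneg _) zero_le_one).trans_eq (one_mul B)
  have h2 : ∀ i, |∑ j, e j * Z i j| ≤ n * B := fun i => by
    refine (Finset.abs_sum_le_sum_abs (fun j => e j * Z i j) Finset.univ).trans ?_
    refine (Finset.sum_le_sum fun j _ => h1 i j).trans_eq ?_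
    simp
  have h3 : ∀ i, |e i * ∑ j, e j * Z i j| ≤ n * B := fun i => by
    rw [abs_mul]
    exact (mul_le_mul (he1 i) (h2 i) (abs_nonneg _) zero_le_one).trans_eq (one_mul _)
  refine (Finset.abs_sum_le_sum_abs (fun i => e i * ∑ j, e j * Z i j) Finset.univ).trans ?_
  refine (Finset.sum_le_sum fun i _ => h3 i).trans_eq ?_
  simp; ring

lemma Sol.abs_avg_hess_le {n : ℕ} {u v : Euc n → ℝ} (h : Sol u v) {r q : ℝ} (hr : 0 < r)
    (X : Euc n) (hq' : √(HH u v r X) ≤ 3 * q) (i j : Fin n) :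
    |avg (pd j (pd i fun z => u z - v z)) r X| ≤
      36 * (∫ y : Euc n, (1 + ‖y‖) ^ 3 ∂(gam n)) * q / r ^ 2 := by
  have hw := h.tu.sub h.tv
  rw [le_div_iff₀ (by positivity), ← abs_of_pos (show 0 < r ^ 2 by positivity), ← abs_mul,
    mul_comm, avg_hess hw]
  have tw := hw.affine X r
  calc _ ≤ ∫ y, |y j * (y i * (u (X + r • y) - v (X + r • y))) -
        (if j = i then 1 else 0) * (u (X + r • y) - v (X + r • y))| ∂(gam n) :=
        abs_integral_le_integral_abs
    _ ≤ ∫ y : Euc n, 36 * q * (1 + ‖y‖) ^ 3 ∂(gam n) := by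
      refine integral_mono (((Tmp.coord j).mul ((Tmp.coord i).mul tw)).sub
        ((Tmp.const _).mul tw)).int.abs ((int_weight 3).const_mul _) fun y => ?_
      have a1 : |u (X + r • y) - v (X + r • y)| ≤ 36 * (1 + ‖y‖) * q := by
        have b1 := h.s_le hr X y
        have b2 := h.pu (X + r • y)
        have b3 := h.pv (X + r • y)
        have b4 : 12 * (1 + ‖y‖) * √(HH u v r X) ≤ 12 * (1 + ‖y‖) * (3 * q) := by gcongr
        rw [abs_le]; constructor <;> linarith
      have a2 := abs_coord_le y i
      have a3 := abs_coord_le y j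
      have a4 := norm_nonneg y
      have a5 : |(if j = i then (1:ℝ) else 0)| ≤ 1 := by split_ifs <;> simp
      show |y j * (y i * (u (X + r • y) - v (X + r • y))) -
        (if j = i then 1 else 0) * (u (X + r • y) - v (X + r • y))| ≤ 36 * q * (1 + ‖y‖) ^ 3
      set W := u (X + r • y) - v (X + r • y)
      calc _ ≤ |y j * (y i * W)| + |(if j = i then 1 else 0) * W| := abs_sub _ _
        _ = |y j| * (|y i| * |W|) + |(if j = i then (1:ℝ) else 0)| * |W| := by
          rw [abs_mul, abs_mul, abs_mul]
        _ ≤ ‖y‖ * (‖y‖ * |W|) + 1 * |W| := by gcongr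
        _ = (‖y‖ ^ 2 + 1) * |W| := by ring
        _ ≤ (1 + ‖y‖) ^ 2 * (36 * (1 + ‖y‖) * q) := by gcongr; nlinarith
        _ = _ := by ring
    _ = _ := by rw [integral_const_mul]; ring

/-- Second derivatives of the average of `u - v` along a segment of length at most `r`. -/
lemma hess_bound (n : ℕ) : ∃ C : ℝ, 0 < C ∧ ∀ (u v : Euc n → ℝ), Sol u v →
    ∀ (r t : ℝ) (x e : Euc n), 0 < r → ‖e‖ = 1 → 0 ≤ t → t ≤ r →
    |∑ i, e i * ∑ j, e j * avg (pd j (pd i fun z => u z - v z)) r (x + t • e)| ≤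
      C * √(HH u v r x) / r ^ 2 := by
  have hM := one_le_weight (n := n) 3
  set M := ∫ y : Euc n, (1 + ‖y‖) ^ 3 ∂(gam n) with hMd
  have hM0 : 0 < M := by linarith
  refine ⟨36 * n ^ 2 * M + 1, by positivity, fun u v h r t x e hr he ht htr => ?_⟩
  have hH := h.H_pos r x
  set q := √(HH u v r x) with hq
  have hq0 : 0 < q := Real.sqrt_pos.2 hH
  have hq' : √(HH u v r (x + t • e)) ≤ 3 * q := by
    have h1 := h.H_translate hr x (t • e)
    have h2 : Real.exp (2 * ‖t • e‖ / r) ≤ 9 := by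
      refine le_trans (Real.exp_le_exp.2 ?_) exp2_le
      rw [norm_smul, he, mul_one, Real.norm_of_nonneg ht, div_le_iff₀ hr]; linarith
    rw [Real.sqrt_le_left (by positivity)]
    calc _ ≤ 9 * HH u v r x := h1.trans (by gcongr)
      _ = _ := by rw [mul_pow, hq, Real.sq_sqrt hH.le]; norm_num
  have hfin : 36 * M * q / r ^ 2 * n ^ 2 ≤ (36 * n ^ 2 * M + 1) * q / r ^ 2 := by
    rw [div_mul_eq_mul_div]
    refine div_le_div_of_nonneg_right ?_ (by positivity)
    linarith
  exact (abs_bilin_le e he _ fun i j =>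
    h.abs_avg_hess_le hr (x + t • e) hq' i j).trans hfin

/-! ### One doubling step along zeros of the averages of `u - v` -/

lemma taylor_lower {φ φ' φ'' : ℝ → ℝ} {T B : ℝ} (hT : 0 ≤ T) (h1 : ∀ t, HasDerivAt φ (φ' t) t)
    (h2 : ∀ t, HasDerivAt φ' (φ'' t) t) (hB : ∀ t, 0 ≤ t → t ≤ T → -B ≤ φ'' t) :
    φ 0 + φ' 0 * T - B * T ^ 2 / 2 ≤ φ T := by
  have m1 : MonotoneOn (fun t => φ' t + B * t) (Icc 0 T) := by
    have hd : ∀ t, HasDerivAt (fun t => φ' t + B * t) (φ'' t + B * 1) t := fun t =>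
      (h2 t).add ((hasDerivAt_id t).const_mul B)
    refine monotoneOn_of_deriv_nonneg (convex_Icc _ _)
      (fun t _ => (hd t).continuousAt.continuousWithinAt)
      (fun t _ => (hd t).differentiableAt.differentiableWithinAt) fun t ht => ?_
    rw [interior_Icc] at ht
    rw [(hd t).deriv]
    linarith [hB t ht.1.le ht.2.le]
  have m2 : MonotoneOn (fun t => φ t + (B * t ^ 2 / 2 - φ' 0 * t)) (Icc 0 T) := by
    have hd : ∀ t, HasDerivAt (fun t => φ t + (B * t ^ 2 / 2 - φ' 0 * t))
        (φ' t + (B * (2 * t) / 2 - φ' 0 * 1)) t := fun t => by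
      have a := (((hasDerivAt_pow 2 t).const_mul B).div_const 2).sub
        ((hasDerivAt_id t).const_mul (φ' 0))
      exact ((h1 t).add a).congr_deriv (by norm_num)
    refine monotoneOn_of_deriv_nonneg (convex_Icc _ _)
      (fun t _ => (hd t).continuousAt.continuousWithinAt)
      (fun t _ => (hd t).differentiableAt.differentiableWithinAt) fun t ht => ?_
    rw [interior_Icc] at ht
    rw [(hd t).deriv]
    have := m1 (left_mem_Icc.2 hT) (Ioo_subset_Icc_self ht) ht.1.le
    simp only at this
    linarith
  have := m2 (left_mem_Icc.2 hT) (right_mem_Icc.2 hT) hT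
  simp only at this
  linarith

/-- A zero of the average of `f` at scale `2r` near `x`, from a lower bound on the averaged gradient
and a bound on the second derivatives. -/
lemma find_zero {f : Euc n → ℝ} (hf : Tmp f) {r η M C : ℝ} (hr : 0 < r) (hη : 0 < η)
    (hη1 : η ≤ 1 / 100) (hM : 0 < M) (hC : 0 < C) (hCη : C * η ≤ 1 / 400) (x : Euc n)
    (hA : -(6 * η * M) ≤ avg f (2 * r) x) (hA0 : avg f (2 * r) x ≤ 0)
    (hg : M ^ 2 / 4 ≤ (2 * r) ^ 2 * ∑ i, avg (pd i f) (2 * r) x ^ 2)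
    (hh : ∀ (t : ℝ) (e : Euc n), ‖e‖ = 1 → 0 ≤ t → t ≤ 2 * r →
      |∑ i, e i * ∑ j, e j * avg (pd j (pd i f)) (2 * r) (x + t • e)| ≤ C * M / (2 * r) ^ 2) :
    ∃ x', avg f (2 * r) x' = 0 ∧ dist x' x ≤ 48 * η * r := by
  set g : Euc n := WithLp.toLp 2 fun i => avg (pd i f) (2 * r) x with hgd
  have hgi : ∀ i, g i = avg (pd i f) (2 * r) x := fun i => rfl
  have hgn : ‖g‖ ^ 2 = ∑ i, avg (pd i f) (2 * r) x ^ 2 := by rw [normsq_eq]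
  rw [← hgn] at hg
  have hgl : M / 4 ≤ r * ‖g‖ := by
    refine (abs_le_of_sq_le_sq' (a := M / 4) (b := r * ‖g‖) ?_ (by positivity)).2
    nlinarith
  have hg0 : 0 < ‖g‖ := by
    by_contra h
    have : ‖g‖ = 0 := le_antisymm (not_lt.1 h) (norm_nonneg _)
    rw [this] at hgl; linarith
  set e : Euc n := ‖g‖⁻¹ • g with he
  have he1 : ‖e‖ = 1 := by
    rw [he, norm_smul, norm_inv, norm_norm, inv_mul_cancel₀ hg0.ne']
  have hei : ∀ i, e i = ‖g‖⁻¹ * avg (pd i f) (2 * r) x := fun i => by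
    rw [he, PiLp.smul_apply, hgi, smul_eq_mul]
  set T := 48 * η * r with hT
  have hT0 : 0 ≤ T := by positivity
  have d1 : ∀ t, HasDerivAt (fun t => avg f (2 * r) (x + t • e))
      (∑ i, e i * avg (pd i f) (2 * r) (x + t • e)) t := fun t => avg_dir hf (2 * r) x e t
  have d2 : ∀ t, HasDerivAt (fun t => ∑ i, e i * avg (pd i f) (2 * r) (x + t • e))
      (∑ i, e i * ∑ j, e j * avg (pd j (pd i f)) (2 * r) (x + t • e)) t := fun t =>
    HasDerivAt.fun_sum fun i _ => (avg_dir (hf.pd i) (2 * r) x e t).const_mul (e i)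
  have ht := taylor_lower (B := C * M / (2 * r) ^ 2) hT0 d1 d2 fun t h0 h1 =>
    neg_le_of_abs_le (hh t e he1 h0 (by nlinarith))
  simp only [zero_smul, add_zero] at ht
  have hφ' : ∑ i, e i * avg (pd i f) (2 * r) x = ‖g‖ := by
    have : ∀ i, e i * avg (pd i f) (2 * r) x = ‖g‖⁻¹ * avg (pd i f) (2 * r) x ^ 2 := fun i => by
      rw [hei]; ring
    simp only [this]
    rw [← Finset.mul_sum, ← hgn]; field_simp
  rw [hφ'] at ht
  have hpos : 0 ≤ avg f (2 * r) (x + T • e) := by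
    refine le_trans ?_ ht
    have e1 : C * M / (2 * r) ^ 2 * T ^ 2 / 2 = 288 * η * M * (C * η) := by
      rw [hT]; field_simp; ring
    rw [e1]
    have e2 : 12 * η * M ≤ ‖g‖ * T := by rw [hT]; nlinarith
    have e3 : 288 * η * M * (C * η) ≤ 288 * η * M * (1 / 400) := by gcongr
    have : 0 < η * M := by positivity
    linarith
  have hcont : ContinuousOn (fun t => avg f (2 * r) (x + t • e)) (Icc 0 T) := fun t _ =>
    (d1 t).continuousAt.continuousWithinAt
  obtain ⟨t, htI, ht0⟩ := intermediate_value_Icc hT0 hcont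
    (show (0:ℝ) ∈ Icc _ _ from ⟨by simpa using hA0, hpos⟩)
  refine ⟨x + t • e, ht0, ?_⟩
  rw [dist_eq_norm, add_sub_cancel_left, norm_smul, he1, mul_one, Real.norm_of_nonneg htI.1]
  exact htI.2

lemma two_rpow_lower {η : ℝ} (hη : 0 < η) (hη1 : η ≤ 1) :
    4 * Real.exp (-(2 * η)) ≤ (2:ℝ) ^ (2 * (1 - η ^ 2)) := by
  have e : (2:ℝ) ^ (2 * (1 - η ^ 2)) = 4 * Real.exp (Real.log 2 * (-(2 * η ^ 2))) := by
    rw [show 2 * (1 - η ^ 2) = 2 + (-(2 * η ^ 2)) by ring, Real.rpow_add two_pos,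
      Real.rpow_def_of_pos two_pos (-(2 * η ^ 2))]
    norm_num
  rw [e]
  gcongr
  have h1 : Real.log 2 ≤ 1 := by linarith [Real.log_two_lt_d9]
  have h2 : 0 ≤ Real.log 2 := Real.log_nonneg (by norm_num)
  nlinarith

/-- From a zero of the average of `u - v` at scale `r` to a nearby zero at scale `2r`, with almost
quadratic growth of the height. -/
lemma step (n : ℕ) : ∃ C a : ℝ, 0 < C ∧ 0 < a ∧ ∀ (u v : Euc n → ℝ), Sol u v →
    ∀ (r : ℝ) (x : Euc n), 0 < r → avg (fun z => u z - v z) r x = 0 → 1 ≤ r ^ 2 * HH u v r x →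
    C * (r ^ 2 * HH u v r x) ^ (-a) ≤ 1 / 2 →
    ∃ x', avg (fun z => u z - v z) (2 * r) x' = 0 ∧
      dist x' x ≤ C * (r ^ 2 * HH u v r x) ^ (-a) * r ∧
      4 * Real.exp (-(C * (r ^ 2 * HH u v r x) ^ (-a))) * HH u v r x ≤ HH u v (2 * r) x' := by
  obtain ⟨C0, a0, hC0, ha0, -, key⟩ := almost_linear n
  obtain ⟨C2, hC2, hess⟩ := hess_bound n
  refine ⟨(50 + 200 * C2) * √C0, a0 / 2, by positivity, by positivity,
    fun u v h r x hr hA hκ hsm => ?_⟩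
  have hκ2 : r ^ 2 * HH u v r x ≤ (2 * r) ^ 2 * HH u v (2 * r) x := by
    have h1 := h.H_mono x (show (0:ℝ) ≤ r from hr.le) (show (0:ℝ) ≤ 2 * r by linarith) (by linarith)
    have h2 := (h.H_pos r x).le
    exact mul_le_mul (by nlinarith) h1 h2 (by positivity)
  obtain ⟨k1, -⟩ := key u v h r x hr hκ
  obtain ⟨-, k2⟩ := key u v h (2 * r) x (by linarith) (hκ.trans hκ2)
  have hk : C0 * ((2 * r) ^ 2 * HH u v (2 * r) x) ^ (-a0) ≤ C0 * (r ^ 2 * HH u v r x) ^ (-a0) := by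
    gcongr ?_ * ?_
    exact Real.rpow_le_rpow_of_nonpos (by linarith) hκ2 (by linarith)
  set κ := r ^ 2 * HH u v r x with hκd
  set η := √C0 * κ ^ (-(a0 / 2)) with hηd
  have hη : 0 < η := mul_pos (Real.sqrt_pos.2 hC0) (Real.rpow_pos_of_pos (by linarith) _)
  have hη2 : η ^ 2 = C0 * κ ^ (-a0) := by
    rw [hηd, mul_pow, Real.sq_sqrt hC0.le, ← Real.rpow_natCast, ← Real.rpow_mul (by linarith)]
    congr 2; push_cast; ring
  rw [mul_assoc (50 + 200 * C2), ← hηd] at hsm ⊢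
  have hη1 : η ≤ 1 / 100 := by nlinarith
  have hCη : C2 * η ≤ 1 / 400 := by nlinarith
  rw [← hη2] at k1 hk
  have hH1 := h.H_pos r x
  have hH2 := h.H_pos (2 * r) x
  have hN : 1 - η ^ 2 ≤ NN u v r x := by
    rw [hA, h.D_eq_NH] at k1
    refine le_of_mul_le_mul_left ?_ hH1
    linarith
  have dr1 := h.drift hr hη (by linarith) x hA hN
  have dr2 := h.symm.drift hr hη (by linarith) x (by rw [avg_w_symm h, hA, neg_zero])
    (by rw [NN_symm]; exact hN)
  rw [avg_w_symm h, HH_symm] at dr2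
  set M := √(HH u v (2 * r) x) with hM
  have hM0 : 0 < M := Real.sqrt_pos.2 hH2
  have hM2 : HH u v (2 * r) x = M ^ 2 := (Real.sq_sqrt hH2.le).symm
  set A := avg (fun z => u z - v z) (2 * r) x with hAd
  have hA2 : A ^ 2 ≤ (6 * η * M) ^ 2 := sq_le_sq' (by linarith) dr1
  have hg : M ^ 2 / 4 ≤ (2 * r) ^ 2 * ∑ i, avg (pd i fun z => u z - v z) (2 * r) x ^ 2 := by
    have h1 : HH u v (2 * r) x * (1 - η ^ 2) ≤ HH u v (2 * r) x *
      (1 - C0 * ((2 * r) ^ 2 * HH u v (2 * r) x) ^ (-a0)) := by gcongr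
    have h2 := h1.trans k2
    rw [hM2] at h2
    have h3 : η ^ 2 ≤ 1 / 10000 := by nlinarith
    have h4 : M ^ 2 * η ^ 2 ≤ M ^ 2 * (1 / 10000) := by gcongr
    nlinarith
  have hex : ∃ x', avg (fun z => u z - v z) (2 * r) x' = 0 ∧ dist x' x ≤ 48 * η * r := by
    rcases le_total A 0 with hA0 | hA0
    · exact find_zero (h.tu.sub h.tv) hr hη hη1 hM0 hC2 hCη x (by linarith) hA0 hg
        fun t e he h0 h1 => hess u v h (2 * r) t x e (by linarith) he h0 h1
    · have hpd : ∀ i, avg (pd i fun z => v z - u z) (2 * r) x =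
          - avg (pd i fun z => u z - v z) (2 * r) x := by
        intro i
        rw [pd_sub h.tv.diff h.tu.diff, pd_sub h.tu.diff h.tv.diff, avg_sub (h.tv.pd i) (h.tu.pd i),
          avg_sub (h.tu.pd i) (h.tv.pd i)]
        ring
      obtain ⟨x', h1, h2⟩ := find_zero (h.tv.sub h.tu) hr hη hη1 hM0 hC2 hCη x
        (by rw [avg_w_symm h]; linarith) (by rw [avg_w_symm h]; linarith)
        (by simp only [hpd, neg_sq]; exact hg)
        fun t e he h0 h1 => by
          have := hess v u h.symm (2 * r) t x e (by linarith) he h0 h1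
          rwa [HH_symm] at this
      exact ⟨x', by rw [avg_w_symm h] at h1; linarith, h2⟩
  obtain ⟨x', hx0, hxd⟩ := hex
  have hC3 : 50 * η ≤ (50 + 200 * C2) * η := by gcongr; linarith
  refine ⟨x', hx0, hxd.trans (by gcongr; linarith), ?_⟩
  have t1 := h.H_translate' (r := 2 * r) (by linarith) x' x
  have t2 := h.H_lower hr (show r ≤ 2 * r by linarith) x hN
  rw [mul_div_assoc, div_self hr.ne', mul_one] at t2
  have t3 : Real.exp (2 * dist x x' / (2 * r)) ≤ Real.exp (48 * η) := by
    rw [Real.exp_le_exp, div_le_iff₀ (by positivity), dist_comm]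
    linarith
  have t4 := two_rpow_lower hη (by linarith)
  have t5 : 4 * Real.exp (-(2 * η)) * HH u v r x ≤ Real.exp (48 * η) * HH u v (2 * r) x' :=
    calc _ ≤ _ := mul_le_mul_of_nonneg_right t4 hH1.le
      _ ≤ _ := t2
      _ ≤ _ := t1
      _ ≤ _ := mul_le_mul_of_nonneg_right t3 (h.H_pos _ _).le
  calc _ ≤ 4 * Real.exp (-(50 * η)) * HH u v r x := by gcongr
    _ = Real.exp (-(48 * η)) * (4 * Real.exp (-(2 * η)) * HH u v r x) := by
      rw [show -(50 * η) = -(48 * η) + -(2 * η) by ring, Real.exp_add]; ring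
    _ ≤ Real.exp (-(48 * η)) * (Real.exp (48 * η) * HH u v (2 * r) x') := by gcongr
    _ = HH u v (2 * r) x' := by rw [← mul_assoc, ← Real.exp_add]; simp

/-! ### Iteration of the doubling step -/

/-- At a zero of the average of `u - v`, the height grows at most quadratically, with a constant that
does not depend on the centre. Along the zeros produced by `step` the quantity `κ` gains a factor of
at least `8` per doubling, so the losses form a geometric series with ratio `q = 8^{-a}`; the growth
at infinity then bounds the height at the starting scale. -/
lemma zbound (n : ℕ) : ∃ K : ℝ, 1 ≤ K ∧ ∀ (u v : Euc n → ℝ), Sol u v → ∃ C : ℝ, 0 < C ∧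
    ∀ (r : ℝ) (x : Euc n), 0 < r → avg (fun z => u z - v z) r x = 0 → K ≤ r ^ 2 * HH u v r x →
    HH u v r x ≤ C * r ^ 2 := by
  obtain ⟨C, a, hC, ha, step⟩ := step n
  set K := max 1 ((2 * C) ^ (1 / a)) with hK
  have hK1 : 1 ≤ K := le_max_left _ _
  have hKC : C * K ^ (-a) ≤ 1 / 2 := by
    have h1 : K ^ (-a) ≤ ((2 * C) ^ (1 / a)) ^ (-a) :=
      Real.rpow_le_rpow_of_nonpos (by positivity) (le_max_right _ _) (by linarith)
    rw [← Real.rpow_mul (by positivity), show 1 / a * -a = -1 by field_simp,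
      Real.rpow_neg_one] at h1
    calc _ ≤ C * (2 * C)⁻¹ := by gcongr
      _ = 1 / 2 := by field_simp
  set q : ℝ := (8:ℝ) ^ (-a) with hq
  have hq0 : 0 < q := by positivity
  have hq1 : q < 1 := Real.rpow_lt_one_of_one_lt_of_neg (by norm_num) (by linarith)
  set S := 1 / (2 * (1 - q)) with hS
  have hS0 : 0 < S := by have : 0 < 1 - q := by linarith
                         positivity
  have hSq : S * (1 - q) = 1 / 2 := by
    have : 1 - q ≠ 0 := by linarith
    rw [hS]; field_simp
  refine ⟨K, hK1, fun u v h => ?_⟩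
  obtain ⟨Cg, hCg, hgrow⟩ := h.H_growth
  refine ⟨Real.exp S * (4 * Cg), by positivity, fun r x hr hA hκ => ?_⟩
  have hH := h.H_pos r x
  -- the loss up to step `k` is `∑_{i<k} qⁱ / 2 = S (1 - q ^ k)`
  have ind : ∀ k : ℕ, ∃ y, avg (fun z => u z - v z) (2 ^ k * r) y = 0 ∧
      8 ^ k * K ≤ (2 ^ k * r) ^ 2 * HH u v (2 ^ k * r) y ∧ dist y x ≤ 2 ^ k * r ∧
      HH u v r x * 4 ^ k * Real.exp (-(S * (1 - q ^ k))) ≤ HH u v (2 ^ k * r) y := by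
    intro k
    induction k with
    | zero => exact ⟨x, by simpa using hA, by simpa using hκ, by simpa using hr.le, by simp⟩
    | succ k ih =>
      obtain ⟨y, h1, h2, h3, h4⟩ := ih
      have hρ : 0 < 2 ^ k * r := by positivity
      have h8 : (1:ℝ) ≤ 8 ^ k := one_le_pow₀ (by norm_num)
      have hsm : C * ((2 ^ k * r) ^ 2 * HH u v (2 ^ k * r) y) ^ (-a) ≤ q ^ k / 2 := by
        have e1 : ((2 ^ k * r) ^ 2 * HH u v (2 ^ k * r) y) ^ (-a) ≤ (8 ^ k * K) ^ (-a) :=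
          Real.rpow_le_rpow_of_nonpos (by positivity) h2 (by linarith)
        have e2 : ((8:ℝ) ^ k * K) ^ (-a) = q ^ k * K ^ (-a) := by
          rw [Real.mul_rpow (by positivity) (by positivity), hq, ← Real.rpow_natCast,
            ← Real.rpow_natCast, ← Real.rpow_mul (by norm_num), ← Real.rpow_mul (by norm_num),
            mul_comm (k:ℝ)]
        have e3 : q ^ k * (C * K ^ (-a)) ≤ q ^ k * (1 / 2) := by gcongr
        calc _ ≤ C * (q ^ k * K ^ (-a)) := by rw [← e2]; gcongr
          _ ≤ _ := by linarith
      have hqk : q ^ k ≤ 1 := pow_le_one₀ hq0.le hq1.le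
      obtain ⟨x', s1, s2, s3⟩ := step u v h (2 ^ k * r) y hρ h1 (by nlinarith) (by linarith)
      have hHk := h.H_pos (2 ^ k * r) y
      have e2 : 2 ^ (k + 1) * r = 2 * (2 ^ k * r) := by ring
      set ε := C * ((2 ^ k * r) ^ 2 * HH u v (2 ^ k * r) y) ^ (-a) with hε
      have s4 : 4 * Real.exp (-(q ^ k / 2)) * HH u v (2 ^ k * r) y ≤ HH u v (2 * (2 ^ k * r)) x' :=
        le_trans (by gcongr) s3
      rw [e2]
      refine ⟨x', s1, ?_, ?_, ?_⟩
      · have e3 : 1 / 2 ≤ Real.exp (-(q ^ k / 2)) := by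
          have := Real.add_one_le_exp (-(q ^ k / 2)); linarith
        have e4 : 2 * HH u v (2 ^ k * r) y ≤ HH u v (2 * (2 ^ k * r)) x' := by nlinarith
        calc 8 ^ (k + 1) * K = 8 * (8 ^ k * K) := by ring
          _ ≤ 8 * ((2 ^ k * r) ^ 2 * HH u v (2 ^ k * r) y) := by gcongr
          _ = (2 * (2 ^ k * r)) ^ 2 * (2 * HH u v (2 ^ k * r) y) := by ring
          _ ≤ _ := mul_le_mul_of_nonneg_left e4 (by positivity)
      · have := dist_triangle x' y x
        have : ε * (2 ^ k * r) ≤ 1 / 2 * (2 ^ k * r) := by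
          gcongr; linarith
        linarith
      · have e5 : -(S * (1 - q ^ (k + 1))) = -(q ^ k / 2) + -(S * (1 - q ^ k)) := by
          have : S * (1 - q) * q ^ k = 1 / 2 * q ^ k := by rw [hSq]
          rw [pow_succ]; linarith
        rw [e5, Real.exp_add]
        calc _ = 4 * Real.exp (-(q ^ k / 2)) *
              (HH u v r x * 4 ^ k * Real.exp (-(S * (1 - q ^ k)))) := by ring
          _ ≤ 4 * Real.exp (-(q ^ k / 2)) * HH u v (2 ^ k * r) y := by gcongr
          _ ≤ _ := s4
  have bd : ∀ k : ℕ, HH u v r x * Real.exp (-S) ≤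
      Cg * ((1 + ‖x‖) * (1 / 2) ^ k + 2 * r) ^ 2 := by
    intro k
    obtain ⟨y, -, -, h3, h4⟩ := ind k
    have g := hgrow y (2 ^ k * r) (by positivity)
    have hy : ‖y‖ ≤ ‖x‖ + 2 ^ k * r := by
      have h5 := norm_add_le x (y - x)
      rw [dist_eq_norm] at h3
      rw [add_sub_cancel] at h5
      linarith
    have e1 : Cg * (1 + ‖y‖ + 2 ^ k * r) ^ 2 ≤ Cg * (1 + ‖x‖ + 2 * (2 ^ k * r)) ^ 2 :=
      mul_le_mul_of_nonneg_left (pow_le_pow_left₀ (by positivity) (by linarith) 2) hCg.le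
    have e2 : Real.exp (-S) ≤ Real.exp (-(S * (1 - q ^ k))) := by
      rw [Real.exp_le_exp]
      have : 0 < S * q ^ k := by positivity
      linarith
    have e3 : HH u v r x * 4 ^ k * Real.exp (-S) ≤ HH u v r x * 4 ^ k *
      Real.exp (-(S * (1 - q ^ k))) := by gcongr
    have e4 := (e3.trans h4).trans (g.trans e1)
    have e5 : Cg * (1 + ‖x‖ + 2 * (2 ^ k * r)) ^ 2 =
        4 ^ k * (Cg * ((1 + ‖x‖) * (1 / 2) ^ k + 2 * r) ^ 2) := by
      have : (1 + ‖x‖ + 2 * (2 ^ k * r)) = 2 ^ k * ((1 + ‖x‖) * (1 / 2) ^ k + 2 * r) := by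
        have : (2:ℝ) ^ k * (1 / 2) ^ k = 1 := by rw [← mul_pow]; norm_num
        linear_combination (-(1 + ‖x‖)) * this
      rw [this, mul_pow, ← pow_mul, mul_comm k 2, pow_mul]; norm_num; ring
    rw [e5] at e4
    refine le_of_mul_le_mul_left ?_ (show (0:ℝ) < 4 ^ k by positivity)
    linarith
  have lim : Tendsto (fun k : ℕ => Cg * ((1 + ‖x‖) * (1 / 2) ^ k + 2 * r) ^ 2) atTop
      (𝓝 (Cg * ((1 + ‖x‖) * 0 + 2 * r) ^ 2)) :=
    (((tendsto_const_nhds.mul (tendsto_pow_atTop_nhds_zero_of_lt_one (by norm_num)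
      (by norm_num))).add tendsto_const_nhds).pow 2).const_mul Cg
  have := ge_of_tendsto' lim bd
  calc HH u v r x = Real.exp S * (HH u v r x * Real.exp (-S)) := by
        rw [Real.exp_neg]; field_simp
    _ ≤ Real.exp S * (Cg * ((1 + ‖x‖) * 0 + 2 * r) ^ 2) := by gcongr
    _ = _ := by ring

/-! ### A lower bound with a compactly supported kernel -/

lemma gw_le_one (y : Euc n) : gw y ≤ 1 := by
  unfold gw
  rw [Real.exp_le_one_iff]
  nlinarith [sq_nonneg ‖y‖]

/-- The compactly supported analogue of `mean_lower`. -/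
lemma bump_lower (n : ℕ) : ∃ c : ℝ, 0 < c ∧ ∀ (u v : Euc n → ℝ), Sol u v → ∀ (s : ℝ) (x : Euc n),
    0 < s → c * √(HH u v s x) ≤ ∫ y, (u (x + s • y) + v (x + s • y)) * bump 3 y := by
  obtain ⟨c0, hc0, hmean⟩ := mean_lower n
  set W := ∫ y : Euc n, (1 + ‖y‖) ^ 2 ∂(gam n) with hW
  have hW1 : 1 ≤ W := one_le_weight 2
  set L := max 1 (24 * W / c0) with hL
  have hL1 : 1 ≤ L := le_max_left _ _
  have hLW : 12 * W / L ≤ c0 / 2 := by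
    have : 24 * W / c0 ≤ L := le_max_right _ _
    rw [div_le_iff₀ hc0] at this
    rw [div_le_iff₀ (by linarith)]; linarith
  have hZ : 0 < gZ n := gZ_pos
  set c := c0 / (4 * L) / (16 * ((gZ n)⁻¹ * (2 * L) ^ n)) with hc
  refine ⟨c, by positivity, fun u v h s x hs => ?_⟩
  set r := s / (2 * L) with hr
  have hr0 : 0 < r := by positivity
  have hsr : s = 2 * L * r := by rw [hr]; field_simp
  set f : Euc n → ℝ := fun z => u z + v z with hf
  have tf : Tmp f := h.tu.add h.tv
  have f0 : ∀ z, 0 < f z := fun z => add_pos (h.pu z) (h.pv z)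
  set Q := √(HH u v r x) with hQ
  have hQ0 : 0 ≤ Q := Real.sqrt_nonneg _
  set b : Euc n → ℝ := fun y => bump 3 ((2 * L)⁻¹ • y) with hb
  have cb : Continuous b := (bump_cont 3).comp (continuous_const_smul _)
  have b0 : ∀ y, 0 ≤ b y := fun y => bump_nonneg 3 _
  have cf : Continuous fun y => f (x + r • y) := (tf.affine x r).cont
  have pb : PB fun y => f (x + r • y) * b y := by
    refine (tf.affine x r).pb.mono fun y => ?_
    rw [abs_mul, abs_of_nonneg (b0 y)]
    exact mul_le_of_le_one_right (abs_nonneg _) (bump_le_one 3 _)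
  have ib : Integrable (fun y => f (x + r • y) * b y) (gam n) := pb.integrable (cf.mul cb)
  have h1 : avg f r x ≤ 8 * ∫ y, f (x + r • y) * b y ∂(gam n) + 12 * W / L * Q := by
    have e : 12 * W / L * Q = ∫ y : Euc n, 12 * Q / L * (1 + ‖y‖) ^ 2 ∂(gam n) := by
      rw [integral_const_mul]; ring
    rw [e, ← integral_const_mul, ← integral_add (ib.const_mul 8) ((int_weight 2).const_mul _)]
    refine integral_mono (tf.affine x r).int ((ib.const_mul 8).add ((int_weight 2).const_mul _))
      fun y => ?_
    show f (x + r • y) ≤ 8 * (f (x + r • y) * b y) + 12 * Q / L * (1 + ‖y‖) ^ 2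
    have hfy := f0 (x + r • y)
    have hn := norm_nonneg y
    rcases le_total ‖y‖ L with hy | hy
    · have : 1 / 8 ≤ b y := by
        have e1 : ‖(2 * L)⁻¹ • y‖ ≤ 1 / 2 := by
          rw [norm_smul, norm_inv, Real.norm_of_nonneg (by positivity), inv_mul_le_iff₀
            (by positivity)]
          linarith
        have e2 : 1 / 2 ≤ max (1 - ‖(2 * L)⁻¹ • y‖ ^ 2) 0 := by
          refine le_max_of_le_left ?_
          nlinarith [norm_nonneg ((2 * L)⁻¹ • y)]
        show 1 / 8 ≤ max (1 - ‖(2 * L)⁻¹ • y‖ ^ 2) 0 ^ 3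
        calc (1:ℝ) / 8 = (1 / 2) ^ 3 := by norm_num
          _ ≤ _ := by gcongr
      have : f (x + r • y) * (1 / 8) ≤ f (x + r • y) * b y := by gcongr
      have : 0 ≤ 12 * Q / L * (1 + ‖y‖) ^ 2 := by positivity
      linarith
    · have e1 := h.s_le hr0 x y
      have e2 : 12 * (1 + ‖y‖) * Q ≤ 12 * Q / L * (1 + ‖y‖) ^ 2 := by
        rw [div_mul_eq_mul_div, le_div_iff₀ (by linarith)]
        have : 12 * (1 + ‖y‖) * Q * L ≤ 12 * (1 + ‖y‖) * Q * (1 + ‖y‖) := by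
          gcongr; linarith
        linarith
      have : 0 ≤ f (x + r • y) * b y := mul_nonneg hfy.le (b0 y)
      have e3 : f (x + r • y) ≤ 12 * (1 + ‖y‖) * Q := e1
      linarith
  have hcs : HasCompactSupport b := by
    have : (2 * L)⁻¹ ≠ 0 := by positivity
    exact (bump_supp 2).comp_smul this
  have hI : Integrable fun y => f (x + r • y) * b y :=
    (cf.mul cb).integrable_of_hasCompactSupport hcs.mul_left
  have h2 : ∫ y, f (x + r • y) * b y ∂(gam n) ≤
      (gZ n)⁻¹ * (2 * L) ^ n * ∫ y, f (x + s • y) * bump 3 y := by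
    rw [integral_gam, mul_assoc]
    refine mul_le_mul_of_nonneg_left ?_ (by positivity)
    have e1 : ∫ y, f (x + r • y) * b y = (2 * L) ^ n * ∫ y, f (x + s • y) * bump 3 y := by
      have := Measure.integral_comp_smul volume
        (fun y : Euc n => f (x + s • y) * bump 3 y) (2 * L)⁻¹
      rw [finrank_euclideanSpace_fin, inv_pow, inv_inv, abs_of_pos (by positivity),
        smul_eq_mul] at this
      rw [← this]
      congr 1; ext y
      rw [smul_smul, show s * (2 * L)⁻¹ = r by rw [hr]; ring]
    rw [← e1]
    refine integral_mono (integrable_gam_iff.1 ib) hI fun y => ?_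
    exact mul_le_of_le_one_right (mul_nonneg (f0 _).le (b0 y)) (gw_le_one y)
  have h3 := hmean u v h r x hr0
  have h4 : 12 * W / L * Q ≤ c0 / 2 * Q := by gcongr
  have h5 : √(HH u v s x) ≤ 4 * L * Q := by
    rw [Real.sqrt_le_left (by positivity), mul_pow, hQ, Real.sq_sqrt (h.H_pos r x).le]
    have a1 := h.H_upper hr0 (show r ≤ s by rw [hsr]; nlinarith) x
    have a2 : s / r = 2 * L := by rw [hsr]; field_simp
    rw [a2] at a1
    have a3 := exp1_le
    have a4 := (h.H_pos r x)
    calc _ ≤ _ := a1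
      _ ≤ 3 * (2 * L) ^ 2 * HH u v r x := by gcongr
      _ ≤ _ := by nlinarith [mul_pos (show 0 < L ^ 2 by positivity) a4]
  set J := ∫ y, f (x + s • y) * bump 3 y with hJ
  have h6 : c0 / 2 * Q ≤ 8 * ((gZ n)⁻¹ * (2 * L) ^ n * J) := by
    have : c0 * Q ≤ avg f r x := h3
    linarith
  calc c * √(HH u v s x) ≤ c * (4 * L * Q) := by gcongr
    _ = (c0 / 2 * Q) / (8 * ((gZ n)⁻¹ * (2 * L) ^ n)) := by rw [hc]; field_simp; ring
    _ ≤ J := by rw [div_le_iff₀ (by positivity)]; linarith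

/-! ### Decay of the smaller component -/

/-- On a ball where `v` is small compared with the size of the solution, `u` is large on a fixed
proportion of the ball, where `v` is then at most of order `1 / s`; the sub-mean value property
improves the supremum bound for `v`. -/
lemma descent_step (n : ℕ) : ∃ c B δ : ℝ, 0 < c ∧ c < 1 ∧ 0 < B ∧ 0 < δ ∧
    ∀ (u v : Euc n → ℝ), Sol u v → ∀ (s S : ℝ) (x : Euc n), 0 < s → 0 ≤ S →
    (∀ y ∈ closedBall x s, v y ≤ S) → (∀ y ∈ closedBall x s, v y ≤ δ * √(HH u v s x)) →
    v x ≤ (1 - c) * S + B / s := by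
  obtain ⟨c0, hc0, hlow⟩ := bump_lower n
  obtain ⟨ν, hν, -, dich⟩ := dicho n
  set M := ∫ y : Euc n, bump 3 y with hM
  have hM0 : 0 < M := bump_mass_pos 2
  set c := min c0 (24 * M) with hc
  have hcp : 0 < c := lt_min hc0 (by positivity)
  have hcM : c ≤ 24 * M := min_le_right _ _
  set θ := (c / (100 * M)) ^ (1 / ν) with hθ
  have hθ0 : 0 < θ := by positivity
  have hcM1 : c / (100 * M) ≤ 1 := by rw [div_le_one (by positivity)]; linarith
  have hθ1 : θ ≤ 1 := Real.rpow_le_one (by positivity) hcM1 (by positivity)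
  have hθν : θ ^ ν = c / (100 * M) := by
    rw [hθ, ← Real.rpow_mul (by positivity), one_div_mul_cancel hν.ne', Real.rpow_one]
  refine ⟨c / (48 * M), (2 * n + 8) / θ, c / (8 * M), by positivity, ?_, by positivity,
    by positivity, fun u v h s S x hs hS hvS hvδ => ?_⟩
  · rw [div_lt_one (by positivity)]; linarith
  set Q := √(HH u v s x) with hQ
  have hQ0 : 0 < Q := Real.sqrt_pos.2 (h.H_pos s x)
  set t := c * Q / (2 * M) with ht
  set B := (2 * n + 8) / θ / s with hB
  have hB0 : 0 ≤ B := by positivity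
  have low : c * Q ≤ ∫ y, (u (x + s • y) + v (x + s • y)) * bump 3 y :=
    le_trans (by gcongr; exact min_le_left _ _) (hlow u v h s x hs)
  have sub := submean h.tv.1 h.lv x hs.le
  have iv : Integrable fun y => v (x + s • y) * bump 3 y := bump_int (h.tv.affine x s).cont 2
  have ifm : Integrable fun y => (u (x + s • y) + v (x + s • y)) * bump 3 y :=
    bump_int ((h.tu.affine x s).add (h.tv.affine x s)).cont 2
  have ib : Integrable fun y : Euc n => bump 3 y := by
    simpa using bump_int (n := n) (F := fun _ => 1) continuous_const 2
  -- an affine interpolation of the bounds `v ≤ S` where `u + v < t` and `v ≤ B` elsewhere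
  have pt : ∀ y, v (x + s • y) * bump 3 y ≤
      (S * (1 + t / (24 * Q)) + B) * bump 3 y -
        S / (24 * Q) * ((u (x + s • y) + v (x + s • y)) * bump 3 y) := by
    intro y
    by_cases hy : y ∈ closedBall (0 : Euc n) 1
    swap
    · rw [bump_zero (m := 2) hy]; simp
    have hy1 : ‖y‖ ≤ 1 := by simpa using hy
    have hmem : x + s • y ∈ closedBall x s := by
      rw [mem_closedBall, dist_eq_norm, add_sub_cancel_left, norm_smul, Real.norm_of_nonneg hs.le]
      exact mul_le_of_le_one_right hs.le hy1
    have f24 : u (x + s • y) + v (x + s • y) ≤ 24 * Q := by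
      refine (h.s_le hs x y).trans ?_
      gcongr; linarith
    have hd := dich u v h s (θ * s) x y (by positivity) (mul_le_of_le_one_left hs.le hθ1)
    have h1 := hvS _ hmem
    have h2 := hvδ _ hmem
    have hvp := h.pv (x + s • y)
    set U := u (x + s • y)
    set V := v (x + s • y)
    have key : V ≤ S * (1 + t / (24 * Q)) + B - S / (24 * Q) * (U + V) := by
      have e : S * (1 + t / (24 * Q)) - S / (24 * Q) * (U + V) =
          S * (1 + (t - (U + V)) / (24 * Q)) := by ring
      rcases lt_or_ge (U + V) t with hf | hf
      · have : 0 ≤ (t - (U + V)) / (24 * Q) := div_nonneg (by linarith) (by positivity)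
        have : S * 1 ≤ S * (1 + (t - (U + V)) / (24 * Q)) := by gcongr; linarith
        linarith
      · have hV4 : V ≤ t / 4 := h2.trans_eq (by rw [ht]; ring)
        have ht0 : 0 < t := by positivity
        have hUV : V ≤ U := by linarith
        rw [mul_div_assoc, div_self hs.ne', mul_one, hθν, max_eq_left hUV, min_eq_right hUV] at hd
        have hVB : V ≤ B := by
          rcases hd with hd | hd
          · exfalso
            have a1 : 16 * (1 + ‖y‖) * (c / (100 * M)) * Q ≤ 16 * (1 + 1) * (c / (100 * M)) * Q := by
              gcongr
            have a2 : 16 * (1 + 1) * (c / (100 * M)) * Q = 16 / 25 * t := by rw [ht]; field_simp; ring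
            linarith
          · exact hd.trans_eq (by rw [hB]; field_simp)
        have : 0 ≤ 1 + (t - (U + V)) / (24 * Q) := by
          have : -1 ≤ (t - (U + V)) / (24 * Q) := by
            rw [le_div_iff₀ (by positivity)]; linarith
          linarith
        have := mul_nonneg hS this
        linarith
    calc V * bump 3 y ≤ _ := mul_le_mul_of_nonneg_right key (bump_nonneg 3 y)
      _ = _ := by ring
  have i1 : ∫ y, v (x + s • y) * bump 3 y ≤ (S * (1 + t / (24 * Q)) + B) * M -
      S / (24 * Q) * ∫ y, (u (x + s • y) + v (x + s • y)) * bump 3 y := by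
    rw [hM, ← integral_const_mul, ← integral_const_mul, ← integral_sub (ib.const_mul _)
      (ifm.const_mul _)]
    exact integral_mono iv ((ib.const_mul _).sub (ifm.const_mul _)) pt
  have i2 : S / (24 * Q) * (c * Q) ≤
      S / (24 * Q) * ∫ y, (u (x + s • y) + v (x + s • y)) * bump 3 y := by gcongr
  have i3 : v x * M ≤ (S * (1 + t / (24 * Q)) + B) * M - S / (24 * Q) * (c * Q) := by linarith
  have e : (S * (1 + t / (24 * Q)) + B) * M - S / (24 * Q) * (c * Q) =
      ((1 - c / (48 * M)) * S + B) * M := by rw [ht]; field_simp; ring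
  rw [e] at i3
  exact le_of_mul_le_mul_right i3 hM0

/-- Iteration of `descent_step` on `k` concentric balls whose radii decrease by `r / (2k)`. -/
lemma descent (n : ℕ) : ∃ τ C : ℝ, 0 < τ ∧ 0 < C ∧
    ∀ (u v : Euc n → ℝ), Sol u v → ∀ (r S : ℝ) (x : Euc n), 0 < r → 0 ≤ S → S ≤ τ * √(HH u v r x) →
    (∀ y ∈ closedBall x r, v y ≤ S) → ∀ y ∈ closedBall x (r / 2), v y ≤ S / 8 + C / r := by
  obtain ⟨c, B, δ, hc, hc1, hB, hδ, ds⟩ := descent_step n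
  obtain ⟨k0, hk0⟩ := exists_pow_lt_of_lt_one (show (0:ℝ) < 1 / 8 by norm_num)
    (show 1 - c < 1 by linarith)
  set k := k0 + 1 with hk
  have hk8 : (1 - c) ^ k ≤ 1 / 8 :=
    (pow_le_pow_of_le_one (by linarith) (by linarith) (Nat.le_succ k0)).trans hk0.le
  have hkpos : (0:ℝ) < k := by rw [hk]; positivity
  set l : ℝ := 1 / (2 * k) with hl
  have hl0 : 0 < l := by positivity
  have hkl : k * l = 1 / 2 := by rw [hl]; field_simp
  have hl1 : l ≤ 1 := by
    have : (1:ℝ) ≤ k := by rw [hk]; push_cast; linarith [Nat.cast_nonneg (α := ℝ) k0]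
    rw [hl, div_le_one (by positivity)]; linarith
  refine ⟨δ * l / 6, k * (B / l), by positivity, by positivity,
    fun u v h r S x hr hS hSτ hv => ?_⟩
  have hs0 : 0 < l * r := by positivity
  have hcmp : ∀ y ∈ closedBall x r, √(HH u v r x) ≤ 6 / l * √(HH u v (l * r) y) := by
    intro y hy
    have hH := h.H_pos (l * r) y
    rw [Real.sqrt_le_left (by positivity), mul_pow, Real.sq_sqrt hH.le]
    have a1 := h.H_translate' hr y x
    have a2 : Real.exp (2 * dist x y / r) ≤ 9 := by
      refine le_trans (Real.exp_le_exp.2 ?_) exp2_le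
      rw [dist_comm, div_le_iff₀ hr]
      have : dist y x ≤ r := hy
      linarith
    have a3 := h.H_upper hs0 (mul_le_of_le_one_left hr.le hl1) y
    rw [show r / (l * r) = 1 / l by field_simp] at a3
    have a4 := exp1_le
    have a5 := h.H_pos r y
    calc _ ≤ _ := a1
      _ ≤ 9 * HH u v r y := by gcongr
      _ ≤ 9 * (Real.exp 1 * (1 / l) ^ 2 * HH u v (l * r) y) := by gcongr
      _ ≤ 9 * (3 * (1 / l) ^ 2 * HH u v (l * r) y) := by gcongr
      _ ≤ (6 / l) ^ 2 * HH u v (l * r) y := by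
        have e : (6 / l) ^ 2 = 36 * (1 / l) ^ 2 := by ring
        rw [e]
        have : 0 < (1 / l) ^ 2 * HH u v (l * r) y := by positivity
        linarith
  have ind : ∀ j : ℕ, j ≤ k → ∀ y ∈ closedBall x (r - j * (l * r)),
      v y ≤ (1 - c) ^ j * S + j * (B / (l * r)) := by
    intro j
    induction j with
    | zero => intro _ y hy; simpa using hv y (by simpa using hy)
    | succ j ih =>
      intro hj y hy
      rw [mem_closedBall] at hy
      push_cast at hy
      have hsub : ∀ w ∈ closedBall y (l * r), w ∈ closedBall x (r - j * (l * r)) := by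
        intro w hw
        rw [mem_closedBall] at hw ⊢
        have := dist_triangle w y x
        linarith
      have hsub2 : ∀ w ∈ closedBall y (l * r), w ∈ closedBall x r := by
        intro w hw
        refine closedBall_subset_closedBall ?_ (hsub w hw)
        have : 0 ≤ j * (l * r) := by positivity
        linarith
      have hyr : y ∈ closedBall x r := hsub2 y (mem_closedBall_self hs0.le)
      have hSb : S ≤ δ * √(HH u v (l * r) y) := by
        refine hSτ.trans ?_
        calc _ ≤ δ * l / 6 * (6 / l * √(HH u v (l * r) y)) := by gcongr; exact hcmp y hyr
          _ = _ := by field_simp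
      have hSj : 0 ≤ (1 - c) ^ j * S + j * (B / (l * r)) := by
        have : 0 ≤ (1 - c) ^ j := pow_nonneg (by linarith) _
        positivity
      have := ds u v h (l * r) ((1 - c) ^ j * S + j * (B / (l * r))) y hs0 hSj
        (fun w hw => ih (by omega) w (hsub w hw)) (fun w hw => (hv w (hsub2 w hw)).trans hSb)
      refine this.trans ?_
      have e : (1 - c) * (j * (B / (l * r))) ≤ j * (B / (l * r)) :=
        mul_le_of_le_one_left (by positivity) (by linarith)
      push_cast
      rw [pow_succ]
      linarith
  intro y hy
  have := ind k le_rfl y (by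
    rw [show r - k * (l * r) = r / 2 by rw [← mul_assoc, hkl]; ring]; exact hy)
  refine this.trans ?_
  have e1 : (1 - c) ^ k * S ≤ 1 / 8 * S := by gcongr
  have e2 : k * (B / (l * r)) = k * (B / l) / r := by field_simp
  linarith

/-! ### Uniform bound of the height at points of `{u = v}` -/

lemma Sol.sqrtH_upper {u v : Euc n → ℝ} (h : Sol u v) {r l : ℝ} (hr : 0 < r) (hl : 1 ≤ l)
    (x : Euc n) : √(HH u v (l * r) x) ≤ 2 * l * √(HH u v r x) := by
  have a4 := h.H_pos r x
  rw [Real.sqrt_le_left (by positivity), mul_pow, Real.sq_sqrt a4.le]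
  have a1 := h.H_upper hr (show r ≤ l * r by nlinarith) x
  rw [show l * r / r = l by field_simp] at a1
  have a3 := exp1_le
  calc _ ≤ _ := a1
    _ ≤ 3 * l ^ 2 * HH u v r x := by gcongr
    _ ≤ _ := by nlinarith [mul_pos (show 0 < l ^ 2 by positivity) a4]

/-- Above the natural scale of a point of `{u = v}`, the function `v` is somewhere comparable with
the size of the solution. -/
lemma upward (n : ℕ) : ∃ Λ τ : ℝ, 1 ≤ Λ ∧ 0 < τ ∧ ∀ (u v : Euc n → ℝ), Sol u v →
    ∀ (ρ : ℝ) (z : Euc n), 0 < ρ → u z = v z → ρ ^ 2 * HH u v ρ z = 1 → ∀ j : ℕ,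
    ∃ y ∈ closedBall z (2 ^ j * (Λ * ρ)), τ * √(HH u v (2 ^ j * (Λ * ρ)) z) ≤ v y := by
  obtain ⟨c, hc, hunit⟩ := unit_lower n
  obtain ⟨τ0, C, hτ0, hC, desc⟩ := descent n
  set Λ := max 1 (8 * C / c) with hΛ
  have hΛ1 : 1 ≤ Λ := le_max_left _ _
  have hΛC : 8 * C ≤ Λ * c := by
    have : 8 * C / c ≤ Λ := le_max_right _ _
    rwa [div_le_iff₀ hc] at this
  set τ := min τ0 (c / (4 * Λ)) with hτ
  have hτp : 0 < τ := lt_min hτ0 (by positivity)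
  refine ⟨Λ, τ, hΛ1, hτp, fun u v h ρ z hρ huv hone => ?_⟩
  have hH := h.H_pos ρ z
  have hsq : √(HH u v ρ z) = 1 / ρ := by
    rw [Real.sqrt_eq_iff_mul_self_eq hH.le (by positivity)]
    field_simp; linarith
  have hV : c / ρ ≤ 2 * v z := by
    have := hunit u v h ρ z hρ hone.le
    rw [hsq, huv] at this
    calc c / ρ = c * (1 / ρ) := by ring
      _ ≤ _ := by linarith
  have main : ∀ j : ℕ, ∃ y ∈ closedBall z (2 ^ j * (Λ * ρ)),
      τ * √(HH u v (2 ^ j * (Λ * ρ)) z) ≤ v y ∧ v z ≤ v y := by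
    intro j
    induction j with
    | zero =>
      refine ⟨z, mem_closedBall_self (by positivity), ?_, le_rfl⟩
      rw [pow_zero, one_mul]
      have := h.sqrtH_upper hρ hΛ1 z
      rw [hsq] at this
      calc _ ≤ c / (4 * Λ) * (2 * Λ * (1 / ρ)) := by
            gcongr; exact min_le_right _ _
        _ = c / ρ / 2 := by field_simp; norm_num
        _ ≤ _ := by linarith
    | succ j ih =>
      obtain ⟨y, hy, hy1, hy2⟩ := ih
      set r := 2 ^ j * (Λ * ρ) with hr
      have hr0 : 0 < r := by positivity
      have er : 2 ^ (j + 1) * (Λ * ρ) = 2 * r := by rw [hr]; ring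
      rw [er]
      by_contra hno
      push Not at hno
      set S := τ * √(HH u v (2 * r) z) with hS
      have hzS : v z < S := by
        by_contra hcon
        exact absurd (hno z (mem_closedBall_self (by positivity)) (not_lt.1 hcon)) (lt_irrefl _)
      have hvS : ∀ w ∈ closedBall z (2 * r), v w ≤ S := by
        intro w hw
        by_contra hcon
        have := hno w hw (not_le.1 hcon).le
        linarith
      have hd := desc u v h (2 * r) S z (by positivity) (by positivity)
        (by rw [hS]; gcongr; exact min_le_left _ _) hvS y
        (by rwa [mul_div_cancel_left₀ r (two_ne_zero)])
      have h4 : S ≤ 4 * v y := by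
        have := h.sqrtH_upper hr0 one_le_two z
        calc S ≤ τ * (2 * 2 * √(HH u v r z)) := by rw [hS]; gcongr
          _ = 4 * (τ * √(HH u v r z)) := by ring
          _ ≤ _ := by gcongr
      have h5 : C / (2 * r) ≤ v y / 8 := by
        have hrΛ : Λ * ρ ≤ r := by
          rw [hr]; exact le_mul_of_one_le_left (by positivity) (one_le_pow₀ one_le_two)
        calc C / (2 * r) ≤ C / (2 * (Λ * ρ)) := by gcongr
          _ ≤ c / ρ / 16 := by
            rw [div_div, div_le_div_iff₀ (by positivity) (by positivity)]
            nlinarith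
          _ ≤ _ := by linarith
      have := h.pv y
      linarith
  intro j
  obtain ⟨y, h1, h2, -⟩ := main j
  exact ⟨y, h1, h2⟩

/-- Where `v` is comparable with the size of the solution at scale `r`, the frequency at a much
smaller scale is small, so that `v` dominates `u` on average. -/
lemma sign_lemma {τ : ℝ} (hτ : 0 < τ) : ∃ l K : ℝ, 0 < l ∧ l ≤ 1 ∧ 0 < K ∧
    ∀ (u v : Euc n → ℝ), Sol u v → ∀ (r : ℝ) (z y : Euc n), 0 < r → y ∈ closedBall z r →
    τ * √(HH u v r z) ≤ v y → K ≤ r ^ 2 * HH u v r z →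
    avg (fun p => u p - v p) (l * r) y < 0 := by
  set δ := τ ^ 2 / 18 with hδ
  have hδ0 : 0 < δ := by positivity
  set L := (9 / τ ^ 2 + 1) ^ (1 / (2 * δ)) with hL
  have hb1 : 1 ≤ 9 / τ ^ 2 + 1 := by
    have : 0 < 9 / τ ^ 2 := by positivity
    linarith
  have hL1 : 1 ≤ L := Real.one_le_rpow hb1 (by positivity)
  have hLδ : L ^ (2 * δ) = 9 / τ ^ 2 + 1 := by
    rw [hL, ← Real.rpow_mul (by positivity), one_div_mul_cancel (by positivity), Real.rpow_one]
  have hL0 : 0 < L := by linarith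
  refine ⟨1 / L, (5 * L / τ ^ 2) ^ 2, by positivity, by rw [div_le_one hL0]; exact hL1,
    by positivity, fun u v h r z y hr hy hv hK => ?_⟩
  set Q := √(HH u v r z) with hQ
  have hHz := h.H_pos r z
  have hQ0 : 0 < Q := Real.sqrt_pos.2 hHz
  have hQ2 : HH u v r z = Q ^ 2 := (Real.sq_sqrt hHz.le).symm
  set s := 1 / L * r with hs
  have hs0 : 0 < s := by positivity
  have hsr : s ≤ r := by
    rw [hs]; exact mul_le_of_le_one_left hr.le (by rw [div_le_one hL0]; exact hL1)
  have hHry : HH u v r y ≤ 9 * Q ^ 2 := by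
    have a1 := h.H_translate' hr z y
    have a2 : Real.exp (2 * dist y z / r) ≤ 9 := by
      refine le_trans (Real.exp_le_exp.2 ?_) exp2_le
      rw [div_le_iff₀ hr]
      have : dist y z ≤ r := hy
      linarith
    rw [← hQ2]
    exact a1.trans (by gcongr)
  have hHs : HH u v s y ≤ 9 * Q ^ 2 :=
    (h.H_mono y (show (0:ℝ) ≤ s from hs0.le) (show (0:ℝ) ≤ r from hr.le) hsr).trans hHry
  have hHlow : τ ^ 2 * Q ^ 2 ≤ HH u v s y := by
    have a1 := h.nsq_le hs0.le y
    have a2 : (τ * Q) ^ 2 ≤ v y ^ 2 := by gcongr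
    nlinarith [sq_nonneg (u y)]
  have hN : NN u v s y ≤ δ := by
    by_contra hcon
    have a1 := h.H_lower hs0 hsr y (not_le.1 hcon).le
    rw [show r / s = L by rw [hs]; field_simp, hLδ] at a1
    have a2 : (9 / τ ^ 2 + 1) * (τ ^ 2 * Q ^ 2) ≤ 9 * Q ^ 2 :=
      le_trans (by gcongr) (a1.trans hHry)
    have a3 : (9 / τ ^ 2 + 1) * (τ ^ 2 * Q ^ 2) = 9 * Q ^ 2 + τ ^ 2 * Q ^ 2 := by field_simp
    have : 0 < τ ^ 2 * Q ^ 2 := by positivity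
    linarith
  have hD : DD u v s y ≤ τ ^ 2 * Q ^ 2 / 2 := by
    rw [h.D_eq_NH]
    calc _ ≤ δ * (9 * Q ^ 2) := mul_le_mul hN hHs (h.H_pos s y).le hδ0.le
      _ = _ := by rw [hδ]; ring
  have hP : PP u v s y ≤ 9 * Q ^ 2 := by
    have a1 := h.D_eq s y
    have a2 := avg_nonneg (gsq_nonneg u) s y
    have a3 := avg_nonneg (gsq_nonneg v) s y
    have a4 := h.D_le_H hs0 y
    have a5 : 0 ≤ s ^ 2 * avg (gsq u) s y := by positivity
    have a6 : 0 ≤ s ^ 2 * avg (gsq v) s y := by positivity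
    linarith
  have huv : s * avg (fun p => u p * v p) s y ≤ 3 * Q := by
    refine (abs_le_of_sq_le_sq' ?_ (by positivity)).2
    rw [mul_pow]
    exact (h.uv_sq s y).trans (hP.trans_eq (by ring))
  have hcov := h.cov s y
  have hav : τ * Q ≤ avg v s y := hv.trans (avg_ge h.tv h.lv hs0.le y)
  rw [avg_sub h.tu h.tv]
  by_contra hcon
  have hau : τ * Q ≤ avg u s y := by linarith
  have h1 : (τ * Q) * (τ * Q) ≤ avg u s y * avg v s y :=
    mul_le_mul hau hav (by positivity) (by have : 0 < τ * Q := by positivity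
                                           linarith)
  have h2 : 3 / 4 * τ ^ 2 * Q ^ 2 ≤ avg (fun p => u p * v p) s y := by nlinarith
  have h3 : s * (3 / 4 * τ ^ 2 * Q ^ 2) ≤ 3 * Q := (mul_le_mul_of_nonneg_left h2 hs0.le).trans huv
  have h4 : s * (τ ^ 2 * Q) ≤ 4 := by
    refine le_of_mul_le_mul_right ?_ hQ0
    nlinarith
  have h5 : 5 * L / τ ^ 2 ≤ r * Q := by
    refine (abs_le_of_sq_le_sq' ?_ (by positivity)).2
    rw [mul_pow r Q, ← hQ2]; exact hK
  have h6 : s * (τ ^ 2 * Q) = (r * Q) * (τ ^ 2 / L) := by rw [hs]; field_simp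
  have h7 : 5 * L / τ ^ 2 * (τ ^ 2 / L) ≤ (r * Q) * (τ ^ 2 / L) := by gcongr
  have h8 : 5 * L / τ ^ 2 * (τ ^ 2 / L) = 5 := by field_simp
  linarith

/-- The solution is uniformly bounded at unit scale about the points of `{u = v}`. -/
lemma Sol.H_one_le {u v : Euc n → ℝ} (h : Sol u v) : ∃ C : ℝ, 0 < C ∧ ∀ z, u z = v z →
    HH u v 1 z ≤ C := by
  obtain ⟨Λ, τ, hΛ, hτ, up⟩ := upward n
  obtain ⟨l, K0, hl, hl1, hK0, sg⟩ := sign_lemma (n := n) hτ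
  obtain ⟨K, hK, zb⟩ := zbound n
  obtain ⟨C, hC, zb⟩ := zb u v h
  -- `j` doublings above the natural scale, `r² H(r; z) ≥ 4 ^ j` exceeds both thresholds
  obtain ⟨j, hj⟩ := pow_unbounded_of_one_lt (max K0 (27 / l ^ 4 * K)) (show (1:ℝ) < 4 by norm_num)
  set m := 2 ^ j * Λ with hm
  have hm0 : 0 < m := by positivity
  refine ⟨3 * (27 * C * m ^ 2) + 1, by positivity, fun z huv => ?_⟩
  have hu0 := h.pu z
  obtain ⟨ρ, hρ, -, hone⟩ := h.exists_unit (ρ := 1 / u z) (by positivity) z (by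
    have a1 := h.nsq_le (r := 1 / u z) (by positivity) z
    have : u z ^ 2 ≤ HH u v (1 / u z) z := by nlinarith [sq_nonneg (v z)]
    calc (1:ℝ) = (1 / u z) ^ 2 * u z ^ 2 := by field_simp
      _ ≤ _ := by gcongr)
  have hHρ : HH u v ρ z = 1 / ρ ^ 2 := by field_simp; linarith
  obtain ⟨yv, hyv, hyv1⟩ := up u v h ρ z hρ huv hone j
  obtain ⟨yu, hyu, hyu1⟩ := up v u h.symm ρ z hρ huv.symm (by rw [HH_symm]; exact hone) j
  set r := 2 ^ j * (Λ * ρ) with hr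
  have hrm : r = m * ρ := by rw [hr, hm]; ring
  have hr0 : 0 < r := by positivity
  have h2j : (1:ℝ) ≤ 2 ^ j := one_le_pow₀ one_le_two
  have hρr : ρ ≤ r := by
    have hm1 : 1 ≤ m := one_le_mul_of_one_le_of_one_le h2j hΛ
    rw [hrm]; exact le_mul_of_one_le_left hρ.le hm1
  have hHr : HH u v ρ z ≤ HH u v r z :=
    h.H_mono z (show (0:ℝ) ≤ ρ from hρ.le) (show (0:ℝ) ≤ r from hr0.le) hρr
  have hκ : 4 ^ j ≤ r ^ 2 * HH u v r z := by
    calc (4:ℝ) ^ j ≤ m ^ 2 := by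
          have e : m ^ 2 = (4:ℝ) ^ j * Λ ^ 2 := by
            rw [hm, mul_pow, ← pow_mul, mul_comm j 2, pow_mul]
            norm_num
          rw [e]
          exact le_mul_of_one_le_right (by positivity) (one_le_pow₀ hΛ)
      _ = m ^ 2 * (ρ ^ 2 * HH u v ρ z) := by rw [hone, mul_one]
      _ = r ^ 2 * HH u v ρ z := by rw [hrm]; ring
      _ ≤ _ := by gcongr
  have hκ0 : K0 ≤ r ^ 2 * HH u v r z := ((le_max_left _ _).trans hj.le).trans hκ
  have hκ1 : 27 / l ^ 4 * K ≤ r ^ 2 * HH u v r z := ((le_max_right _ _).trans hj.le).trans hκ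
  have s1 := sg u v h r z yv hr0 hyv hyv1 hκ0
  have s2 := sg v u h.symm r z yu hr0 hyu hyu1 (by rw [HH_symm]; exact hκ0)
  rw [avg_w_symm h] at s2
  have hcont : Continuous fun x => avg (fun p => u p - v p) (l * r) x := by
    have := (avg_differentiable (h.tu.sub h.tv)).continuous
    exact this.comp (continuous_id.prodMk continuous_const)
  -- the averages of `u - v` have opposite signs at `yv` and `yu`
  obtain ⟨x, hx, hx0⟩ := (convex_closedBall z r).isPreconnected.intermediate_value hyv hyu
    hcont.continuousOn (show (0:ℝ) ∈ Icc _ _ from ⟨s1.le, by linarith⟩)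
  have hcmp : HH u v r z ≤ 27 / l ^ 2 * HH u v (l * r) x := by
    have a1 := h.H_translate' hr0 x z
    have a2 : Real.exp (2 * dist z x / r) ≤ 9 := by
      refine le_trans (Real.exp_le_exp.2 ?_) exp2_le
      rw [dist_comm, div_le_iff₀ hr0]
      have : dist x z ≤ r := hx
      linarith
    have a3 := h.H_upper (r := l * r) (by positivity) (mul_le_of_le_one_left hr0.le hl1) x
    rw [show r / (l * r) = 1 / l by field_simp] at a3
    have a4 := exp1_le
    have a5 := h.H_pos r x
    have a6 := h.H_pos (l * r) x
    calc _ ≤ _ := a1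
      _ ≤ 9 * HH u v r x := by gcongr
      _ ≤ 9 * (Real.exp 1 * (1 / l) ^ 2 * HH u v (l * r) x) := by gcongr
      _ ≤ 9 * (3 * (1 / l) ^ 2 * HH u v (l * r) x) := by gcongr
      _ = _ := by ring
  have hKx : K ≤ (l * r) ^ 2 * HH u v (l * r) x := by
    have a1 : 27 / l ^ 4 * K ≤ r ^ 2 * (27 / l ^ 2 * HH u v (l * r) x) :=
      hκ1.trans (by gcongr)
    have a2 : r ^ 2 * (27 / l ^ 2 * HH u v (l * r) x) =
      27 / l ^ 4 * ((l * r) ^ 2 * HH u v (l * r) x) := by field_simp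
    rw [a2] at a1
    exact le_of_mul_le_mul_left a1 (by positivity)
  have hz := zb (l * r) x (by positivity) hx0 hKx
  have hfin : 1 / ρ ^ 2 ≤ 27 * C * m ^ 2 * ρ ^ 2 := by
    rw [← hHρ]
    calc _ ≤ _ := hHr.trans hcmp
      _ ≤ 27 / l ^ 2 * (C * (l * r) ^ 2) := by gcongr
      _ = _ := by rw [hrm]; field_simp
  have hpos : 0 < 27 * C * m ^ 2 := by positivity
  rcases le_total ρ 1 with h1 | h1
  · have a1 := h.H_upper hρ h1 z
    have a2 := exp1_le
    have a3 : (1 / ρ) ^ 2 * (1 / ρ ^ 2) ≤ 27 * C * m ^ 2 := by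
      calc _ ≤ (1 / ρ) ^ 2 * (27 * C * m ^ 2 * ρ ^ 2) := by gcongr
        _ = _ := by field_simp
    calc _ ≤ _ := a1
      _ ≤ 3 * (1 / ρ) ^ 2 * HH u v ρ z := by gcongr; exact (h.H_pos ρ z).le
      _ = 3 * ((1 / ρ) ^ 2 * (1 / ρ ^ 2)) := by rw [hHρ]; ring
      _ ≤ _ := by linarith
  · have a1 : HH u v 1 z ≤ HH u v ρ z :=
      h.H_mono z (show (0:ℝ) ≤ 1 from zero_le_one) (show (0:ℝ) ≤ ρ from hρ.le) h1
    rw [hHρ] at a1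
    have : 1 / ρ ^ 2 ≤ 1 := by rw [div_le_one (by positivity)]; nlinarith
    linarith

/-! ### The interaction energy -/

/-- The smaller of `u` and `v` is bounded on the whole space. -/
lemma Sol.min_le {u v : Euc n → ℝ} (h : Sol u v) : ∃ C : ℝ, 0 < C ∧ ∀ y, min (u y) (v y) ≤ C := by
  obtain ⟨C, hC, hH⟩ := h.H_one_le
  refine ⟨2 * n + 8 + √(9 * C), by positivity, fun y => ?_⟩
  by_cases hne : ∀ x ∈ ball y 1, u x ≠ v x
  · have := h.KO_min one_pos y hne
    have h2 := Real.sqrt_nonneg (9 * C)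
    linarith
  · push Not at hne
    obtain ⟨z, hz, huv⟩ := hne
    have a1 := h.nsq_le zero_le_one y
    have a2 := h.H_translate' one_pos z y
    have a3 : Real.exp (2 * dist y z / 1) ≤ 9 := by
      refine le_trans (Real.exp_le_exp.2 ?_) exp2_le
      have : dist z y < 1 := hz
      rw [dist_comm]; linarith
    have a4 : HH u v 1 y ≤ 9 * C :=
      a2.trans (mul_le_mul a3 (hH z huv) (h.H_pos 1 z).le (by norm_num))
    have a5 : u y ≤ √(9 * C) := Real.le_sqrt_of_sq_le (by nlinarith [sq_nonneg (v y)])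
    have : (0:ℝ) ≤ n := n.cast_nonneg
    exact (min_le_left _ _).trans (by linarith)

/-- Since `u v = min · max ≤ C (u + v)`, the interaction density is dominated by
`Δ(u + v) = u v (u + v)`. -/
lemma Sol.density_le {u v : Euc n → ℝ} (h : Sol u v) : ∃ C : ℝ, 0 < C ∧ ∀ y,
    u y ^ 2 * v y ^ 2 ≤ C * lap (fun z => u z + v z) y := by
  obtain ⟨C, hC, hm⟩ := h.min_le
  refine ⟨C, hC, fun y => ?_⟩
  have hu := h.pu y
  have hv := h.pv y
  have h1 : u y * v y ≤ C * (u y + v y) := by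
    rw [← min_mul_max (u y) (v y)]
    exact mul_le_mul (hm y) (max_le (by linarith) (by linarith)) (le_max_of_le_left hu.le) hC.le
  rw [h.lap_s]
  calc u y ^ 2 * v y ^ 2 = u y * v y * (u y * v y) := by ring
    _ ≤ u y * v y * (C * (u y + v y)) := by gcongr
    _ = _ := by ring

/-- On the unit ball the Gaussian weight is bounded below, so integrals of nonnegative functions
are controlled by Gaussian averages. -/
lemma ball_le_avg {F : Euc n → ℝ} (hF : Tmp F) (h0 : ∀ z, 0 ≤ F z) (r : ℝ) (x : Euc n) :
    ∫ y in ball (0 : Euc n) 1, F (x + r • y) ≤ 3 * gZ n * avg F r x := by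
  have hT := hF.affine x r
  have hi : Integrable (fun y => F (x + r • y) * gw y) :=
    integrable_gam_iff.1 hT.int
  have h1 : ∫ y in ball (0 : Euc n) 1, F (x + r • y) ≤
      ∫ y in ball (0 : Euc n) 1, 3 * (F (x + r • y) * gw y) := by
    refine setIntegral_mono_on ?_ (hi.const_mul 3).integrableOn measurableSet_ball ?_
    · exact (hT.cont.continuousOn.integrableOn_compact (isCompact_closedBall 0 1)).mono_set
        ball_subset_closedBall
    · intro y hy
      have hy1 : ‖y‖ < 1 := by simpa using hy
      have hg : 1 ≤ 3 * gw y := by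
        have a0 : Real.exp (-1) ≤ gw y := by
          unfold gw
          refine Real.exp_le_exp.2 ?_
          nlinarith [norm_nonneg y]
        have a1 := exp1_le
        have a2 : Real.exp (-1) * Real.exp 1 = 1 := by rw [← Real.exp_add]; simp
        nlinarith [Real.exp_pos (-1)]
      nlinarith [h0 (x + r • y)]
  have h2 : ∫ y in ball (0 : Euc n) 1, 3 * (F (x + r • y) * gw y) ≤
      ∫ y, 3 * (F (x + r • y) * gw y) :=
    setIntegral_le_integral (hi.const_mul 3)
      (Eventually.of_forall fun y => by have := h0 (x + r • y); have := gw_pos y; positivity)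
  refine (h1.trans h2).trans_eq ?_
  have hZ := gZ_pos (n := n)
  rw [integral_const_mul]
  unfold avg
  rw [integral_gam]
  field_simp

/-- The Gaussian average of `Δ(u + v)` at a large scale `R` about a point of `{u = v}`. -/
lemma Sol.lap_avg_le {u v : Euc n → ℝ} (h : Sol u v) : ∃ C : ℝ, 0 < C ∧ ∀ z, u z = v z →
    ∀ R : ℝ, 1 ≤ R → avg (lap fun p => u p + v p) R z ≤ C / R := by
  obtain ⟨C, hC, hH⟩ := h.H_one_le
  set I := ∫ y : Euc n, (1 + ‖y‖) ^ 3 ∂(gam n) with hI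
  have hI0 : 1 ≤ I := one_le_weight 3
  refine ⟨24 * √C * I, by positivity, fun z huv R hR => ?_⟩
  have hR0 : 0 < R := by linarith
  have hs : Tmp fun p => u p + v p := h.tu.add h.tv
  have key := avg_lap hs R z
  have hQ : √(HH u v R z) ≤ 2 * R * √C := by
    have a1 := h.sqrtH_upper one_pos hR z
    rw [mul_one] at a1
    refine a1.trans ?_
    have := Real.sqrt_le_sqrt (hH z huv)
    gcongr
  have hle : ∫ y, (fun p => u p + v p) (z + R • y) * (‖y‖ ^ 2 - n) ∂(gam n) ≤
      ∫ y : Euc n, 12 * √(HH u v R z) * (1 + ‖y‖) ^ 3 ∂(gam n) := by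
    refine integral_mono ((hs.affine z R).mul (Tmp.normsq.sub (Tmp.const (n : ℝ)))).int
      ((int_weight 3).const_mul _) fun y => ?_
    have a1 := h.s_le hR0 z y
    have a2 : 0 < u (z + R • y) + v (z + R • y) := add_pos (h.pu _) (h.pv _)
    have hn0 : (0:ℝ) ≤ n := n.cast_nonneg
    have hy := norm_nonneg y
    have a3 : ‖y‖ ^ 2 - n ≤ (1 + ‖y‖) ^ 2 := by nlinarith
    calc (u (z + R • y) + v (z + R • y)) * (‖y‖ ^ 2 - n)
        ≤ (u (z + R • y) + v (z + R • y)) * (1 + ‖y‖) ^ 2 := by gcongr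
      _ ≤ (12 * (1 + ‖y‖) * √(HH u v R z)) * (1 + ‖y‖) ^ 2 := by gcongr
      _ = _ := by ring
  rw [integral_const_mul, ← key, ← hI] at hle
  have h3 : R ^ 2 * avg (lap fun p => u p + v p) R z ≤ 12 * (2 * R * √C) * I :=
    hle.trans (by gcongr)
  rw [le_div_iff₀ hR0]
  refine le_of_mul_le_mul_left ?_ hR0
  linarith

/-- A positive solution with linear growth satisfies the regularity package `Sol`. -/
lemma sol_of_growth {u v : Euc n → ℝ}
    (hu : ContDiff ℝ (⊤ : ℕ∞) u) (hv : ContDiff ℝ (⊤ : ℕ∞) v)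
    (hupos : ∀ x, 0 < u x) (hvpos : ∀ x, 0 < v x)
    (hequ : ∀ x, lap u x = u x * v x ^ 2) (heqv : ∀ x, lap v x = v x * u x ^ 2)
    {C₀ : ℝ} (hC₀ : 0 < C₀) (hgrowth : ∀ x, u x + v x ≤ C₀ * (1 + ‖x‖)) : Sol u v := by
  have hg : PB fun x : Euc n => C₀ * (1 + ‖x‖) := (PB.const C₀).mul ((PB.const 1).add PB.norm)
  have pu : PB u := hg.mono fun x => by
    have := hupos x; have := hvpos x; have := hgrowth x
    rw [abs_of_pos (hupos x)]
    exact le_trans (by linarith) (le_abs_self _)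
  have pv : PB v := hg.mono fun x => by
    have := hupos x; have := hvpos x; have := hgrowth x
    rw [abs_of_pos (hvpos x)]
    exact le_trans (by linarith) (le_abs_self _)
  obtain ⟨tu, tv⟩ := tmp_of_eq hu hv hequ heqv pu pv
  exact ⟨tu, tv, hupos, hvpos, hequ, heqv, C₀, hC₀, hgrowth⟩

theorem interaction_energy_of_rescaling (n : ℕ) (hn : 2 ≤ n)
    (u v : Euc n → ℝ)
    (hu : ContDiff ℝ (⊤ : ℕ∞) u) (hv : ContDiff ℝ (⊤ : ℕ∞) v)
    (hupos : ∀ x, 0 < u x) (hvpos : ∀ x, 0 < v x)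
    (hequ : ∀ x, lap u x = u x * v x ^ 2)
    (heqv : ∀ x, lap v x = v x * u x ^ 2)
    (C₀ : ℝ) (hC₀ : 0 < C₀)
    (hgrowth : ∀ x, u x + v x ≤ C₀ * (1 + ‖x‖)) :
    ∃ C > (0 : ℝ), ∀ x₀ : Euc n, u x₀ = v x₀ → ∀ R ≥ (1 : ℝ),
      ∫ x in ball (0 : Euc n) 1,
          (R ^ 4 : ℝ) * resc u x₀ R x ^ 2 * resc v x₀ R x ^ 2
        ≤ C * (R ^ 4 : ℝ) ^ (-(1 : ℝ) / 4) := by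
  have h : Sol u v := sol_of_growth hu hv hupos hvpos hequ heqv hC₀ hgrowth
  obtain ⟨A, hA, hd⟩ := h.density_le
  obtain ⟨B, hB, hav⟩ := h.lap_avg_le
  have hZ := gZ_pos (n := n)
  refine ⟨A * (3 * gZ n * B), by positivity, fun x₀ huv R hR => ?_⟩
  have hR1 : (1:ℝ) ≤ R := hR
  have hR0 : 0 < R := by linarith
  have hpow : (R ^ 4 : ℝ) ^ (-(1 : ℝ) / 4) = R⁻¹ := by
    rw [← Real.rpow_natCast, ← Real.rpow_mul hR0.le, ← Real.rpow_neg_one]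
    norm_num
  have hT : Tmp (lap fun p => u p + v p) := (h.tu.add h.tv).lap
  have hl0 : ∀ y, 0 ≤ lap (fun p => u p + v p) y := fun y => by
    rw [h.lap_s]
    have := hupos y; have := hvpos y
    positivity
  -- the scaling factors cancel: `R⁴ · R⁻² · R⁻² = 1`
  have hfac : ∀ x, (R ^ 4 : ℝ) * resc u x₀ R x ^ 2 * resc v x₀ R x ^ 2 =
      u (x₀ + R • x) ^ 2 * v (x₀ + R • x) ^ 2 := fun x => by
    unfold resc
    field_simp
  have hTuv : Tmp fun x => u (x₀ + R • x) ^ 2 * v (x₀ + R • x) ^ 2 :=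
    ((h.tu.pow 2).mul (h.tv.pow 2)).affine x₀ R
  have hTl := hT.affine x₀ R
  have hio : ∀ {F : Euc n → ℝ}, Continuous F → IntegrableOn F (ball (0 : Euc n) 1) := fun hF =>
    (hF.continuousOn.integrableOn_compact (isCompact_closedBall 0 1)).mono_set
      ball_subset_closedBall
  simp only [hfac]
  rw [hpow]
  calc ∫ x in ball (0 : Euc n) 1, u (x₀ + R • x) ^ 2 * v (x₀ + R • x) ^ 2
      ≤ ∫ x in ball (0 : Euc n) 1, A * lap (fun p => u p + v p) (x₀ + R • x) :=
        setIntegral_mono_on (hio hTuv.cont) ((hio hTl.cont).const_mul A) measurableSet_ball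
          fun x _ => hd _
    _ = A * ∫ x in ball (0 : Euc n) 1, lap (fun p => u p + v p) (x₀ + R • x) :=
        integral_const_mul _ _
    _ ≤ A * (3 * gZ n * (B / R)) := by
        gcongr
        exact (ball_le_avg hT hl0 R x₀).trans (by gcongr; exact hav x₀ huv R hR1)
    _ = _ := by ring
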